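/- arXiv:1502.05127 — 3 statements merged into one kernel-verified Lean document; each statement's English description precedes it below -/
import Mathlib

section
/- For each α with 0 ≤ α < 1, the function h_α(z) = k_α(z)/z (with h_α(0) = 1) is injective on the open unit disk 𝔻 and its image h_α(𝔻) is a convex subset of ℂ; moreover Re(1 + z·h_α''(z)/h_α'(z)) > 0 for all z ∈ 𝔻. -/
/-- The unit disk `{z : ℂ | |z| < 1}`. -/
noncomputable def unitDisk : Set ℂ := Metric.ball 0 1

/-- The extremal convex function of order `α`:
`k_α(z) = ((1-z)^(2α-1) - 1)/(1-2α)` (so that `k_α(0)=0`, `k_α'(0)=1`),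
with `k_{1/2}(z) = -log(1-z)` (principal branches). -/
noncomputable def kfun (α : ℝ) (z : ℂ) : ℂ :=
  if α = 1 / 2 then -Complex.log (1 - z)
  else ((1 - z) ^ ((2 * α - 1 : ℝ) : ℂ) - 1) / ((1 - 2 * α : ℝ) : ℂ)

/-- `h_α(z) = k_α(z)/z` for `z ≠ 0`, `h_α(0) = 1`. -/
noncomputable def hfun (α : ℝ) (z : ℂ) : ℂ :=
  if z = 0 then 1 else kfun α z / z

/-- `f ∈ K(α)`: `f` is analytic on the unit disk, normalized by `f(0)=0`, `f'(0)=1`,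
with nonvanishing derivative and `Re(1 + z f''(z)/f'(z)) > α` on the disk. -/
def IsConvexOfOrder (α : ℝ) (f : ℂ → ℂ) : Prop :=
  DifferentiableOn ℂ f unitDisk ∧ f 0 = 0 ∧ deriv f 0 = 1 ∧
    ∀ z ∈ unitDisk, deriv f z ≠ 0 ∧
      α < (1 + z * deriv (deriv f) z / deriv f z).re

open Complex Metric

/-- A nonvanishing holomorphic function on a disk has a holomorphic logarithm. -/
theorem exists_hasDerivAt_log_of_ne_zero {g : ℂ → ℂ} {c : ℂ} {r : ℝ} (hr : 0 < r)
    (hg : DifferentiableOn ℂ g (ball c r)) (hne : ∀ z ∈ ball c r, g z ≠ 0) :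
    ∃ L : ℂ → ℂ, ∀ z ∈ ball c r, HasDerivAt L (deriv g z / g z) z ∧ exp (L z) = g z := by
  have hc : c ∈ ball c r := mem_ball_self hr
  obtain ⟨L, hL0, hL⟩ :=
    ((hg.deriv isOpen_ball).div hg hne).isExactOn_ball.with_val_at c (log (g c))
  refine ⟨L, fun z hz => ⟨hL z hz, ?_⟩⟩
  have hd : ∀ w ∈ ball c r, HasDerivAt (fun w => g w * exp (-L w)) 0 w := fun w hw => by
    have h1 := (hg.differentiableAt (isOpen_ball.mem_nhds hw)).hasDerivAt
    refine (h1.mul (hL w hw).neg.cexp).congr_deriv ?_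
    have := hne w hw
    simp only [Pi.div_apply]
    field_simp
    ring
  have key : g z * exp (-L z) = 1 := by
    have := isOpen_ball.eqOn_of_deriv_eq (convex_ball c r).isPreconnected
      (fun w hw => (hd w hw).differentiableAt.differentiableWithinAt)
      (differentiableOn_const (1 : ℂ)) (fun w hw => by simp [(hd w hw).deriv]) hc
      (by simp [hL0, exp_neg, exp_log (hne c hc), hne c hc]) hz
    simpa using this
  rw [exp_neg] at key
  field_simp at key
  exact key.symm

/-- The image of a circle under a locally univalent `f` with `Re (1 + z f'' / f') > 0` lies
strictly on one side of each of its tangent lines, apart from the point of tangency. -/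
theorem re_div_pos_of_mem_circle {f : ℂ → ℂ} (hf : DifferentiableOn ℂ f (ball 0 1))
    (hf' : ∀ z ∈ ball (0 : ℂ) 1, deriv f z ≠ 0)
    (hre : ∀ z ∈ ball (0 : ℂ) 1, 0 < (1 + z * deriv (deriv f) z / deriv f z).re)
    {ζ : ℂ} (hζ : ζ ∈ ball (0 : ℂ) 1) (hζ0 : ζ ≠ 0) {u : ℝ}
    (hu : u ∈ Set.Ioo 0 (2 * Real.pi)) :
    0 < ((f ζ - f (ζ * exp (u * I))) / (ζ * deriv f ζ)).re := by
  obtain ⟨L, hL⟩ := exists_hasDerivAt_log_of_ne_zero one_pos (hf.deriv isOpen_ball) hf'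
  have hmem : ∀ s : ℝ, ζ * exp (s * I) ∈ ball (0 : ℂ) 1 := fun s => by
    simpa [norm_exp_ofReal_mul_I] using hζ
  have hcirc : ∀ s : ℝ, HasDerivAt (fun s : ℝ => ζ * exp (s * I)) (ζ * exp (s * I) * I) s :=
    fun s => by
      have h1 : HasDerivAt (fun s : ℝ => (s : ℂ) * I) I s := by
        simpa using (HasDerivAt.ofReal_comp (hasDerivAt_id s)).mul_const I
      simpa [mul_assoc] using h1.cexp.const_mul ζ
  set A : ℝ → ℂ := fun s => s * I + L (ζ * exp (s * I)) - L ζ with hA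
  have hAd : ∀ s : ℝ, HasDerivAt A
      (I * (1 + ζ * exp (s * I) * deriv (deriv f) (ζ * exp (s * I)) /
        deriv f (ζ * exp (s * I)))) s := fun s => by
    have h1 : HasDerivAt (fun s : ℝ => (s : ℂ) * I) I s := by
      simpa using (HasDerivAt.ofReal_comp (hasDerivAt_id s)).mul_const I
    have h2 := (hL _ (hmem s)).1.comp s (hcirc s)
    refine ((h1.add h2).sub_const (L ζ)).congr_deriv ?_
    ring
  have hσd : ∀ s : ℝ, HasDerivAt (fun s => (A s).im)
      (1 + ζ * exp (s * I) * deriv (deriv f) (ζ * exp (s * I)) /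
        deriv f (ζ * exp (s * I))).re s := fun s => by
    have := imCLM.hasFDerivAt.comp_hasDerivAt s (hAd s)
    simpa [Function.comp_def] using this
  have hmono : StrictMono (fun s => (A s).im) :=
    strictMono_of_deriv_pos fun s => by rw [(hσd s).deriv]; exact hre _ (hmem s)
  have hσc : Continuous (fun s => (A s).im) :=
    continuous_iff_continuousAt.2 fun s => (hσd s).continuousAt
  have hσ0 : (A 0).im = 0 := by simp [hA]
  have hσ1 : (A (2 * Real.pi)).im = 2 * Real.pi := by
    simp [hA, exp_two_pi_mul_I]
  obtain ⟨m, hm, hmπ⟩ : ∃ m ∈ Set.Icc 0 (2 * Real.pi), (A m).im = Real.pi := by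
    have := intermediate_value_Icc (by positivity : (0 : ℝ) ≤ 2 * Real.pi) hσc.continuousOn
    exact this ⟨by simp only [hσ0]; positivity, by simp only [hσ1]; linarith [Real.pi_pos]⟩
  set Φ : ℝ → ℝ := fun s => ((f ζ - f (ζ * exp (s * I))) / (ζ * deriv f ζ)).re with hΦ
  have hΦd : ∀ s : ℝ, HasDerivAt Φ (Real.exp (A s).re * Real.sin (A s).im) s := fun s => by
    have h1 := (hf.differentiableAt (isOpen_ball.mem_nhds (hmem s))).hasDerivAt.comp s (hcirc s)
    have h2 := reCLM.hasFDerivAt.comp_hasDerivAt s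
      ((h1.const_sub (f ζ)).div_const (ζ * deriv f ζ))
    refine h2.congr_deriv ?_
    have h3 : exp (A s) = exp (s * I) * deriv f (ζ * exp (s * I)) / deriv f ζ := by
      rw [hA]
      simp only [exp_sub, exp_add, (hL _ (hmem s)).2, (hL _ hζ).2]
    rw [← exp_im, h3, reCLM_apply]
    have h4 : -(deriv f (ζ * exp (s * I)) * (ζ * exp (s * I) * I)) / (ζ * deriv f ζ) =
        -(I * (exp (s * I) * deriv f (ζ * exp (s * I)) / deriv f ζ)) := by
      have := hf' _ hζ
      field_simp
    rw [h4]
    simp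
  have hΦc : Continuous Φ := continuous_iff_continuousAt.2 fun s => (hΦd s).continuousAt
  have hΦ0 : Φ 0 = 0 := by simp [hΦ]
  have hΦ1 : Φ (2 * Real.pi) = 0 := by simp [hΦ, exp_two_pi_mul_I]
  change 0 < Φ u
  rcases le_total u m with hum | hmu
  · have : StrictMonoOn Φ (Set.Icc 0 m) := by
      refine strictMonoOn_of_deriv_pos (convex_Icc 0 m) hΦc.continuousOn fun s hs => ?_
      rw [interior_Icc] at hs
      rw [(hΦd s).deriv]
      refine mul_pos (Real.exp_pos _) (Real.sin_pos_of_pos_of_lt_pi ?_ ?_)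
      · rw [← hσ0]; exact hmono hs.1
      · rw [← hmπ]; exact hmono hs.2
    rw [← hΦ0]
    exact this ⟨le_rfl, hm.1⟩ ⟨hu.1.le, hum⟩ hu.1
  · have : StrictAntiOn Φ (Set.Icc m (2 * Real.pi)) := by
      refine strictAntiOn_of_deriv_neg (convex_Icc m _) hΦc.continuousOn fun s hs => ?_
      rw [interior_Icc] at hs
      rw [(hΦd s).deriv]
      refine mul_neg_of_pos_of_neg (Real.exp_pos _) ?_
      rw [← Real.sin_sub_two_pi]
      refine Real.sin_neg_of_neg_of_neg_pi_lt ?_ ?_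
      · have := hmono hs.2
        simp only [hσ1] at this; linarith
      · have := hmono hs.1
        simp only [hmπ] at this; linarith
    rw [← hΦ1]
    exact this ⟨hmu, hu.2.le⟩ ⟨hm.2, le_rfl⟩ hu.2

/-- If `f` is locally univalent with `Re (1 + z f'' / f') > 0`, then the image of the closed disk
of radius `‖ζ‖` lies strictly on one side of the tangent line at `f ζ`, apart from `f ζ`. -/
theorem re_div_pos_of_norm_le {f : ℂ → ℂ} (hf : DifferentiableOn ℂ f (ball 0 1))
    (hf' : ∀ z ∈ ball (0 : ℂ) 1, deriv f z ≠ 0)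
    (hre : ∀ z ∈ ball (0 : ℂ) 1, 0 < (1 + z * deriv (deriv f) z / deriv f z).re)
    {ζ z : ℂ} (hζ : ζ ∈ ball (0 : ℂ) 1) (hz : ‖z‖ ≤ ‖ζ‖) (hne : z ≠ ζ) :
    0 < ((f ζ - f z) / (ζ * deriv f ζ)).re := by
  have hζ0 : ζ ≠ 0 := by rintro rfl; simp at hz; exact hne hz
  have hζn : 0 < ‖ζ‖ := norm_pos_iff.2 hζ0
  have hsphere : ∀ w : ℂ, ‖w‖ = ‖ζ‖ → w ≠ ζ → 0 < ((f ζ - f w) / (ζ * deriv f ζ)).re := by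
    intro w hw hwne
    have hq : ‖w / ζ‖ = 1 := by rw [norm_div, hw, div_self hζn.ne']
    obtain ⟨u, hu, hu'⟩ : ∃ u ∈ Set.Ico 0 (2 * Real.pi), exp (u * I) = w / ζ := by
      refine ⟨toIcoMod Real.two_pi_pos 0 (arg (w / ζ)), by
        simpa using toIcoMod_mem_Ico Real.two_pi_pos 0 (arg (w / ζ)), ?_⟩
      rw [toIcoMod]
      have h1 := norm_mul_exp_arg_mul_I (w / ζ)
      rw [hq, ofReal_one, one_mul] at h1
      have h2 := exp_periodic.sub_zsmul_eq (toIcoDiv Real.two_pi_pos 0 (arg (w / ζ)))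
        (x := (arg (w / ζ) : ℂ) * I)
      rw [h1] at h2
      refine Eq.trans (congrArg exp ?_) h2
      push_cast [zsmul_eq_mul]
      ring
    have hwu : w = ζ * exp (u * I) := by rw [hu']; field_simp
    have hu0 : u ≠ 0 := by
      rintro rfl
      simp at hwu
      exact hwne hwu
    rw [hwu]
    exact re_div_pos_of_mem_circle hf hf' hre hζ hζ0 ⟨lt_of_le_of_ne hu.1 hu0.symm, hu.2⟩
  rcases hz.eq_or_lt with heq | hlt
  · exact hsphere z heq hne
  set F : ℂ → ℂ := fun w => exp (-((f ζ - f w) / (ζ * deriv f ζ))) with hF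
  have hFnorm : ∀ w, ‖F w‖ = Real.exp (-((f ζ - f w) / (ζ * deriv f ζ)).re) := fun w => by
    simp [hF, norm_exp]
  have hcl : closure (ball (0 : ℂ) ‖ζ‖) = closedBall 0 ‖ζ‖ := closure_ball _ hζn.ne'
  have hsub : closedBall (0 : ℂ) ‖ζ‖ ⊆ ball 0 1 :=
    closedBall_subset_ball (by simpa using hζ)
  have hFd : DiffContOnCl ℂ F (ball 0 ‖ζ‖) := by
    apply DifferentiableOn.diffContOnCl
    rw [hcl]
    exact ((((hf.mono hsub).const_sub (f ζ)).div_const _).neg).cexp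
  have hle : ∀ w ∈ ball (0 : ℂ) ‖ζ‖, ‖F w‖ ≤ 1 := fun w hw => by
    refine norm_le_of_forall_mem_frontier_norm_le isBounded_ball hFd (fun v hv => ?_)
      (subset_closure hw)
    rw [frontier_ball _ hζn.ne', mem_sphere_zero_iff_norm] at hv
    rw [hFnorm, Real.exp_le_one_iff, neg_nonpos]
    rcases eq_or_ne v ζ with rfl | hvne
    · simp
    · exact (hsphere v hv hvne).le
  have hzm : z ∈ ball (0 : ℂ) ‖ζ‖ := by simpa using hlt
  by_contra hcon
  have hge : 1 ≤ ‖F z‖ := by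
    rw [hFnorm, Real.one_le_exp_iff]; linarith
  have hmax : IsMaxOn (norm ∘ F) (ball 0 ‖ζ‖) z := fun w hw => (hle w hw).trans hge
  have := norm_eqOn_closure_of_isPreconnected_of_isMaxOn (convex_ball _ _).isPreconnected
    isOpen_ball hFd hzm hmax (x := -ζ) (by simp [hcl])
  have h2 : ‖F (-ζ)‖ = ‖F z‖ := this
  have h3 := hsphere (-ζ) (norm_neg ζ) (fun h => hζ0 (self_eq_neg.1 h.symm))
  have h4 : ‖F (-ζ)‖ < 1 := by
    rw [hFnorm, Real.exp_lt_one_iff]; linarith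
  linarith

/-- A locally univalent `f` on the unit disk with `Re (1 + z f'' / f') > 0` is injective. -/
theorem injOn_ball_of_re_pos {f : ℂ → ℂ} (hf : DifferentiableOn ℂ f (ball 0 1))
    (hf' : ∀ z ∈ ball (0 : ℂ) 1, deriv f z ≠ 0)
    (hre : ∀ z ∈ ball (0 : ℂ) 1, 0 < (1 + z * deriv (deriv f) z / deriv f z).re) :
    Set.InjOn f (ball 0 1) := by
  intro z hz w hw hzw
  by_contra hne
  rcases le_total ‖z‖ ‖w‖ with h | h
  · simpa [hzw] using re_div_pos_of_norm_le hf hf' hre hw h hne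
  · simpa [hzw] using re_div_pos_of_norm_le hf hf' hre hz h (Ne.symm hne)

/-- A locally univalent `f` on the unit disk with `Re (1 + z f'' / f') > 0` maps every closed
disk of radius `r < 1` centered at the origin onto a convex set. -/
theorem convex_image_closedBall_of_re_pos {f : ℂ → ℂ} (hf : DifferentiableOn ℂ f (ball 0 1))
    (hf' : ∀ z ∈ ball (0 : ℂ) 1, deriv f z ≠ 0)
    (hre : ∀ z ∈ ball (0 : ℂ) 1, 0 < (1 + z * deriv (deriv f) z / deriv f z).re)
    {r : ℝ} (hr0 : 0 < r) (hr1 : r < 1) : Convex ℝ (f '' closedBall 0 r) := by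
  have hsub : closedBall (0 : ℂ) r ⊆ ball 0 1 := closedBall_subset_ball hr1
  set C := f '' closedBall 0 r with hC
  have hCclosed : IsClosed C :=
    ((isCompact_closedBall 0 r).image_of_continuousOn (hf.continuousOn.mono hsub)).isClosed
  have hint : ∀ q ∈ ball (0 : ℂ) r, f q ∈ interior C := fun q hq => by
    have hq1 : q ∈ ball (0 : ℂ) 1 := hsub (ball_subset_closedBall hq)
    have hs : HasStrictDerivAt f (deriv f q) q :=
      (hf.analyticAt (isOpen_ball.mem_nhds hq1)).hasStrictDerivAt
    rw [mem_interior_iff_mem_nhds, ← hs.map_nhds_eq (hf' q hq1)]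
    exact Filter.image_mem_map (Filter.mem_of_superset (isOpen_ball.mem_nhds hq)
      ball_subset_closedBall)
  have h0 : f 0 ∈ interior C := hint 0 (mem_ball_self hr0)
  rw [convex_iff_segment_subset]
  intro A hA B hB P hP
  by_contra hPC
  obtain ⟨Q, hQseg, hQf⟩ : ∃ Q ∈ segment ℝ (f 0) P, Q ∈ frontier C := by
    by_contra hcon
    push Not at hcon
    have hpre := (convex_segment (𝕜 := ℝ) (f 0) P).isPreconnected
    obtain ⟨x, -, hx1, hx2⟩ := hpre (interior C) Cᶜ isOpen_interior hCclosed.isOpen_compl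
      (fun x hx => by
        by_contra hx'
        simp only [Set.mem_union, not_or, Set.mem_compl_iff, not_not] at hx'
        exact hcon x hx ⟨subset_closure hx'.2, hx'.1⟩)
      ⟨f 0, left_mem_segment ℝ _ _, h0⟩ ⟨P, right_mem_segment ℝ _ _, hPC⟩
    exact hx2 (interior_subset hx1)
  obtain ⟨q, hq, rfl⟩ := hCclosed.frontier_subset hQf
  have hqr : ‖q‖ = r := by
    refine le_antisymm (by simpa using hq) (not_lt.1 fun h => hQf.2 (hint q (by simpa using h)))
  have hsupp : ∀ c ∈ C, 0 ≤ ((f q - c) / (q * deriv f q)).re := by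
    rintro _ ⟨w, hw, rfl⟩
    rcases eq_or_ne w q with rfl | hwq
    · simp
    · exact (re_div_pos_of_norm_le hf hf' hre (hsub hq)
        (by rw [hqr]; simpa using hw) hwq).le
  have h0pos : 0 < ((f q - f 0) / (q * deriv f q)).re :=
    re_div_pos_of_norm_le hf hf' hre (hsub hq) (by simp)
      (by rintro rfl; simp at hqr; exact hr0.ne hqr)
  have hPpos : 0 ≤ ((f q - P) / (q * deriv f q)).re := by
    obtain ⟨a, b, ha, hb, hab, rfl⟩ := hP
    have e : (f q - (a • A + b • B)) / (q * deriv f q) =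
        (a : ℂ) * ((f q - A) / (q * deriv f q)) + (b : ℂ) * ((f q - B) / (q * deriv f q)) := by
      have hab' : (a : ℂ) + b = 1 := by exact_mod_cast hab
      simp only [real_smul]
      linear_combination -(f q / (q * deriv f q)) * hab'
    rw [e, add_re, re_ofReal_mul, re_ofReal_mul]
    exact add_nonneg (mul_nonneg ha (hsupp A hA)) (mul_nonneg hb (hsupp B hB))
  obtain ⟨a, b, ha, hb, hab, hab2⟩ := hQseg
  have e : a * ((f q - f 0) / (q * deriv f q)).re + b * ((f q - P) / (q * deriv f q)).re = 0 := by
    rw [← re_ofReal_mul, ← re_ofReal_mul, ← add_re, ← zero_re]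
    congr 1
    have hab' : (a : ℂ) + b = 1 := by exact_mod_cast hab
    simp only [real_smul] at hab2
    linear_combination (f q / (q * deriv f q)) * hab' - hab2 / (q * deriv f q)
  have ha0 : a = 0 := by
    have h1 : 0 ≤ b * ((f q - P) / (q * deriv f q)).re := mul_nonneg hb hPpos
    by_contra hane
    have := mul_pos (lt_of_le_of_ne ha (Ne.symm hane)) h0pos
    linarith
  apply hPC
  have hb1 : b = 1 := by linarith
  have : P = f q := by simpa [ha0, hb1] using hab2
  rw [this]
  exact ⟨q, hq, rfl⟩

/-- A locally univalent `f` on the unit disk with `Re (1 + z f'' / f') > 0` has convex image. -/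
theorem convex_image_ball_of_re_pos {f : ℂ → ℂ} (hf : DifferentiableOn ℂ f (ball 0 1))
    (hf' : ∀ z ∈ ball (0 : ℂ) 1, deriv f z ≠ 0)
    (hre : ∀ z ∈ ball (0 : ℂ) 1, 0 < (1 + z * deriv (deriv f) z / deriv f z).re) :
    Convex ℝ (f '' ball 0 1) := by
  rw [convex_iff_segment_subset]
  rintro _ ⟨z, hz, rfl⟩ _ ⟨w, hw, rfl⟩
  obtain ⟨r, hr, hr1⟩ := exists_between
    (max_lt (by simpa using hz : ‖z‖ < 1) (by simpa using hw : ‖w‖ < 1))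
  rw [max_lt_iff] at hr
  have hconv := convex_image_closedBall_of_re_pos hf hf' hre ((norm_nonneg z).trans_lt hr.1) hr1
  refine (hconv.segment_subset (Set.mem_image_of_mem f ?_) (Set.mem_image_of_mem f ?_)).trans
    (Set.image_mono (closedBall_subset_ball hr1))
  · simpa using hr.1.le
  · simpa using hr.2.le

/-- The Taylor coefficients `(b)ₙ / (2 (3)ₙ)` of `₂F₁(b, 1; 3; z) / 2`. -/
noncomputable def hyperCoeff (b : ℝ) (n : ℕ) : ℝ :=
  (∏ i ∈ Finset.range n, ((i : ℝ) + b) / (i + 3)) / 2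

/-- The hypergeometric function `₂F₁(b, 1; 3; z) / 2`. -/
noncomputable def hyperSeries (b : ℝ) (z : ℂ) : ℂ :=
  ∑' n : ℕ, (hyperCoeff b n : ℂ) * z ^ n

theorem hyperCoeff_zero (b : ℝ) : hyperCoeff b 0 = 1 / 2 := by simp [hyperCoeff]

theorem hyperCoeff_succ (b : ℝ) (n : ℕ) :
    (n + 3) * hyperCoeff b (n + 1) = (n + b) * hyperCoeff b n := by
  rw [hyperCoeff, hyperCoeff, Finset.prod_range_succ]
  have : (n : ℝ) + 3 ≠ 0 := by positivity
  field_simp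

theorem hyperCoeff_nonneg {b : ℝ} (hb : 0 ≤ b) (n : ℕ) : 0 ≤ hyperCoeff b n := by
  unfold hyperCoeff; positivity

theorem hyperCoeff_succ_le {b : ℝ} (hb : 0 ≤ b) (hb3 : b ≤ 3) (n : ℕ) :
    hyperCoeff b (n + 1) ≤ hyperCoeff b n := by
  have h1 := hyperCoeff_succ b n
  have h2 := hyperCoeff_nonneg hb n
  have h3 : (0 : ℝ) < n + 3 := by positivity
  refine le_of_mul_le_mul_left ?_ h3
  rw [h1]
  gcongr

theorem hyperCoeff_le {b : ℝ} (hb : 0 ≤ b) (hb3 : b ≤ 3) (n : ℕ) : hyperCoeff b n ≤ 1 / 2 := by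
  rw [← hyperCoeff_zero b]
  exact antitone_nat_of_succ_le (hyperCoeff_succ_le hb hb3) (Nat.zero_le n)

theorem norm_hyperCoeff_mul_pow_le {b : ℝ} (hb : 0 ≤ b) (hb3 : b ≤ 3) (n : ℕ) {z : ℂ} {r : ℝ}
    (hz : ‖z‖ ≤ r) : ‖(hyperCoeff b n : ℂ) * z ^ n‖ ≤ r ^ n := by
  have h1 := hyperCoeff_nonneg hb n
  have h2 := hyperCoeff_le hb hb3 n
  rw [norm_mul, norm_pow, norm_real, Real.norm_of_nonneg h1]
  calc hyperCoeff b n * ‖z‖ ^ n ≤ 1 * r ^ n := by gcongr; linarith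
    _ = r ^ n := one_mul _

theorem hasSum_hyperSeries {b : ℝ} (hb : 0 ≤ b) (hb3 : b ≤ 3) {z : ℂ} (hz : ‖z‖ < 1) :
    HasSum (fun n : ℕ => (hyperCoeff b n : ℂ) * z ^ n) (hyperSeries b z) :=
  (Summable.of_norm_bounded (summable_geometric_of_lt_one (norm_nonneg z) hz)
    fun n => norm_hyperCoeff_mul_pow_le hb hb3 n le_rfl).hasSum

theorem differentiableAt_hyperSeries {b : ℝ} (hb : 0 ≤ b) (hb3 : b ≤ 3) {z : ℂ}
    (hz : ‖z‖ < 1) : DifferentiableAt ℂ (hyperSeries b) z := by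
  obtain ⟨r, hzr, hr1⟩ := exists_between hz
  refine (differentiableOn_tsum_of_summable_norm
    (summable_geometric_of_lt_one ((norm_nonneg z).trans hzr.le) hr1) (fun i => ?_)
    (isOpen_ball (x := (0 : ℂ)) (ε := r)) fun n w hw =>
      norm_hyperCoeff_mul_pow_le hb hb3 n (mem_ball_zero_iff.1 hw).le).differentiableAt
    (isOpen_ball.mem_nhds (mem_ball_zero_iff.2 hzr))
  fun_prop

theorem hasSum_mul_deriv_hyperSeries {b : ℝ} (hb : 0 ≤ b) (hb3 : b ≤ 3) {z : ℂ}
    (hz : ‖z‖ < 1) :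
    HasSum (fun n : ℕ => (n : ℂ) * hyperCoeff b n * z ^ n) (z * deriv (hyperSeries b) z) := by
  obtain ⟨r, hzr, hr1⟩ := exists_between hz
  have h := hasSum_deriv_of_summable_norm
    (F := fun (n : ℕ) (w : ℂ) => (hyperCoeff b n : ℂ) * w ^ n)
    (summable_geometric_of_lt_one ((norm_nonneg z).trans hzr.le) hr1) (fun i => by fun_prop)
    (isOpen_ball (x := (0 : ℂ)) (ε := r)) (fun n w hw =>
      norm_hyperCoeff_mul_pow_le hb hb3 n (mem_ball_zero_iff.1 hw).le)
    (mem_ball_zero_iff.2 hzr)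
  refine (h.mul_left z).congr_fun fun n => ?_
  rcases n with _ | n
  · simp
  · simp
    ring

/-- The first-order differential equation satisfied by `₂F₁(b, 1; 3; z) / 2`. -/
theorem hyperSeries_ode {b : ℝ} (hb : 0 ≤ b) (hb3 : b ≤ 3) {z : ℂ} (hz : ‖z‖ < 1) :
    z * (1 - z) * deriv (hyperSeries b) z = 1 - (2 - b * z) * hyperSeries b z := by
  have h1 := hasSum_hyperSeries hb hb3 hz
  have h2 := hasSum_mul_deriv_hyperSeries hb hb3 hz
  have h1' := (hasSum_nat_add_iff' 1).2 h1
  have h2' := (hasSum_nat_add_iff' 1).2 h2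
  have h := ((h2'.sub (h2.mul_left z)).add ((h1'.mul_left 2).sub (h1.mul_left (b * z)))).unique
    (hasSum_zero.congr_fun fun n => ?_)
  · simp [hyperCoeff_zero] at h
    linear_combination h
  · have hr : ((n : ℂ) + 3) * hyperCoeff b (n + 1) = (n + b) * hyperCoeff b n := by
      exact_mod_cast hyperCoeff_succ b n
    push_cast
    linear_combination z ^ (n + 1) * hr

theorem norm_one_sub_hyperSeries_lt {b : ℝ} (hb : 0 ≤ b) (hb3 : b ≤ 3) {z : ℂ}
    (hz : ‖z‖ < 1) : ‖1 - 2 * ((1 - z) * hyperSeries b z)‖ < 1 := by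
  have h1 := hasSum_hyperSeries hb hb3 hz
  have h1' := (hasSum_nat_add_iff' 1).2 h1
  have h := ((h1.mul_left z).sub h1').mul_left 2
  have hbound : ∀ N : ℕ, ∑ n ∈ Finset.range N,
      2 * ((hyperCoeff b n - hyperCoeff b (n + 1)) * ‖z‖) ≤ ‖z‖ := fun N => by
    rw [← Finset.mul_sum, ← Finset.sum_mul, Finset.sum_range_sub', hyperCoeff_zero]
    have := mul_nonneg (hyperCoeff_nonneg hb N) (norm_nonneg z)
    linarith
  have hnn : ∀ n : ℕ, 0 ≤ 2 * ((hyperCoeff b n - hyperCoeff b (n + 1)) * ‖z‖) := fun n =>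
    mul_nonneg two_pos.le (mul_nonneg (sub_nonneg.2 (hyperCoeff_succ_le hb hb3 n))
      (norm_nonneg z))
  have hs := summable_of_sum_range_le hnn hbound
  have hle : ‖1 - 2 * ((1 - z) * hyperSeries b z)‖ ≤
      ∑' n, 2 * ((hyperCoeff b n - hyperCoeff b (n + 1)) * ‖z‖) := by
    have hval : 2 * (z * hyperSeries b z - (hyperSeries b z -
        ∑ i ∈ Finset.range 1, (hyperCoeff b i : ℂ) * z ^ i)) =
        1 - 2 * ((1 - z) * hyperSeries b z) := by
      simp [hyperCoeff_zero]
      ring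
    rw [hval] at h
    refine HasSum.norm_le_of_bounded h hs.hasSum fun n => ?_
    have e : (2 : ℂ) * (z * ((hyperCoeff b n : ℂ) * z ^ n) -
        (hyperCoeff b (n + 1) : ℂ) * z ^ (n + 1)) =
        ((2 * (hyperCoeff b n - hyperCoeff b (n + 1)) : ℝ) : ℂ) * z ^ (n + 1) := by
      push_cast; ring
    have h0 : 0 ≤ hyperCoeff b n - hyperCoeff b (n + 1) :=
      sub_nonneg.2 (hyperCoeff_succ_le hb hb3 n)
    rw [e, norm_mul, norm_real, Real.norm_of_nonneg (by positivity), norm_pow, pow_succ,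
      ← mul_assoc 2]
    have : ‖z‖ ^ n ≤ 1 := pow_le_one₀ (norm_nonneg z) hz.le
    gcongr
    exact mul_le_of_le_one_left (norm_nonneg z) this
  exact (hle.trans (Real.tsum_le_of_sum_range_le hnn hbound)).trans_lt hz

theorem one_lt_re_inv_of_norm_one_sub_lt {G : ℂ} (hG : ‖1 - 2 * G‖ < 1) : 1 < (G⁻¹).re := by
  have h1 : normSq (1 - 2 * G) < 1 := by
    rw [normSq_eq_norm_sq]
    exact pow_lt_one₀ (norm_nonneg _) hG two_ne_zero
  have h0 : G ≠ 0 := by rintro rfl; simp at hG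
  rw [inv_re, lt_div_iff₀ (normSq_pos.2 h0)]
  simp [normSq_apply] at h1 ⊢
  nlinarith

theorem one_sub_mem_slitPlane {z : ℂ} (hz : ‖z‖ < 1) : 1 - z ∈ slitPlane := by
  refine Or.inl ?_
  have := (re_le_norm z).trans_lt hz
  simp
  linarith

theorem hasDerivAt_one_sub_cpow (c : ℂ) {z : ℂ} (hz : ‖z‖ < 1) :
    HasDerivAt (fun w : ℂ => (1 - w) ^ c) (-c * (1 - z) ^ (c - 1)) z := by
  refine (((hasDerivAt_id z).const_sub 1).cpow_const (one_sub_mem_slitPlane hz)).congr_deriv ?_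
  simp

theorem hasDerivAt_kfun (α : ℝ) {z : ℂ} (hz : ‖z‖ < 1) :
    HasDerivAt (kfun α) ((1 - z) ^ (2 * α - 2 : ℂ)) z := by
  unfold kfun
  split_ifs with h
  · refine (((hasDerivAt_id z).const_sub 1).clog (one_sub_mem_slitPlane hz)).neg.congr_deriv ?_
    have : (2 * α - 2 : ℂ) = -1 := by rw [h]; push_cast; norm_num
    rw [this, cpow_neg_one]
    simp [neg_div]
  · refine (((hasDerivAt_one_sub_cpow ((2 * α - 1 : ℝ) : ℂ) hz).sub_const 1).div_const
      _).congr_deriv ?_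
    have h1 : ((1 - 2 * α : ℝ) : ℂ) ≠ 0 := by
      rw [ofReal_ne_zero]; intro h'; apply h; linarith
    rw [div_eq_iff h1]
    push_cast
    ring_nf

/-- The derivative of the closed form for `h_α` that `z h' + h = k'` and Euler's transformation
`h' = (2 - 2α) (1 - z) ^ (2α - 2) ₂F₁(2α, 1; 3; z) / 2` suggest. -/
theorem hasDerivAt_one_sub_cpow_mul_hyperSeries {α : ℝ} (hα0 : 0 ≤ α) (hα1 : α < 1)
    {z : ℂ} (hz : ‖z‖ < 1) :
    HasDerivAt (fun w : ℂ => (1 - w) ^ (2 * α - 2 : ℂ) *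
        (1 - (2 - 2 * α) * (w * hyperSeries (2 * α) w)))
      ((2 - 2 * α) * ((1 - z) ^ (2 * α - 2 : ℂ) * hyperSeries (2 * α) z)) z := by
  have hne := slitPlane_ne_zero (one_sub_mem_slitPlane hz)
  have hP := (differentiableAt_hyperSeries (b := 2 * α) (by linarith) (by linarith)
    hz).hasDerivAt
  have hode := hyperSeries_ode (b := 2 * α) (by linarith) (by linarith) hz
  refine ((hasDerivAt_one_sub_cpow (2 * α - 2 : ℂ) hz).mul
    ((((hasDerivAt_id z).mul hP).const_mul (2 - 2 * α : ℂ)).const_sub 1)).congr_deriv ?_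
  rw [cpow_sub _ _ hne, cpow_one]
  push_cast at hode
  simp only [Pi.mul_apply, id, one_mul]
  generalize (1 - z) ^ (2 * α - 2 : ℂ) = E
  field_simp
  linear_combination (α - 1 : ℂ) * E * hode

theorem hfun_eq {α : ℝ} (hα0 : 0 ≤ α) (hα1 : α < 1) {z : ℂ} (hz : ‖z‖ < 1) :
    hfun α z = (1 - z) ^ (2 * α - 2 : ℂ) * (1 - (2 - 2 * α) * (z * hyperSeries (2 * α) z)) := by
  unfold hfun
  split_ifs with h0
  · simp [h0]
  rw [div_eq_iff h0]
  have hd : ∀ w ∈ ball (0 : ℂ) 1, HasDerivAt (fun w : ℂ => (1 - w) ^ (2 * α - 2 : ℂ) *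
      (1 - (2 - 2 * α) * (w * hyperSeries (2 * α) w)) * w) ((1 - w) ^ (2 * α - 2 : ℂ)) w :=
    fun w hw => by
      refine ((hasDerivAt_one_sub_cpow_mul_hyperSeries hα0 hα1 (mem_ball_zero_iff.1 hw)).mul
        (hasDerivAt_id w)).congr_deriv ?_
      simp only [id]
      ring
  have hk : ∀ w ∈ ball (0 : ℂ) 1, HasDerivAt (kfun α) ((1 - w) ^ (2 * α - 2 : ℂ)) w :=
    fun w hw => hasDerivAt_kfun α (mem_ball_zero_iff.1 hw)
  exact isOpen_ball.eqOn_of_deriv_eq (convex_ball (0 : ℂ) 1).isPreconnected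
    (fun w hw => (hk w hw).differentiableAt.differentiableWithinAt)
    (fun w hw => (hd w hw).differentiableAt.differentiableWithinAt)
    (fun w hw => (hk w hw).deriv.trans (hd w hw).deriv.symm) (mem_ball_self one_pos)
    (by simp [kfun]) (mem_ball_zero_iff.2 hz)

theorem hasDerivAt_hfun {α : ℝ} (hα0 : 0 ≤ α) (hα1 : α < 1) {z : ℂ} (hz : z ∈ ball (0 : ℂ) 1) :
    HasDerivAt (hfun α)
      ((2 - 2 * α) * ((1 - z) ^ (2 * α - 2 : ℂ) * hyperSeries (2 * α) z)) z :=
  (hasDerivAt_one_sub_cpow_mul_hyperSeries hα0 hα1 (mem_ball_zero_iff.1 hz)).congr_of_eventuallyEq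
    (Filter.mem_of_superset (isOpen_ball.mem_nhds hz) fun _ hw =>
      hfun_eq hα0 hα1 (mem_ball_zero_iff.1 hw))

theorem hyperSeries_ne_zero {b : ℝ} (hb : 0 ≤ b) (hb3 : b ≤ 3) {z : ℂ} (hz : ‖z‖ < 1) :
    hyperSeries b z ≠ 0 := fun h => by
  simpa [h] using norm_one_sub_hyperSeries_lt hb hb3 hz

theorem deriv_hfun_ne_zero {α : ℝ} (hα0 : 0 ≤ α) (hα1 : α < 1) {z : ℂ}
    (hz : z ∈ ball (0 : ℂ) 1) : deriv (hfun α) z ≠ 0 := by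
  have hz' := mem_ball_zero_iff.1 hz
  rw [(hasDerivAt_hfun hα0 hα1 hz).deriv]
  refine mul_ne_zero ?_ (mul_ne_zero ?_ (hyperSeries_ne_zero (by linarith) (by linarith) hz'))
  · have : (2 - 2 * α : ℝ) ≠ 0 := by linarith
    exact_mod_cast this
  · rw [Ne, cpow_eq_zero_iff]
    exact fun h => slitPlane_ne_zero (one_sub_mem_slitPlane hz') h.1

theorem re_one_add_hfun_pos {α : ℝ} (hα0 : 0 ≤ α) (hα1 : α < 1) {z : ℂ}
    (hz : z ∈ ball (0 : ℂ) 1) :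
    0 < (1 + z * deriv (deriv (hfun α)) z / deriv (hfun α) z).re := by
  have hz' := mem_ball_zero_iff.1 hz
  have hb : 0 ≤ 2 * α := by linarith
  have hb3 : 2 * α ≤ 3 := by linarith
  have hne := slitPlane_ne_zero (one_sub_mem_slitPlane hz')
  have hP0 := hyperSeries_ne_zero hb hb3 hz'
  have hode := hyperSeries_ode hb hb3 hz'
  have hd := deriv_hfun_ne_zero hα0 hα1 hz
  have hd2 : deriv (deriv (hfun α)) z = (2 - 2 * α) *
      (-(2 * α - 2) * (1 - z) ^ (2 * α - 2 - 1 : ℂ) * hyperSeries (2 * α) z +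
        (1 - z) ^ (2 * α - 2 : ℂ) * deriv (hyperSeries (2 * α)) z) := by
    refine HasDerivAt.deriv (HasDerivAt.congr_of_eventuallyEq
      (((hasDerivAt_one_sub_cpow (2 * α - 2 : ℂ) hz').mul
        (differentiableAt_hyperSeries hb hb3 hz').hasDerivAt).const_mul (2 - 2 * α : ℂ)) ?_)
    exact Filter.mem_of_superset (isOpen_ball.mem_nhds hz) fun w hw =>
      (hasDerivAt_hfun hα0 hα1 hw).deriv
  have key : 1 + z * deriv (deriv (hfun α)) z / deriv (hfun α) z =
      ((1 - z) * hyperSeries (2 * α) z)⁻¹ - 1 := by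
    rw [(hasDerivAt_hfun hα0 hα1 hz).deriv] at hd ⊢
    have hE := left_ne_zero_of_mul (right_ne_zero_of_mul hd)
    rw [hd2, cpow_sub _ _ hne, cpow_one, mul_left_comm z,
      mul_div_mul_left _ _ (left_ne_zero_of_mul hd)]
    push_cast at hode
    generalize (1 - z) ^ (2 * α - 2 : ℂ) = E at hE
    field_simp
    linear_combination hode
  rw [key, sub_re, one_re, sub_pos]
  exact one_lt_re_inv_of_norm_one_sub_lt (norm_one_sub_hyperSeries_lt hb hb3 hz')

/-- For `0 ≤ α < 1`, the function `h_α(z) = k_α(z)/z` is injective on the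
unit disk with convex image, and `Re(1 + z h_α''(z)/h_α'(z)) > 0` on the disk. -/
theorem hfun_injOn_convex_image (α : ℝ) (hα0 : 0 ≤ α) (hα1 : α < 1) :
    Set.InjOn (hfun α) unitDisk ∧
    Convex ℝ (hfun α '' unitDisk) ∧
    ∀ z ∈ unitDisk,
      0 < (1 + z * deriv (deriv (hfun α)) z / deriv (hfun α) z).re := by
  have hf : DifferentiableOn ℂ (hfun α) (ball 0 1) := fun z hz =>
    (hasDerivAt_hfun hα0 hα1 hz).differentiableAt.differentiableWithinAt
  have hf' : ∀ z ∈ ball (0 : ℂ) 1, deriv (hfun α) z ≠ 0 := fun z hz =>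
    deriv_hfun_ne_zero hα0 hα1 hz
  have hre : ∀ z ∈ ball (0 : ℂ) 1,
      0 < (1 + z * deriv (deriv (hfun α)) z / deriv (hfun α) z).re := fun z hz =>
    re_one_add_hfun_pos hα0 hα1 hz
  exact ⟨injOn_ball_of_re_pos hf hf' hre, convex_image_ball_of_re_pos hf hf' hre, hre⟩
end

section
/- Let 0 < α < 1/2 and f ∈ K(α). Then the values of f(z)/z for z ∈ 𝔻 \ {0} lie in the open sector S = {u + iv : |v| < cot(πα)·(u − 1/(2α−1))}; that is, for all z ∈ 𝔻 with z ≠ 0, |Im(f(z)/z)| < cot(πα)·(Re(f(z)/z) − 1/(2α−1)). -/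
section

open MeasureTheory Set Complex
open scoped ComplexConjugate

/-- The binomial kernel `(1 - a) ^ (-p)` (principal branch). -/
noncomputable def binomialKernel (p : ℝ) (a : ℂ) : ℂ := (1 - a) ^ ((-p : ℝ) : ℂ)

lemma measurable_binomialKernel (p : ℝ) : Measurable (binomialKernel p) := by
  unfold binomialKernel; fun_prop

lemma one_sub_mem_slitPlane_s3 {a : ℂ} (ha : ‖a‖ < 1) : 1 - a ∈ slitPlane := by
  left
  have := (re_le_norm a).trans_lt ha
  simpa

lemma hasDerivAt_binomialKernel (p : ℝ) {a : ℂ} (ha : ‖a‖ < 1) :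
    HasDerivAt (binomialKernel p) (p * binomialKernel (p + 1) a) a := by
  have := ((hasDerivAt_id a).const_sub 1).cpow_const (c := ((-p : ℝ) : ℂ))
    (one_sub_mem_slitPlane_s3 ha)
  have hexp : ((-(p + 1) : ℝ) : ℂ) = ((-p : ℝ) : ℂ) - 1 := by push_cast; ring
  refine this.congr_deriv ?_
  simp only [binomialKernel, hexp, id]
  push_cast
  ring

lemma binomialKernel_mul (p q : ℝ) {a : ℂ} (ha : ‖a‖ < 1) :
    binomialKernel p a * binomialKernel q a = binomialKernel (p + q) a := by
  rw [binomialKernel, binomialKernel, binomialKernel,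
    ← cpow_add _ _ (slitPlane_ne_zero (one_sub_mem_slitPlane_s3 ha))]
  congr 1; push_cast; ring

lemma binomialKernel_one (a : ℂ) : binomialKernel 1 a = (1 - a)⁻¹ := by
  simp [binomialKernel, cpow_neg_one]

lemma norm_binomialKernel_le {p : ℝ} (hp : 0 ≤ p) {a : ℂ} {k : ℝ} (hk : k < 1) (ha : ‖a‖ ≤ k) :
    ‖binomialKernel p a‖ ≤ (1 - k) ^ (-p) := by
  rw [binomialKernel, norm_cpow_real]
  refine Real.rpow_le_rpow_of_nonpos (by linarith) ?_ (by linarith)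
  have := norm_sub_norm_le 1 a
  simp at this
  linarith

lemma rpow_inv_mem_Icc {p : ℝ} (hp : 0 < p) {v : ℝ} (hv : v ∈ Icc (0 : ℝ) 1) :
    v ^ p⁻¹ ∈ Icc (0 : ℝ) 1 :=
  ⟨Real.rpow_nonneg hv.1 _, Real.rpow_le_one hv.1 hv.2 (by positivity)⟩

/-- The fundamental theorem of calculus in the variable `u = v ^ p⁻¹`. -/
lemma integral_comp_rpow_inv {E : Type*} [NormedAddCommGroup E] [NormedSpace ℝ E]
    [CompleteSpace E] {p : ℝ} (hp : 0 < p) {g g' : ℝ → E}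
    (hg : ContinuousOn g (Icc 0 1)) (hd : ∀ u ∈ Ioo (0 : ℝ) 1, HasDerivAt g (g' u) u)
    (hc : ContinuousOn (fun u : ℝ => g u + (u / p) • g' u) (Icc 0 1)) :
    ∫ v in (0 : ℝ)..1, (g (v ^ p⁻¹) + (v ^ p⁻¹ / p) • g' (v ^ p⁻¹)) = g 1 := by
  have hmaps : MapsTo (fun v : ℝ => v ^ p⁻¹) (Icc 0 1) (Icc 0 1) := fun v hv =>
    rpow_inv_mem_Icc hp hv
  have hcont : ContinuousOn (fun v : ℝ => v ^ p⁻¹) (Icc 0 1) :=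
    (Real.continuous_rpow_const (by positivity)).continuousOn
  have key := intervalIntegral.integral_eq_sub_of_hasDerivAt_of_le (zero_le_one' ℝ)
    (f := fun v : ℝ => v • g (v ^ p⁻¹))
    (f' := fun v : ℝ => g (v ^ p⁻¹) + (v ^ p⁻¹ / p) • g' (v ^ p⁻¹)) ?_ ?_ ?_
  · simpa using key
  · exact continuousOn_id.smul (hg.comp hcont hmaps)
  · intro v hv
    have hu : v ^ p⁻¹ ∈ Ioo (0 : ℝ) 1 :=
      ⟨Real.rpow_pos_of_pos hv.1 _, Real.rpow_lt_one hv.1.le hv.2 (by positivity)⟩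
    have h1 := (hasDerivAt_id v).rpow_const (p := p⁻¹) (Or.inl hv.1.ne')
    have h3 := (hasDerivAt_id v).smul ((hd _ hu).scomp v h1)
    refine h3.congr_deriv ?_
    have hv0 := hv.1.ne'
    simp only [id, Real.rpow_sub_one hv0, smul_smul, Function.comp_apply, one_smul]
    rw [add_comm]
    congr 2
    field_simp
  · exact ContinuousOn.intervalIntegrable_of_Icc (zero_le_one' ℝ) (hc.comp hcont hmaps)

lemma norm_segment_le {a b : ℂ} {k u : ℝ} (ha : ‖a‖ ≤ k) (hb : ‖b‖ ≤ k) (hu : u ∈ Icc (0 : ℝ) 1) :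
    ‖u * a + (1 - u) * b‖ ≤ k := by
  have := (convex_closedBall (0 : ℂ) k) (x := a) (y := b) (by simpa using ha) (by simpa using hb)
    hu.1 (sub_nonneg.2 hu.2) (by ring)
  simpa using this

lemma continuousOn_binomialKernel (p : ℝ) : ContinuousOn (binomialKernel p) (Metric.ball 0 1) :=
  fun _ ha => (hasDerivAt_binomialKernel p (by simpa using ha)).continuousAt.continuousWithinAt

lemma integral_binomialKernel_segment {p : ℝ} (hp : 0 < p) {a b : ℂ} (ha : ‖a‖ < 1)
    (hb : ‖b‖ < 1) :
    ∫ v in (0 : ℝ)..1, binomialKernel (p + 1)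
      (((v ^ p⁻¹ : ℝ) : ℂ) * a + (1 - ((v ^ p⁻¹ : ℝ) : ℂ)) * b) =
      binomialKernel p a * (1 - b)⁻¹ := by
  have hnorm : ∀ u ∈ Icc (0 : ℝ) 1, ‖(u : ℂ) * a + (1 - u) * b‖ < 1 := fun u hu =>
    (norm_segment_le (le_max_left _ _) (le_max_right _ _) hu).trans_lt (max_lt ha hb)
  have hsum : ∀ u ∈ Icc (0 : ℝ) 1, binomialKernel p (u * a + (1 - u) * b) +
      (u / p) • (p * binomialKernel (p + 1) (u * a + (1 - u) * b) * (a - b)) =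
      (1 - b) * binomialKernel (p + 1) (u * a + (1 - u) * b) := by
    intro u hu
    have hne := slitPlane_ne_zero (one_sub_mem_slitPlane_s3 (hnorm u hu))
    have hp' : (p : ℂ) ≠ 0 := by exact_mod_cast hp.ne'
    rw [← binomialKernel_mul p 1 (hnorm u hu), binomialKernel_one, real_smul, ofReal_div]
    field_simp
    ring
  have hcont : ∀ q : ℝ, ContinuousOn (fun u : ℝ => binomialKernel q (u * a + (1 - u) * b))
      (Icc 0 1) := fun q =>
    (continuousOn_binomialKernel q).comp (by fun_prop) fun u hu => by simpa using hnorm u hu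
  have key := integral_comp_rpow_inv hp (g := fun u : ℝ => binomialKernel p (u * a + (1 - u) * b))
    (g' := fun u : ℝ => p * binomialKernel (p + 1) (u * a + (1 - u) * b) * (a - b)) (hcont p) ?_ ?_
  · have hne := slitPlane_ne_zero (one_sub_mem_slitPlane_s3 hb)
    rw [eq_mul_inv_iff_mul_eq₀ hne, mul_comm, ← intervalIntegral.integral_const_mul]
    simp only [ofReal_one, one_mul, sub_self, zero_mul, add_zero] at key
    rw [← key]
    refine intervalIntegral.integral_congr fun v hv => ?_
    rw [uIcc_of_le zero_le_one] at hv
    exact (hsum _ (rpow_inv_mem_Icc hp hv)).symm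
  · intro u hu
    have h1 : HasDerivAt (fun u : ℝ => (u : ℂ) * a + (1 - u) * b) (a - b) u := by
      have h := (ofRealCLM.hasDerivAt (x := u))
      refine ((h.mul_const a).add ((h.const_sub 1).mul_const b)).congr_deriv ?_
      simp; ring
    exact (hasDerivAt_binomialKernel p (hnorm u (Ioo_subset_Icc_self hu))).comp u h1
  · exact (continuousOn_const.mul (hcont (p + 1))).congr hsum

lemma integral_binomialKernel_mul_inv {p : ℝ} (hp : 0 < p) {a b : ℂ} (ha : ‖a‖ < 1)
    (hb : ‖b‖ < 1) :
    ∫ v in (0 : ℝ)..1, binomialKernel p (((v ^ p⁻¹ : ℝ) : ℂ) * a) *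
        (1 - ((v ^ p⁻¹ : ℝ) : ℂ) * b)⁻¹ =
      ∫ v in (0 : ℝ)..1, binomialKernel p
        (((v ^ p⁻¹ : ℝ) : ℂ) * a + (1 - ((v ^ p⁻¹ : ℝ) : ℂ)) * b) := by
  set k := max ‖a‖ ‖b‖
  have hk : k < 1 := max_lt ha hb
  have hk0 : 0 ≤ k := (norm_nonneg a).trans (le_max_left _ _)
  have hmul : ∀ c : ℂ, ‖c‖ ≤ k → ∀ v ∈ Icc (0 : ℝ) 1, ‖((v ^ p⁻¹ : ℝ) : ℂ) * c‖ ≤ k := by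
    intro c hc v hv
    simpa using norm_segment_le hc (b := 0) (by simpa using hk0) (rpow_inv_mem_Icc hp hv)
  have hseg : ∀ v ∈ Icc (0 : ℝ) 1,
      ‖((v ^ p⁻¹ : ℝ) : ℂ) * a + (1 - ((v ^ p⁻¹ : ℝ) : ℂ)) * b‖ ≤ k := fun v hv =>
    norm_segment_le (le_max_left _ _) (le_max_right _ _) (rpow_inv_mem_Icc hp hv)
  calc _ = ∫ v in (0 : ℝ)..1, ∫ s in (0 : ℝ)..1, binomialKernel (p + 1)
        (((v ^ p⁻¹ : ℝ) : ℂ) * (((s ^ p⁻¹ : ℝ) : ℂ) * a + (1 - ((s ^ p⁻¹ : ℝ) : ℂ)) * b)) := by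
        refine intervalIntegral.integral_congr fun v hv => ?_
        rw [uIcc_of_le zero_le_one] at hv
        rw [← integral_binomialKernel_segment hp ((hmul a (le_max_left _ _) v hv).trans_lt hk)
          ((hmul b (le_max_right _ _) v hv).trans_lt hk)]
        refine intervalIntegral.integral_congr fun s hs => ?_
        congr 1
        ring
    _ = ∫ s in (0 : ℝ)..1, ∫ v in (0 : ℝ)..1, binomialKernel (p + 1)
        (((v ^ p⁻¹ : ℝ) : ℂ) * (((s ^ p⁻¹ : ℝ) : ℂ) * a + (1 - ((s ^ p⁻¹ : ℝ) : ℂ)) * b)) := by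
        simp only [intervalIntegral.integral_of_le (zero_le_one' ℝ)]
        refine integral_integral_swap (Integrable.of_bound (C := (1 - k) ^ (-(p + 1))) ?_ ?_)
        · refine Measurable.aestronglyMeasurable ?_
          refine (measurable_binomialKernel _).comp ?_
          fun_prop
        · rw [Measure.prod_restrict]
          refine (ae_restrict_mem (measurableSet_Ioc.prod measurableSet_Ioc)).mono fun q hq => ?_
          exact norm_binomialKernel_le (by linarith) hk
            (hmul _ (hseg q.2 (Ioc_subset_Icc_self hq.2)) q.1 (Ioc_subset_Icc_self hq.1))
    _ = _ := by
        refine intervalIntegral.integral_congr fun s hs => ?_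
        rw [uIcc_of_le zero_le_one] at hs
        have := integral_binomialKernel_segment hp ((hseg s hs).trans_lt hk) (b := 0) (by simp)
        simpa using this

lemma circleAverage_two_re_sub_one {G : ℂ → ℂ} {ρ : ℝ} (hρ : 0 < ρ)
    (hG : DiffContOnCl ℂ G (Metric.ball 0 ρ)) (h0 : G 0 = 1) {z : ℂ} (hz : z ∈ Metric.ball 0 ρ) :
    Real.circleAverage (fun ζ => (2 * (G ζ).re - 1) • (1 - ζ⁻¹ * z)⁻¹) 0 ρ = G z := by
  have hρ' : |ρ| = ρ := abs_of_pos hρ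
  have hzn : ‖z‖ < ρ := by simpa using hz
  have hsphere : ∀ ζ ∈ Metric.sphere (0 : ℂ) ρ, ζ ≠ 0 ∧ ζ - z ≠ 0 ∧ conj ζ = ρ ^ 2 / ζ := by
    intro ζ hζ
    have hn : ‖ζ‖ = ρ := by simpa using hζ
    have h1 : ζ ≠ 0 := norm_pos_iff.1 (hn ▸ hρ)
    refine ⟨h1, fun h => ?_, ?_⟩
    · rw [sub_eq_zero] at h; rw [h] at hn; linarith
    · rw [eq_div_iff h1, mul_comm, mul_conj, normSq_eq_norm_sq, hn]; norm_cast
  have hGc : ContinuousOn G (Metric.sphere 0 ρ) :=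
    hG.continuousOn.mono (by rw [closure_ball _ hρ.ne']; exact Metric.sphere_subset_closedBall)
  have hden : ∀ ζ ∈ Metric.closedBall (0 : ℂ) ρ, 1 - conj z * ζ / ρ ^ 2 ≠ 0 := by
    intro ζ hζ h
    have hn : ‖ζ‖ ≤ ρ := by simpa using hζ
    have h2 : ‖conj z * ζ / ρ ^ 2‖ = 1 := by
      rw [← sub_eq_zero.1 h]; simp
    have h3 : ‖z‖ * ‖ζ‖ / ρ ^ 2 = 1 := by simpa using h2
    rw [div_eq_one_iff_eq (by positivity)] at h3
    nlinarith [norm_nonneg z, norm_nonneg ζ]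
  have hkc : ContinuousOn (fun ζ : ℂ => (ζ - 0) / (ζ - z)) (Metric.sphere 0 ρ) :=
    ContinuousOn.div (by fun_prop) (by fun_prop) fun ζ hζ => (hsphere ζ hζ).2.1
  have h1 : Real.circleAverage (fun ζ => ((ζ - 0) / (ζ - z)) • G ζ) 0 ρ = G z :=
    DiffContOnCl.circleAverage_smul_div (by rwa [hρ']) (by rwa [hρ'])
  have h2 : Real.circleAverage (fun ζ => ((ζ - 0) / (ζ - z)) • (1 : ℂ)) 0 ρ = 1 :=
    DiffContOnCl.circleAverage_smul_div (f := fun _ => (1 : ℂ)) diffContOnCl_const (by rwa [hρ'])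
  have hHd : DiffContOnCl ℂ (fun ζ => (1 - conj z * ζ / ρ ^ 2)⁻¹ • G ζ) (Metric.ball 0 ρ) := by
    refine DiffContOnCl.smul (DiffContOnCl.inv ?_ ?_) hG
    · exact Differentiable.diffContOnCl (by fun_prop)
    · intro ζ hζ
      rw [closure_ball _ hρ.ne'] at hζ
      exact hden ζ hζ
  have h3 : Real.circleAverage (fun ζ => (1 - conj z * ζ / ρ ^ 2)⁻¹ • G ζ) 0 ρ = 1 := by
    rw [DiffContOnCl.circleAverage (by rwa [hρ'])]
    simp [h0]
  have hHc : ContinuousOn (fun ζ => (1 - conj z * ζ / ρ ^ 2)⁻¹ • G ζ) (Metric.sphere 0 ρ) :=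
    hHd.continuousOn.mono (by rw [closure_ball _ hρ.ne']; exact Metric.sphere_subset_closedBall)
  have h4 : Real.circleAverage (fun ζ => conj ((1 - conj z * ζ / ρ ^ 2)⁻¹ • G ζ)) 0 ρ = 1 := by
    have := conjCLE.toContinuousLinearMap.circleAverage_comp_comm (hHc.circleIntegrable hρ.le)
    rw [h3] at this
    simpa [Function.comp_def] using this
  have hc1 : CircleIntegrable (fun ζ => ((ζ - 0) / (ζ - z)) • G ζ) 0 ρ :=
    (hkc.smul hGc).circleIntegrable hρ.le
  have hc2 : CircleIntegrable (fun ζ => ((ζ - 0) / (ζ - z)) • (1 : ℂ)) 0 ρ :=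
    (hkc.smul (continuousOn_const (c := (1 : ℂ)))).circleIntegrable hρ.le
  have hc4 : CircleIntegrable (fun ζ => conj ((1 - conj z * ζ / ρ ^ 2)⁻¹ • G ζ)) 0 ρ :=
    (continuous_conj.comp_continuousOn hHc).circleIntegrable hρ.le
  calc _ = Real.circleAverage ((fun ζ => ((ζ - 0) / (ζ - z)) • G ζ) +
        (fun ζ => conj ((1 - conj z * ζ / ρ ^ 2)⁻¹ • G ζ)) -
        (fun ζ => ((ζ - 0) / (ζ - z)) • (1 : ℂ))) 0 ρ := by
        refine Real.circleAverage_congr_sphere fun ζ hζ => ?_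
        rw [hρ'] at hζ
        obtain ⟨hn, hs, hc⟩ := hsphere ζ hζ
        have hρc : (ρ : ℂ) ≠ 0 := by exact_mod_cast hρ.ne'
        have hk : (1 - ζ⁻¹ * z)⁻¹ = ζ / (ζ - z) := by
          rw [inv_eq_iff_eq_inv, inv_div]; field_simp
        have hk' : conj ((1 - conj z * ζ / ρ ^ 2)⁻¹) = ζ / (ζ - z) := by
          simp only [map_inv₀, map_sub, map_one, map_div₀, map_mul, conj_conj, map_pow,
            conj_ofReal, hc]
          rw [inv_eq_iff_eq_inv, inv_div]; field_simp
        have hre : ((2 * (G ζ).re - 1 : ℝ) : ℂ) = G ζ + conj (G ζ) - 1 := by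
          rw [add_conj]; push_cast; ring
        simp only [Pi.sub_apply, Pi.add_apply, smul_eq_mul, map_mul, real_smul, hk, hk', hre]
        ring
    _ = _ := by
        rw [Real.circleAverage_sub (hc1.add hc4) hc2, Real.circleAverage_add hc1 hc4, h1, h2, h4]
        ring

/-- Herglotz representation, on a disk of radius `ρ`, of a function with real part at least
`1 / 2` and value `1` at the origin. -/
lemma exists_measure_integral_inv_one_sub_eq {G : ℂ → ℂ} {ρ : ℝ} (hρ : 0 < ρ)
    (hG : DiffContOnCl ℂ G (Metric.ball 0 ρ)) (h0 : G 0 = 1)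
    (hre : ∀ ζ ∈ Metric.sphere (0 : ℂ) ρ, 1 / 2 ≤ (G ζ).re) :
    ∃ μ : Measure ℂ, IsProbabilityMeasure μ ∧ (∀ᵐ x ∂μ, ‖x‖ ≤ ρ⁻¹) ∧
      ∀ z ∈ Metric.ball (0 : ℂ) ρ, ∫ x, (1 - x * z)⁻¹ ∂μ = G z := by
  have hmem : ∀ θ, circleMap 0 ρ θ ∈ Metric.sphere (0 : ℂ) ρ := circleMap_mem_sphere _ hρ.le
  have hGc : Continuous fun θ : ℝ => G (circleMap 0 ρ θ) :=
    hG.continuousOn.comp_continuous (continuous_circleMap 0 ρ) fun θ => by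
      rw [closure_ball _ hρ.ne']; exact Metric.sphere_subset_closedBall (hmem θ)
  set d : ℝ → ENNReal := fun θ =>
    ENNReal.ofReal ((2 * Real.pi)⁻¹ * (2 * (G (circleMap 0 ρ θ)).re - 1)) with hd
  have hdm : Measurable d :=
    (continuous_const.mul ((continuous_const.mul (continuous_re.comp hGc)).sub
      continuous_const)).measurable.ennreal_ofReal
  set x : ℝ → ℂ := fun θ => (circleMap 0 ρ θ)⁻¹ with hx
  have hxm : Measurable x := (measurable_circleMap 0 ρ).inv
  set κ : Measure ℝ := (volume.restrict (Ioc 0 (2 * Real.pi))).withDensity d with hκ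
  have hint : ∀ z ∈ Metric.ball (0 : ℂ) ρ, ∫ y, (1 - y * z)⁻¹ ∂(κ.map x) = G z := by
    intro z hz
    rw [integral_map hxm.aemeasurable (by fun_prop), hκ,
      integral_withDensity_eq_integral_toReal_smul hdm (by simp [hd]),
      ← intervalIntegral.integral_of_le (by positivity),
      ← circleAverage_two_re_sub_one hρ hG h0 hz, Real.circleAverage_def,
      ← intervalIntegral.integral_smul]
    refine intervalIntegral.integral_congr fun θ _ => ?_
    have h1 : 0 ≤ (2 * Real.pi)⁻¹ * (2 * (G (circleMap 0 ρ θ)).re - 1) :=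
      mul_nonneg (by positivity) (by linarith [hre _ (hmem θ)])
    simp only [hd, ENNReal.toReal_ofReal h1, smul_smul, hx]
  have hprob : IsProbabilityMeasure (κ.map x) := by
    have h1 := hint 0 (by simpa using hρ)
    simp only [mul_zero, sub_zero, inv_one, integral_const, h0] at h1
    refine ⟨?_⟩
    have h2 : (κ.map x).real univ = 1 := by
      simpa using congrArg Complex.re h1
    rwa [measureReal_def, ENNReal.toReal_eq_one_iff] at h2
  refine ⟨κ.map x, hprob, ?_, hint⟩
  rw [ae_map_iff hxm.aemeasurable (measurableSet_le (by fun_prop) (by fun_prop))]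
  refine Filter.Eventually.of_forall fun θ => ?_
  have := hmem θ
  simp only [mem_sphere_iff_norm, sub_zero] at this
  simp [hx, this]

/-- Mixtures of the kernels `(1 - w ζ) ^ (-p)` are stable under multiplication by a mixture of the
functions `(1 - x ζ)⁻¹` followed by averaging over `v ↦ v ^ p⁻¹ ζ`. -/
lemma exists_measure_integral_binomialKernel_eq {p R : ℝ} (hp : 0 < p)
    (ν μ : Measure ℂ) [IsProbabilityMeasure ν] [IsProbabilityMeasure μ]
    (hν : ∀ᵐ w ∂ν, ‖w‖ ≤ R) (hμ : ∀ᵐ x ∂μ, ‖x‖ ≤ R) :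
    ∃ ν' : Measure ℂ, IsProbabilityMeasure ν' ∧ (∀ᵐ w ∂ν', ‖w‖ ≤ R) ∧
      ∀ ζ : ℂ, R * ‖ζ‖ < 1 →
        IntervalIntegrable (fun v : ℝ => (∫ w, binomialKernel p (w * ((v ^ p⁻¹ : ℝ) * ζ)) ∂ν) *
          ∫ x, (1 - x * ((v ^ p⁻¹ : ℝ) * ζ))⁻¹ ∂μ) volume 0 1 ∧
        ∫ w, binomialKernel p (w * ζ) ∂ν' =
          ∫ v in (0 : ℝ)..1, (∫ w, binomialKernel p (w * ((v ^ p⁻¹ : ℝ) * ζ)) ∂ν) *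
            ∫ x, (1 - x * ((v ^ p⁻¹ : ℝ) * ζ))⁻¹ ∂μ := by
  set m : Measure ℝ := volume.restrict (Ioc 0 1) with hm
  have : IsProbabilityMeasure m := ⟨by simp [hm]⟩
  set π : ℝ × ℂ × ℂ → ℂ := fun q =>
    ((q.1 ^ p⁻¹ : ℝ) : ℂ) * q.2.1 + (1 - ((q.1 ^ p⁻¹ : ℝ) : ℂ)) * q.2.2 with hπ
  have hπm : Measurable π := by fun_prop
  have hae2 : ∀ᵐ y ∂(ν.prod μ), ‖y.1‖ ≤ R ∧ ‖y.2‖ ≤ R :=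
    (Measure.quasiMeasurePreserving_fst.ae hν).and (Measure.quasiMeasurePreserving_snd.ae hμ)
  have hae : ∀ᵐ q ∂(m.prod (ν.prod μ)), q.1 ∈ Ioc (0 : ℝ) 1 ∧ ‖q.2.1‖ ≤ R ∧ ‖q.2.2‖ ≤ R :=
    (Measure.quasiMeasurePreserving_fst.ae (ae_restrict_mem measurableSet_Ioc)).and
      (Measure.quasiMeasurePreserving_snd.ae hae2)
  have hπR : ∀ᵐ q ∂(m.prod (ν.prod μ)), ‖π q‖ ≤ R := by
    filter_upwards [hae] with q hq
    exact norm_segment_le hq.2.1 hq.2.2 (rpow_inv_mem_Icc hp (Ioc_subset_Icc_self hq.1))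
  refine ⟨(m.prod (ν.prod μ)).map π, Measure.isProbabilityMeasure_map hπm.aemeasurable, ?_, ?_⟩
  · rwa [ae_map_iff hπm.aemeasurable (measurableSet_le (by fun_prop) (by fun_prop))]
  intro ζ hζ
  have hmulζ : ∀ w : ℂ, ‖w‖ ≤ R → ‖w * ζ‖ ≤ R * ‖ζ‖ := fun w hw => by
    rw [norm_mul]; gcongr
  have hint1 : Integrable (fun q => binomialKernel p (π q * ζ)) (m.prod (ν.prod μ)) := by
    refine Integrable.of_bound (C := (1 - R * ‖ζ‖) ^ (-p))
      ((measurable_binomialKernel p).comp (hπm.mul_const ζ)).aestronglyMeasurable ?_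
    filter_upwards [hπR] with q hq
    exact norm_binomialKernel_le hp.le hζ (hmulζ _ hq)
  have hint2 : Integrable (fun q : ℝ × ℂ × ℂ =>
      binomialKernel p (q.2.1 * ((q.1 ^ p⁻¹ : ℝ) * ζ)) *
        binomialKernel 1 (q.2.2 * ((q.1 ^ p⁻¹ : ℝ) * ζ))) (m.prod (ν.prod μ)) := by
    refine Integrable.of_bound
      (C := (1 - R * ‖ζ‖) ^ (-p) * (1 - R * ‖ζ‖) ^ (-1 : ℝ)) ?_ ?_
    · refine Measurable.aestronglyMeasurable (Measurable.mul ?_ ?_)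
      · exact (measurable_binomialKernel p).comp (by fun_prop)
      · exact (measurable_binomialKernel 1).comp (by fun_prop)
    · filter_upwards [hae] with q hq
      have hu := rpow_inv_mem_Icc hp (Ioc_subset_Icc_self hq.1)
      have hle : ∀ w : ℂ, ‖w‖ ≤ R → ‖w * (((q.1 ^ p⁻¹ : ℝ) : ℂ) * ζ)‖ ≤ R * ‖ζ‖ := by
        intro w hw
        rw [mul_left_comm, norm_mul, norm_real, Real.norm_of_nonneg hu.1]
        exact (mul_le_of_le_one_left (norm_nonneg _) hu.2).trans (hmulζ w hw)
      rw [norm_mul]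
      exact mul_le_mul (norm_binomialKernel_le hp.le hζ (hle _ hq.2.1))
        (norm_binomialKernel_le zero_le_one hζ (hle _ hq.2.2)) (norm_nonneg _)
        (Real.rpow_nonneg (by linarith) _)
  have hprod : ∀ v : ℝ, ∫ y : ℂ × ℂ, binomialKernel p (y.1 * ((v ^ p⁻¹ : ℝ) * ζ)) *
      binomialKernel 1 (y.2 * ((v ^ p⁻¹ : ℝ) * ζ)) ∂(ν.prod μ) =
      (∫ w, binomialKernel p (w * ((v ^ p⁻¹ : ℝ) * ζ)) ∂ν) *
            ∫ x, (1 - x * ((v ^ p⁻¹ : ℝ) * ζ))⁻¹ ∂μ := by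
    intro v
    simp only [← binomialKernel_one]
    exact integral_prod_mul (fun w => binomialKernel p (w * ((v ^ p⁻¹ : ℝ) * ζ)))
      (fun x => binomialKernel 1 (x * ((v ^ p⁻¹ : ℝ) * ζ)))
  simp only [← hprod]
  refine ⟨?_, ?_⟩
  · rw [intervalIntegrable_iff_integrableOn_Ioc_of_le zero_le_one]
    exact hint2.integral_prod_left
  · have hmeas : Measurable fun w : ℂ => binomialKernel p (w * ζ) :=
      (measurable_binomialKernel p).comp (by fun_prop)
    have hswap := integral_integral_swap (f := fun (v : ℝ) (y : ℂ × ℂ) =>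
      binomialKernel p (y.1 * ((v ^ p⁻¹ : ℝ) * ζ)) *
        binomialKernel 1 (y.2 * ((v ^ p⁻¹ : ℝ) * ζ))) hint2
    rw [integral_map hπm.aemeasurable hmeas.aestronglyMeasurable, integral_prod_symm _ hint1,
      intervalIntegral.integral_of_le zero_le_one, ← hm, hswap]
    refine integral_congr_ae ?_
    filter_upwards [hae2] with y hy
    have := integral_binomialKernel_mul_inv hp ((hmulζ _ hy.1).trans_lt hζ)
      ((hmulζ _ hy.2).trans_lt hζ)
    rw [intervalIntegral.integral_of_le zero_le_one, intervalIntegral.integral_of_le zero_le_one]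
      at this
    simp only [binomialKernel_one]
    convert this.symm using 4
    · simp only [hπ]; ring
    · ring_nf
    · ring_nf

lemma integral_mul_exp_comp_rpow_inv {p : ℝ} (hp : 0 < p) (C t : ℝ) :
    ∫ v in (0 : ℝ)..1, (v ^ p⁻¹ * t * Real.exp (C * (p + 1) * (v ^ p⁻¹ * t))) *
      (1 + C * (v ^ p⁻¹ * t)) = p / (p + 1) * (t * Real.exp (C * (p + 1) * t)) := by
  have key := integral_comp_rpow_inv hp
    (g := fun u => p / (p + 1) * (u * t * Real.exp (C * (p + 1) * (u * t))))
    (g' := fun u => p / (p + 1) * ((1 * t) * Real.exp (C * (p + 1) * (u * t)) +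
      u * t * (Real.exp (C * (p + 1) * (u * t)) * (C * (p + 1) * (1 * t)))))
    (by fun_prop) ?_ (by fun_prop)
  · rw [one_mul] at key
    rw [← key]
    refine intervalIntegral.integral_congr fun v _ => ?_
    have : p + 1 ≠ 0 := by positivity
    simp only [smul_eq_mul]
    field_simp
    ring
  · intro u _
    have h := (hasDerivAt_id u).mul_const t
    exact ((h.mul (h.const_mul (C * (p + 1))).exp).const_mul (p / (p + 1)))

/-- If `Φ` satisfies `Φ(ζ) = ∫ v in 0..1, Φ(v ^ p⁻¹ ζ) G(v ^ p⁻¹ ζ)` with `G` a mixture of the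
functions `(1 - x ζ)⁻¹`, then along a radius `Φ` is approximated geometrically fast by mixtures of
the kernels `(1 - w ζ) ^ (-p)`. -/
lemma exists_measure_norm_integral_binomialKernel_sub_le {p R C M : ℝ} (hp : 0 < p) (hR : 0 ≤ R)
    {z : ℂ} (hz : R * ‖z‖ < 1) {Φ G : ℂ → ℂ}
    {μ : Measure ℂ} [IsProbabilityMeasure μ] (hμ : ∀ᵐ x ∂μ, ‖x‖ ≤ R)
    (hG : ∀ t ∈ Icc (0 : ℝ) 1, ∫ x, (1 - x * (t * z))⁻¹ ∂μ = G (t * z))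
    (hC : ∀ t ∈ Icc (0 : ℝ) 1, ‖G (t * z)‖ ≤ 1 + C * t)
    (hΦ0 : ∀ t ∈ Icc (0 : ℝ) 1,
      ‖1 - Φ (t * z)‖ ≤ M * (t * Real.exp (C * (p + 1) * t)))
    (hΦi : ∀ t ∈ Icc (0 : ℝ) 1, IntervalIntegrable
      (fun v : ℝ => Φ (((v ^ p⁻¹ * t : ℝ) : ℂ) * z) * G (((v ^ p⁻¹ * t : ℝ) : ℂ) * z)) volume 0 1)
    (hΦ : ∀ t ∈ Icc (0 : ℝ) 1, ∫ v in (0 : ℝ)..1,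
      Φ (((v ^ p⁻¹ * t : ℝ) : ℂ) * z) * G (((v ^ p⁻¹ * t : ℝ) : ℂ) * z) = Φ (t * z)) (n : ℕ) :
    ∃ ν : Measure ℂ, IsProbabilityMeasure ν ∧ (∀ᵐ w ∂ν, ‖w‖ ≤ R) ∧
      ∀ t ∈ Icc (0 : ℝ) 1, ‖∫ w, binomialKernel p (w * (t * z)) ∂ν - Φ (t * z)‖ ≤
        M * (p / (p + 1)) ^ n * (t * Real.exp (C * (p + 1) * t)) := by
  induction n with
  | zero =>
    refine ⟨Measure.dirac 0, inferInstance, ?_, fun t ht => ?_⟩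
    · rw [ae_dirac_iff (measurableSet_le (by fun_prop) (by fun_prop))]
      simpa using hR
    · simpa [binomialKernel] using hΦ0 t ht
  | succ n ih =>
    obtain ⟨ν, hν, hνR, hb⟩ := ih
    obtain ⟨ν', hν', hνR', hstep⟩ := exists_measure_integral_binomialKernel_eq hp ν μ hνR hμ
    refine ⟨ν', hν', hνR', fun t ht => ?_⟩
    have htz : R * ‖(t : ℂ) * z‖ < 1 := by
      rw [norm_mul, norm_real, Real.norm_of_nonneg ht.1]
      refine lt_of_le_of_lt ?_ hz
      gcongr
      exact mul_le_of_le_one_left (norm_nonneg _) ht.2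
    obtain ⟨hi, he⟩ := hstep (t * z) htz
    have hut : ∀ v ∈ Icc (0 : ℝ) 1, v ^ p⁻¹ * t ∈ Icc (0 : ℝ) 1 := fun v hv =>
      have hu := rpow_inv_mem_Icc hp hv
      ⟨mul_nonneg hu.1 ht.1, mul_le_one₀ hu.2 ht.1 ht.2⟩
    rw [he, ← hΦ t ht, ← intervalIntegral.integral_sub hi (hΦi t ht)]
    calc _ ≤ ∫ v in (0 : ℝ)..1, M * (p / (p + 1)) ^ n *
          ((v ^ p⁻¹ * t * Real.exp (C * (p + 1) * (v ^ p⁻¹ * t))) * (1 + C * (v ^ p⁻¹ * t))) := by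
          refine intervalIntegral.norm_integral_le_of_norm_le zero_le_one
            (Filter.Eventually.of_forall fun v hv => ?_) ?_
          · have hv' := hut v (Ioc_subset_Icc_self hv)
            have hcast : ((v ^ p⁻¹ : ℝ) : ℂ) * (t * z) = ((v ^ p⁻¹ * t : ℝ) : ℂ) * z := by
              push_cast; ring
            rw [hcast, hG _ hv', ← sub_mul, norm_mul, ← mul_assoc]
            have := hb _ hv'
            exact mul_le_mul this (hC _ hv') (norm_nonneg _) ((norm_nonneg _).trans this)
          · have : Continuous fun v : ℝ => v ^ p⁻¹ := Real.continuous_rpow_const (by positivity)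
            exact Continuous.intervalIntegrable (by fun_prop) _ _
      _ = _ := by
          rw [intervalIntegral.integral_const_mul, integral_mul_exp_comp_rpow_inv hp, pow_succ]
          ring


lemma one_add_mul_div_one_sub_re_pos {a : ℂ} (ha : ‖a‖ < 1) {s : ℝ} (hs : s ∈ Icc (0 : ℝ) 1) :
    0 < (1 + s * (a / (1 - a))).re := by
  have hne := slitPlane_ne_zero (one_sub_mem_slitPlane_s3 ha)
  have hinv : 0 < ((1 - a)⁻¹).re := by
    rw [inv_re]
    refine div_pos ?_ (normSq_pos.2 hne)
    have := (re_le_norm a).trans_lt ha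
    simpa using this
  have heq : 1 + s * (a / (1 - a)) = ((1 - s : ℝ) : ℂ) + (s : ℂ) * (1 - a)⁻¹ := by
    push_cast; field_simp; ring
  rw [heq, add_re, ofReal_re, re_ofReal_mul]
  rcases hs.1.eq_or_lt with h | h
  · simp [← h]
  · have := mul_pos h hinv
    linarith [hs.2]

lemma integral_binomialKernel_add_inv {β : ℝ} (hβ : 0 < β) {a : ℂ} (ha : ‖a‖ < 1) :
    (∫ t in (0 : ℝ)..1, binomialKernel (β + 1) (t * a)) + 1 / β =
      ((β + 1) / β : ℝ) * ∫ s in (0 : ℝ)..1, (1 + s * (a / (1 - a))) ^ (β : ℂ) := by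
  have hβc : (β : ℂ) ≠ 0 := by exact_mod_cast hβ.ne'
  rcases eq_or_ne a 0 with rfl | ha0
  · simp [binomialKernel]; field_simp
  have hne := slitPlane_ne_zero (one_sub_mem_slitPlane_s3 ha)
  have hta : ∀ t ∈ Icc (0 : ℝ) 1, ‖(t : ℂ) * a‖ < 1 := fun t ht => by
    rw [norm_mul, norm_real, Real.norm_of_nonneg ht.1]
    exact (mul_le_of_le_one_left (norm_nonneg _) ht.2).trans_lt ha
  have hofReal : ∀ (b : ℂ) (t : ℝ), HasDerivAt (fun t : ℝ => (t : ℂ) * b) b t := fun b t => by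
    simpa using (ofRealCLM.hasDerivAt (x := t)).mul_const b
  have h1 : (∫ t in (0 : ℝ)..1, binomialKernel (β + 1) (t * a)) * (β * a) =
      binomialKernel β a - 1 := by
    have hd : ∀ t ∈ uIcc (0 : ℝ) 1, HasDerivAt (fun t : ℝ => binomialKernel β (t * a))
        (binomialKernel (β + 1) (t * a) * (β * a)) t := fun t ht => by
      rw [uIcc_of_le zero_le_one] at ht
      refine ((hasDerivAt_binomialKernel β (hta t ht)).comp t (hofReal a t)).congr_deriv ?_
      ring
    have hc : ContinuousOn (fun t : ℝ => binomialKernel (β + 1) (t * a) * (β * a))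
        (uIcc 0 1) := by
      rw [uIcc_of_le zero_le_one]
      exact ((continuousOn_binomialKernel _).comp (by fun_prop)
        fun t ht => by simpa using hta t ht).mul continuousOn_const
    have := intervalIntegral.integral_eq_sub_of_hasDerivAt hd hc.intervalIntegrable
    rw [intervalIntegral.integral_mul_const] at this
    simpa [binomialKernel] using this
  have h2 : (∫ s in (0 : ℝ)..1, (1 + s * (a / (1 - a))) ^ (β : ℂ)) *
      ((β + 1) * (a / (1 - a))) = binomialKernel (β + 1) a - 1 := by
    have hd : ∀ t ∈ uIcc (0 : ℝ) 1, HasDerivAt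
        (fun t : ℝ => (1 + t * (a / (1 - a))) ^ (β + 1 : ℂ))
        ((1 + t * (a / (1 - a))) ^ (β : ℂ) * ((β + 1) * (a / (1 - a)))) t := fun t ht => by
      rw [uIcc_of_le zero_le_one] at ht
      refine (((hasDerivAt_id _).cpow_const
        (Or.inl (one_add_mul_div_one_sub_re_pos ha ht))).comp t
        ((hofReal (a / (1 - a)) t).const_add 1)).congr_deriv ?_
      simp only [id, add_sub_cancel_right]
      ring
    have hc : ContinuousOn (fun t : ℝ =>
        (1 + t * (a / (1 - a))) ^ (β : ℂ) * ((β + 1) * (a / (1 - a)))) (uIcc 0 1) := by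
      rw [uIcc_of_le zero_le_one]
      exact (ContinuousOn.cpow_const (by fun_prop)
        fun t ht => Or.inl (one_add_mul_div_one_sub_re_pos ha ht)).mul continuousOn_const
    have := intervalIntegral.integral_eq_sub_of_hasDerivAt hd hc.intervalIntegrable
    rw [intervalIntegral.integral_mul_const] at this
    rw [this]
    have hy : 1 + ((1 : ℝ) : ℂ) * (a / (1 - a)) = (1 - a)⁻¹ := by
      push_cast; field_simp; ring
    rw [hy, inv_cpow _ _ (mem_slitPlane_iff_arg.1 (one_sub_mem_slitPlane_s3 ha)).1, ← cpow_neg]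
    simp [binomialKernel]
  rw [← binomialKernel_mul β 1 ha, binomialKernel_one] at h2
  have h3 : binomialKernel β a =
      (∫ t in (0 : ℝ)..1, binomialKernel (β + 1) (t * a)) * (β * a) + 1 := by
    rw [h1]; ring
  rw [h3] at h2
  generalize (∫ t in (0 : ℝ)..1, binomialKernel (β + 1) (t * a)) = I at h2 ⊢
  generalize (∫ s in (0 : ℝ)..1, (1 + s * (a / (1 - a))) ^ (β : ℂ)) = J at h2 ⊢
  field_simp at h2
  have h4 : a * (J * (β + 1)) = a * (I * β + 1) := by linear_combination h2
  have h5 := mul_left_cancel₀ ha0 h4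
  push_cast
  field_simp
  linear_combination -h5

lemma re_mul_integral_binomialKernel_nonneg {β : ℝ} (hβ : 0 < β) {c : ℂ}
    (hc : ∀ w : ℂ, 0 < w.re → 0 ≤ (c * w ^ (β : ℂ)).re) {a : ℂ} (ha : ‖a‖ < 1) :
    0 ≤ (c * ((∫ t in (0 : ℝ)..1, binomialKernel (β + 1) (t * a)) + 1 / β)).re := by
  rw [integral_binomialKernel_add_inv hβ ha, mul_left_comm, re_ofReal_mul,
    ← intervalIntegral.integral_const_mul]
  refine mul_nonneg (by positivity) ?_
  have hcont : ContinuousOn (fun s : ℝ => c * (1 + s * (a / (1 - a))) ^ (β : ℂ)) (uIcc 0 1) := by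
    rw [uIcc_of_le zero_le_one]
    exact continuousOn_const.mul (ContinuousOn.cpow_const (by fun_prop)
        fun t ht => Or.inl (one_add_mul_div_one_sub_re_pos ha ht))
  have := reCLM.intervalIntegral_comp_comm (hcont.intervalIntegrable (μ := volume))
  simp only [reCLM_apply] at this
  rw [← this]
  exact intervalIntegral.integral_nonneg zero_le_one fun s hs =>
    hc _ (one_add_mul_div_one_sub_re_pos ha hs)

lemma re_mul_integral_nonneg {β : ℝ} (hβ : 0 < β) {c : ℂ}
    (hc : ∀ w : ℂ, 0 < w.re → 0 ≤ (c * w ^ (β : ℂ)).re) {Φ : ℂ → ℂ}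
    (hΦd : DifferentiableOn ℂ Φ (Metric.ball 0 1)) (hΦ0 : Φ 0 = 1)
    (hne : ∀ ζ ∈ Metric.ball (0 : ℂ) 1, Φ ζ ≠ 0)
    (hre : ∀ ζ ∈ Metric.ball (0 : ℂ) 1, -((β + 1) / 2) ≤ (ζ * deriv Φ ζ / Φ ζ).re)
    {z : ℂ} (hz : z ∈ Metric.ball (0 : ℂ) 1) :
    0 ≤ (c * ((∫ t in (0 : ℝ)..1, Φ (t * z)) + 1 / β)).re := by
  set p := β + 1 with hpdef
  have hp : 0 < p := by positivity
  have hpc : (p : ℂ) ≠ 0 := by exact_mod_cast hp.ne'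
  have hz1 : ‖z‖ < 1 := by simpa using hz
  obtain ⟨ρ, hzρ, hρ1⟩ := exists_between hz1
  have hρ : 0 < ρ := (norm_nonneg z).trans_lt hzρ
  set k := ρ⁻¹ * ‖z‖ with hk
  have hk0 : 0 ≤ k := by positivity
  have hk1 : k < 1 := by rw [hk, inv_mul_lt_iff₀ hρ]; simpa using hzρ
  set C := k / (1 - k) with hCdef
  have hC0 : 0 ≤ C := div_nonneg hk0 (by linarith)
  have htz : ∀ t ∈ Icc (0 : ℝ) 1, ‖(t : ℂ) * z‖ = t * ‖z‖ ∧ ‖(t : ℂ) * z‖ ≤ ‖z‖ := fun t ht => by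
    rw [norm_mul, norm_real, Real.norm_of_nonneg ht.1]
    exact ⟨rfl, mul_le_of_le_one_left (norm_nonneg _) ht.2⟩
  have htz1 : ∀ t ∈ Icc (0 : ℝ) 1, (t : ℂ) * z ∈ Metric.ball (0 : ℂ) 1 := fun t ht => by
    simpa using (htz t ht).2.trans_lt hz1
  have hΦ'd : DifferentiableOn ℂ (deriv Φ) (Metric.ball 0 1) := hΦd.deriv Metric.isOpen_ball
  set G : ℂ → ℂ := fun ζ => 1 + ζ * deriv Φ ζ / Φ ζ / p with hGdef
  have hGd : DifferentiableOn ℂ G (Metric.ball 0 1) :=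
    (((differentiableOn_id.mul hΦ'd).div hΦd hne).div_const _).const_add 1
  have hGre : ∀ ζ ∈ Metric.ball (0 : ℂ) 1, 1 / 2 ≤ (G ζ).re := fun ζ hζ => by
    have h : -(p / 2) / p ≤ (ζ * deriv Φ ζ / Φ ζ).re / p := by gcongr; exact hre ζ hζ
    have h2 : -(p / 2) / p = -(1 / 2) := by field_simp
    simp only [hGdef, add_re, one_re, div_ofReal_re]
    linarith
  obtain ⟨μ, hμ, hμR, hμG⟩ := exists_measure_integral_inv_one_sub_eq hρ
    (hGd.diffContOnCl_ball (Metric.closedBall_subset_ball hρ1)) (by simp [hGdef])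
    fun ζ hζ => hGre ζ (Metric.closedBall_subset_ball hρ1 (Metric.sphere_subset_closedBall hζ))
  have hG : ∀ t ∈ Icc (0 : ℝ) 1, ∫ x, (1 - x * (t * z))⁻¹ ∂μ = G (t * z) := fun t ht =>
    hμG _ (by simpa using (htz t ht).2.trans_lt hzρ)
  have hC : ∀ t ∈ Icc (0 : ℝ) 1, ‖G (t * z)‖ ≤ 1 + C * t := by
    intro t ht
    have hkt : k * t < 1 := (mul_le_of_le_one_right hk0 ht.2).trans_lt hk1
    have hle : ‖∫ x, (1 - x * (t * z))⁻¹ ∂μ‖ ≤ (1 - k * t)⁻¹ * μ.real univ := by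
      refine norm_integral_le_of_norm_le_const ?_
      filter_upwards [hμR] with x hx
      rw [← binomialKernel_one, ← Real.rpow_neg_one]
      refine norm_binomialKernel_le zero_le_one hkt ?_
      rw [norm_mul, (htz t ht).1]
      calc ‖x‖ * (t * ‖z‖) ≤ ρ⁻¹ * (t * ‖z‖) :=
            mul_le_mul_of_nonneg_right hx (mul_nonneg ht.1 (norm_nonneg _))
        _ = k * t := by rw [hk]; ring
    rw [hG t ht, probReal_univ, mul_one] at hle
    refine hle.trans ?_
    rw [inv_le_iff_one_le_mul₀ (by linarith), hCdef]
    have h1k : 0 < 1 - k := by linarith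
    rw [div_mul_eq_mul_div, one_add_div h1k.ne', div_mul_eq_mul_div, one_le_div h1k]
    nlinarith [mul_nonneg (mul_nonneg (sq_nonneg k) ht.1) (sub_nonneg.2 ht.2)]
  obtain ⟨L, hL⟩ := (isCompact_closedBall (0 : ℂ) ‖z‖).exists_bound_of_continuousOn
    (hΦ'd.continuousOn.mono (Metric.closedBall_subset_ball hz1))
  have hL0 : 0 ≤ L := (norm_nonneg _).trans (hL 0 (by simp))
  have hΦL : ∀ t ∈ Icc (0 : ℝ) 1, ‖1 - Φ (t * z)‖ ≤ L * (t * Real.exp (C * (p + 1) * t)) := by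
    intro t ht
    have h := Convex.norm_image_sub_le_of_norm_deriv_le (f := Φ) (C := L) (x := 0) (y := t * z)
      (fun x hx => hΦd.differentiableAt
        (Metric.isOpen_ball.mem_nhds (Metric.closedBall_subset_ball hz1 hx)))
      hL (convex_closedBall 0 ‖z‖) (by simp) (by simpa using (htz t ht).2)
    rw [norm_sub_rev, ← hΦ0]
    refine h.trans ?_
    rw [sub_zero, (htz t ht).1]
    have he : 1 ≤ Real.exp (C * (p + 1) * t) :=
      Real.one_le_exp (mul_nonneg (by positivity) ht.1)
    have ht0 := ht.1
    gcongr
    exact hz1.le.trans he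
  have hut : ∀ t ∈ Icc (0 : ℝ) 1, ∀ u ∈ Icc (0 : ℝ) 1, u * t ∈ Icc (0 : ℝ) 1 :=
    fun t ht u hu => ⟨mul_nonneg hu.1 ht.1, mul_le_one₀ hu.2 ht.1 ht.2⟩
  have hcomp : ∀ t ∈ Icc (0 : ℝ) 1, ∀ {H : ℂ → ℂ}, ContinuousOn H (Metric.ball 0 1) →
      ContinuousOn (fun u : ℝ => H (((u * t : ℝ) : ℂ) * z)) (Icc 0 1) := fun t ht H hH =>
    hH.comp (by fun_prop) fun u hu => htz1 _ (hut t ht u hu)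
  have hΦGc := hΦd.continuousOn.mul hGd.continuousOn
  have hsum : ∀ t ∈ Icc (0 : ℝ) 1, ∀ u ∈ Icc (0 : ℝ) 1,
      Φ (((u * t : ℝ) : ℂ) * z) + (u / p) • (deriv Φ (((u * t : ℝ) : ℂ) * z) * (t * z)) =
      Φ (((u * t : ℝ) : ℂ) * z) * G (((u * t : ℝ) : ℂ) * z) := by
    intro t ht u hu
    have := hne _ (htz1 _ (hut t ht u hu))
    simp only [hGdef, real_smul, ofReal_div]
    field_simp
    push_cast
    ring
  have hΦi : ∀ t ∈ Icc (0 : ℝ) 1, IntervalIntegrable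
      (fun v : ℝ => Φ (((v ^ p⁻¹ * t : ℝ) : ℂ) * z) * G (((v ^ p⁻¹ * t : ℝ) : ℂ) * z))
      volume 0 1 := fun t ht =>
    ContinuousOn.intervalIntegrable_of_Icc zero_le_one ((hcomp t ht hΦGc).comp
      (Real.continuous_rpow_const (by positivity)).continuousOn fun v hv => rpow_inv_mem_Icc hp hv)
  have hΦfix : ∀ t ∈ Icc (0 : ℝ) 1, ∫ v in (0 : ℝ)..1,
      Φ (((v ^ p⁻¹ * t : ℝ) : ℂ) * z) * G (((v ^ p⁻¹ * t : ℝ) : ℂ) * z) = Φ (t * z) := by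
    intro t ht
    have key := integral_comp_rpow_inv hp (g := fun u : ℝ => Φ (((u * t : ℝ) : ℂ) * z))
      (g' := fun u : ℝ => deriv Φ (((u * t : ℝ) : ℂ) * z) * (t * z))
      (hcomp t ht hΦd.continuousOn) ?_ ((hcomp t ht hΦGc).congr (hsum t ht))
    · simp only [one_mul] at key
      rw [← key]
      refine intervalIntegral.integral_congr fun v hv => ?_
      rw [uIcc_of_le zero_le_one] at hv
      exact (hsum t ht _ (rpow_inv_mem_Icc hp hv)).symm
    · intro u hu
      have h1 : HasDerivAt (fun u : ℝ => ((u * t : ℝ) : ℂ) * z) (t * z) u := by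
        simpa using (((hasDerivAt_id u).mul_const t).ofReal_comp).mul_const z
      exact (hΦd.differentiableAt (Metric.isOpen_ball.mem_nhds
        (htz1 _ (hut t ht u (Ioo_subset_Icc_self hu))))).hasDerivAt.comp u h1
  choose ν hν hνR hνb using exists_measure_norm_integral_binomialKernel_sub_le hp
    (inv_nonneg.2 hρ.le) hk1 hμR hG hC hΦL hΦi hΦfix
  have hint : ∀ n, Integrable (Function.uncurry fun (t : ℝ) (w : ℂ) =>
      binomialKernel p (w * (t * z))) ((volume.restrict (Ioc 0 1)).prod (ν n)) := by
    intro n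
    have := hν n
    refine Integrable.of_bound (C := (1 - k) ^ (-p)) ?_ ?_
    · exact ((measurable_binomialKernel p).comp (by fun_prop)).aestronglyMeasurable
    · filter_upwards [Measure.quasiMeasurePreserving_fst.ae (ae_restrict_mem measurableSet_Ioc),
        Measure.quasiMeasurePreserving_snd.ae (hνR n)] with q hq1 hq2
      refine norm_binomialKernel_le hp.le hk1 ?_
      rw [norm_mul]
      exact mul_le_mul hq2 (htz _ (Ioc_subset_Icc_self hq1)).2 (norm_nonneg _)
        (inv_nonneg.2 hρ.le)
  have hnonneg : ∀ n, 0 ≤ (c * ((∫ t in (0 : ℝ)..1,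
      ∫ w, binomialKernel p (w * (t * z)) ∂(ν n)) + 1 / β)).re := by
    intro n
    have := hν n
    have hint' := (hint n).integral_prod_right
    have heq : c * ((∫ t in (0 : ℝ)..1, ∫ w, binomialKernel p (w * (t * z)) ∂(ν n)) + 1 / β) =
        ∫ w, c * ((∫ t in (0 : ℝ)..1, binomialKernel p (t * (w * z))) + 1 / β) ∂(ν n) := by
      simp only [intervalIntegral.integral_of_le (zero_le_one' ℝ)]
      rw [integral_integral_swap (hint n), integral_const_mul, integral_add _ (integrable_const _)]
      · simp [mul_left_comm]
      · simpa [mul_left_comm] using hint'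
    rw [heq]
    have hint2 : Integrable (fun w => c * ((∫ t in (0 : ℝ)..1, binomialKernel p (t * (w * z))) +
        1 / β)) (ν n) := by
      simp only [intervalIntegral.integral_of_le (zero_le_one' ℝ)]
      refine Integrable.const_mul (Integrable.add ?_ (integrable_const _)) c
      simpa [mul_left_comm] using hint'
    have hrei := reCLM.integral_comp_comm hint2
    simp only [reCLM_apply] at hrei
    rw [← hrei]
    refine integral_nonneg_of_ae ?_
    filter_upwards [hνR n] with w hw
    refine re_mul_integral_binomialKernel_nonneg hβ hc ?_
    rw [norm_mul]
    exact (mul_le_mul_of_nonneg_right hw (norm_nonneg _)).trans_lt hk1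
  have hΦint : IntervalIntegrable (fun t : ℝ => Φ (t * z)) volume 0 1 :=
    ContinuousOn.intervalIntegrable_of_Icc zero_le_one
      (hΦd.continuousOn.comp (by fun_prop) fun t ht => htz1 t ht)
  have htend : Filter.Tendsto (fun n => ∫ t in (0 : ℝ)..1,
      ∫ w, binomialKernel p (w * (t * z)) ∂(ν n)) Filter.atTop
      (nhds (∫ t in (0 : ℝ)..1, Φ (t * z))) := by
    rw [tendsto_iff_norm_sub_tendsto_zero]
    have hq : Filter.Tendsto (fun n : ℕ => L * (p / (p + 1)) ^ n *
        Real.exp (C * (p + 1))) Filter.atTop (nhds 0) := by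
      have := tendsto_pow_atTop_nhds_zero_of_lt_one (r := p / (p + 1)) (by positivity)
        (by rw [div_lt_one (by positivity)]; linarith)
      simpa using (this.const_mul L).mul_const (Real.exp (C * (p + 1)))
    refine squeeze_zero (fun _ => norm_nonneg _) (fun n => ?_) hq
    have := hν n
    rw [← intervalIntegral.integral_sub _ hΦint]
    · refine (intervalIntegral.norm_integral_le_of_norm_le_const
        (C := L * (p / (p + 1)) ^ n * Real.exp (C * (p + 1))) fun t ht => ?_).trans (by simp)
      rw [uIoc_of_le zero_le_one] at ht
      have ht' := Ioc_subset_Icc_self ht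
      refine (hνb n t ht').trans ?_
      gcongr
      calc t * Real.exp (C * (p + 1) * t) ≤ 1 * Real.exp (C * (p + 1) * 1) := by
            gcongr
            · exact ht.2
            · exact ht.2
        _ = _ := by simp
    · rw [intervalIntegrable_iff_integrableOn_Ioc_of_le zero_le_one]
      exact (hint n).integral_prod_left
  exact ge_of_tendsto' ((continuous_re.tendsto _).comp
    ((htend.add_const (1 / (β : ℂ))).const_mul c)) hnonneg

lemma re_exp_mul_cpow_nonneg {β θ : ℝ} (hβ : 0 ≤ β) (hθ : |θ| + β * (Real.pi / 2) ≤ Real.pi / 2)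
    {w : ℂ} (hw : 0 < w.re) : 0 ≤ (exp (θ * I) * w ^ (β : ℂ)).re := by
  have hw0 : w ≠ 0 := by rintro rfl; simp at hw
  have harg : |arg w| ≤ Real.pi / 2 := abs_arg_le_pi_div_two_iff.2 hw.le
  have hsum : |θ + arg w * β| ≤ Real.pi / 2 := by
    refine (abs_add_le _ _).trans (le_trans ?_ hθ)
    rw [abs_mul, abs_of_nonneg hβ, mul_comm β]
    gcongr
  rw [cpow_def_of_ne_zero hw0, ← exp_add, exp_re]
  refine mul_nonneg (Real.exp_pos _).le (Real.cos_nonneg_of_mem_Icc ?_)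
  simpa [log_im] using abs_le.1 hsum

lemma dslope_zero_eq_integral_deriv {f : ℂ → ℂ} (hf : DifferentiableOn ℂ f (Metric.ball 0 1))
    {z : ℂ} (hz : z ∈ Metric.ball (0 : ℂ) 1) :
    dslope f 0 z = ∫ t in (0 : ℝ)..1, deriv f (t * z) := by
  rcases eq_or_ne z 0 with rfl | hz0
  · simp
  have hmem : ∀ t ∈ uIcc (0 : ℝ) 1, (t : ℂ) * z ∈ Metric.ball (0 : ℂ) 1 := by
    intro t ht
    rw [uIcc_of_le zero_le_one] at ht
    rw [mem_ball_zero_iff] at hz ⊢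
    rw [norm_mul, norm_real, Real.norm_of_nonneg ht.1]
    exact (mul_le_of_le_one_left (norm_nonneg _) ht.2).trans_lt hz
  have hd : ∀ t ∈ uIcc (0 : ℝ) 1,
      HasDerivAt (fun t : ℝ => f (t * z)) (deriv f (t * z) * z) t := by
    intro t ht
    refine (hf.differentiableAt (Metric.isOpen_ball.mem_nhds (hmem t ht))).hasDerivAt.comp t ?_
    simpa using (hasDerivAt_id t).ofReal_comp.mul_const z
  have hc : ContinuousOn (fun t : ℝ => deriv f (t * z) * z) (uIcc 0 1) :=
    ((hf.deriv Metric.isOpen_ball).continuousOn.comp (by fun_prop) hmem).mul continuousOn_const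
  have h := intervalIntegral.integral_eq_sub_of_hasDerivAt hd hc.intervalIntegrable
  rw [intervalIntegral.integral_mul_const] at h
  rw [dslope_of_ne _ hz0, slope_def_field, sub_zero, div_eq_iff hz0, h]
  simp

/-- A holomorphic function on the unit disk with nonnegative real part everywhere and positive
real part at the origin has positive real part everywhere. -/
lemma re_pos_of_re_nonneg_of_re_zero_pos {g : ℂ → ℂ}
    (hg : DifferentiableOn ℂ g (Metric.ball 0 1))
    (hnonneg : ∀ z ∈ Metric.ball (0 : ℂ) 1, 0 ≤ (g z).re) (h0 : 0 < (g 0).re)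
    {z : ℂ} (hz : z ∈ Metric.ball (0 : ℂ) 1) : 0 < (g z).re := by
  refine (hnonneg z hz).lt_of_ne' fun hz0 => ?_
  have hmax : IsMaxOn (norm ∘ fun w => exp (-g w)) (Metric.ball 0 1) z := by
    intro w hw
    simpa [norm_exp, hz0] using hnonneg w hw
  have h := norm_eqOn_of_isPreconnected_of_isMaxOn
    (convex_ball (0 : ℂ) 1).isPreconnected Metric.isOpen_ball hg.neg.cexp hz hmax
    (Metric.mem_ball_self one_pos)
  simp only [Function.comp_apply, Function.const_apply, norm_exp] at h
  have h' : -(g 0).re = -(g z).re := Real.exp_injective h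
  linarith

lemma re_exp_mul_dslope_pos {α θ : ℝ} (hα0 : 0 < α) (hα1 : α < 1 / 2) (hθ : |θ| = Real.pi * α)
    {f : ℂ → ℂ} (hf : IsConvexOfOrder α f) {z : ℂ} (hz : z ∈ unitDisk) :
    0 < (exp (θ * I) * (dslope f 0 z + 1 / (1 - 2 * α : ℝ))).re := by
  obtain ⟨hd, -, hf1, hre⟩ := hf
  have hβ : 0 < 1 - 2 * α := by linarith
  have hcos : 0 < Real.cos θ := by
    rw [← Real.cos_abs, hθ]
    refine Real.cos_pos_of_mem_Ioo ⟨?_, ?_⟩ <;> nlinarith [Real.pi_pos]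
  have hdisk : unitDisk = Metric.ball 0 1 := rfl
  rw [hdisk] at *
  have hdslope : DifferentiableOn ℂ (dslope f 0) (Metric.ball 0 1) :=
    (differentiableOn_dslope (Metric.ball_mem_nhds 0 one_pos)).2 hd
  refine re_pos_of_re_nonneg_of_re_zero_pos
    (g := fun z => exp (θ * I) * (dslope f 0 z + 1 / (1 - 2 * α : ℝ)))
    ((hdslope.add_const _).const_mul _) (fun w hw => ?_) ?_ hz
  · simp only [dslope_zero_eq_integral_deriv hd hw]
    refine re_mul_integral_nonneg hβ
      (fun v hv => re_exp_mul_cpow_nonneg hβ.le (by rw [hθ]; linarith) hv)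
      (hd.deriv Metric.isOpen_ball) hf1 (fun ζ hζ => (hre ζ hζ).1) (fun ζ hζ => ?_) hw
    have := (hre ζ hζ).2
    rw [add_re, one_re] at this
    linarith
  · have : (1 : ℂ) + 1 / (1 - 2 * α : ℝ) = ((1 + 1 / (1 - 2 * α) : ℝ) : ℂ) := by push_cast; rfl
    simp only [dslope_same, hf1]
    rw [this, re_mul_ofReal, exp_ofReal_mul_I_re]
    positivity

end

/-- for `0 < α < 1/2` and `f ∈ K(α)`, the values of `f(z)/z` lie in the sector
`|v| < cot(πα)(u - 1/(2α-1))`. -/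
theorem sector_of_convexOfOrder (α : ℝ) (hα0 : 0 < α) (hα1 : α < 1 / 2)
    (f : ℂ → ℂ) (hf : IsConvexOfOrder α f) :
    ∀ z ∈ unitDisk, z ≠ 0 →
      |(f z / z).im| < Real.cot (Real.pi * α) * ((f z / z).re - 1 / (2 * α - 1)) := by
  intro z hz hz0
  have hdslope : dslope f 0 z = f z / z := by
    rw [dslope_of_ne _ hz0, slope_def_field, hf.2.1, sub_zero, sub_zero]
  have hpos : 0 ≤ Real.pi * α := by positivity
  have hsin : 0 < Real.sin (Real.pi * α) :=
    Real.sin_pos_of_pos_of_lt_pi (by positivity) (by nlinarith [Real.pi_pos])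
  have h1 := re_exp_mul_dslope_pos hα0 hα1 (abs_of_nonneg hpos) hf hz
  have h2 := re_exp_mul_dslope_pos (θ := -(Real.pi * α)) hα0 hα1
    (by rw [abs_neg, abs_of_nonneg hpos]) hf hz
  have hinv : (1 : ℝ) / (2 * α - 1) = -(1 / (1 - 2 * α)) := by
    rw [← neg_sub, one_div_neg_eq_neg_one_div]
  have hcast : (1 : ℂ) / (1 - 2 * α : ℝ) = ((1 / (1 - 2 * α) : ℝ) : ℂ) := by push_cast; rfl
  rw [hdslope, hcast, Complex.mul_re, Complex.exp_ofReal_mul_I_re, Complex.exp_ofReal_mul_I_im,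
    Complex.add_re, Complex.add_im, Complex.ofReal_re, Complex.ofReal_im, add_zero] at h1 h2
  rw [Real.cos_neg, Real.sin_neg] at h2
  rw [hinv, sub_neg_eq_add, Real.cot_eq_cos_div_sin, div_mul_eq_mul_div, lt_div_iff₀ hsin]
  rcases abs_cases (f z / z).im with ⟨h, -⟩ | ⟨h, -⟩ <;> rw [h] <;> linarith
end

section
/- Let 1/2 ≤ α < 1 and f ∈ K(α). Define M(α) = sup_{0<θ<π} Im(e^{−iθ}·k_α(e^{iθ})), where k_α extends analytically to the unit circle minus the point 1. Then |Im(f(z)/z)| < M(α) for all z ∈ 𝔻 \ {0}, and M(α) ≤ M(1/2) = π/2. -/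
/-- `M(α) = sup_{0<θ<π} Im (e^{-iθ} k_α(e^{iθ}))`. -/
noncomputable def Mconst (α : ℝ) : ℝ :=
  sSup {y : ℝ | ∃ θ ∈ Set.Ioo (0 : ℝ) Real.pi,
    y = (Complex.exp (-(θ : ℂ) * Complex.I) * kfun α (Complex.exp ((θ : ℂ) * Complex.I))).im}

section

open MeasureTheory Metric Set

/-- The integral of a function valued in a closed convex set against a probability density. -/
lemma Convex.integral_density_smul_mem {X E : Type*} [MeasurableSpace X] {μ : Measure X}
    [NormedAddCommGroup E] [NormedSpace ℝ E] [CompleteSpace E] {s : Set E} (hs : Convex ℝ s)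
    (hsc : IsClosed s) {w : X → ℝ} (hwm : Measurable w) (hw0 : ∀ᵐ x ∂μ, 0 ≤ w x)
    (hwi : Integrable w μ) (hw1 : ∫ x, w x ∂μ = 1) {g : X → E} (hg : ∀ᵐ x ∂μ, g x ∈ s)
    (hgi : Integrable (fun x ↦ w x • g x) μ) : ∫ x, w x • g x ∂μ ∈ s := by
  set d : X → ENNReal := fun x ↦ ENNReal.ofReal (w x)
  have hd : Measurable d := hwm.ennreal_ofReal
  have htop : ∀ᵐ x ∂μ, d x < ⊤ := ae_of_all _ fun x ↦ ENNReal.ofReal_lt_top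
  have hcongr : (fun x ↦ (d x).toReal • g x) =ᵐ[μ] fun x ↦ w x • g x := by
    filter_upwards [hw0] with x hx
    simp [d, ENNReal.toReal_ofReal hx]
  have : IsProbabilityMeasure (μ.withDensity d) := ⟨by
    rw [withDensity_apply _ MeasurableSet.univ, Measure.restrict_univ,
      ← ofReal_integral_eq_lintegral_ofReal hwi hw0, hw1, ENNReal.ofReal_one]⟩
  rw [← integral_congr_ae hcongr, ← integral_withDensity_eq_integral_toReal_smul hd htop]
  refine hs.integral_mem hsc ((withDensity_absolutelyContinuous μ d).ae_le hg) ?_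
  rw [integrable_withDensity_iff_integrable_smul' hd htop]
  exact hgi.congr hcongr.symm

/-- A continuous function on the open unit disk, evaluated at the points `z * c x` with
`‖c x‖ ≤ 1`, is integrable against any integrable weight. -/
lemma integrable_weight_smul_comp {X : Type*} [MeasurableSpace X] {μ : Measure X} {w : X → ℝ}
    (hw : Integrable w μ) {c : X → ℂ} (hc : Measurable c) (hc1 : ∀ᵐ x ∂μ, ‖c x‖ ≤ 1)
    {h : ℂ → ℂ} (hh : ContinuousOn h (ball 0 1)) {z : ℂ} (hz : ‖z‖ < 1) :
    Integrable (fun x ↦ w x • h (z * c x)) μ := by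
  have hsub : closedBall (0 : ℂ) ‖z‖ ⊆ ball 0 1 := closedBall_subset_ball hz
  have hmem : ∀ᵐ x ∂μ, z * c x ∈ closedBall (0 : ℂ) ‖z‖ := by
    filter_upwards [hc1] with x hx
    simpa using mul_le_of_le_one_right (norm_nonneg z) hx
  obtain ⟨K, hK⟩ := (isCompact_closedBall (0 : ℂ) ‖z‖).exists_bound_of_continuousOn (hh.mono hsub)
  have hmeas : Measurable ((closedBall (0 : ℂ) ‖z‖).indicator h) := by
    classical
    rw [← Set.piecewise_eq_indicator]
    exact (hh.mono hsub).measurable_piecewise continuousOn_const measurableSet_closedBall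
  refine hw.smul_bdd K ?_ (hmem.mono fun x hx ↦ hK _ hx)
  refine (hmeas.comp (hc.const_mul z)).aestronglyMeasurable.congr ?_
  filter_upwards [hmem] with x hx
  simp only [Function.comp_apply, Set.indicator_of_mem hx]

/-- Differentiation under the integral sign for `z ↦ ∫ w(x) h(z c(x))`. -/
lemma hasDerivAt_integral_weight_smul_comp {X : Type*} [MeasurableSpace X] {μ : Measure X}
    {w : X → ℝ} (hw : Integrable w μ) {c : X → ℂ} (hc : Measurable c)
    (hc1 : ∀ᵐ x ∂μ, ‖c x‖ ≤ 1) {h h' : ℂ → ℂ} (hh : ∀ u ∈ ball (0 : ℂ) 1, HasDerivAt h (h' u) u)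
    (hh' : ContinuousOn h' (ball 0 1)) {z : ℂ} (hz : ‖z‖ < 1) :
    HasDerivAt (fun z ↦ ∫ x, w x • h (z * c x) ∂μ) (∫ x, w x • (c x * h' (z * c x)) ∂μ) z := by
  have hcont : ContinuousOn h (ball 0 1) := fun u hu ↦ (hh u hu).continuousAt.continuousWithinAt
  obtain ⟨R, hzR, hR1⟩ := exists_between hz
  have hR0 : 0 ≤ R := (norm_nonneg z).trans hzR.le
  obtain ⟨K, hK⟩ := (isCompact_closedBall (0 : ℂ) R).exists_bound_of_continuousOn
    (hh'.mono (closedBall_subset_ball hR1))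
  have hmem : ∀ᵐ x ∂μ, ∀ ζ ∈ ball (0 : ℂ) R, z * c x ∈ ball (0 : ℂ) 1 ∧
      ζ * c x ∈ closedBall (0 : ℂ) R := by
    filter_upwards [hc1] with x hx ζ hζ
    simp only [mem_ball_zero_iff, mem_closedBall_zero_iff, norm_mul] at hζ ⊢
    exact ⟨(mul_le_of_le_one_right (norm_nonneg z) hx).trans_lt hz,
      (mul_le_of_le_one_right (norm_nonneg ζ) hx).trans hζ.le⟩
  have hint' := integrable_weight_smul_comp hw hc hc1 hh' hz
  refine (hasDerivAt_integral_of_dominated_loc_of_deriv_le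
    (F := fun z x ↦ w x • h (z * c x)) (F' := fun z x ↦ w x • (c x * h' (z * c x)))
    (bound := fun x ↦ ‖w x‖ * K)
    (isOpen_ball.mem_nhds (mem_ball_zero_iff.2 hzR)) ?_ ?_ ?_ ?_ ?_ ?_).2
  · filter_upwards [isOpen_ball.mem_nhds (mem_ball_zero_iff.2 hz)] with ζ hζ
    exact (integrable_weight_smul_comp hw hc hc1 hcont
      (mem_ball_zero_iff.1 hζ)).aestronglyMeasurable
  · exact integrable_weight_smul_comp hw hc hc1 hcont hz
  · refine (hc.aestronglyMeasurable.mul hint'.aestronglyMeasurable).congr (ae_of_all _ fun x ↦ ?_)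
    simp [mul_left_comm]
  · filter_upwards [hmem, hc1] with x hx hx1 ζ hζ
    rw [norm_smul, norm_mul]
    gcongr
    calc ‖c x‖ * ‖h' (ζ * c x)‖ ≤ 1 * ‖h' (ζ * c x)‖ := by gcongr
      _ ≤ K := by simpa using hK _ (hx ζ hζ).2
  · exact hw.norm.mul_const K
  · filter_upwards [hmem] with x hx ζ hζ
    have h1 := hh (ζ * c x) (closedBall_subset_ball hR1 (hx ζ hζ).2)
    have h2 := h1.comp ζ ((hasDerivAt_id ζ).mul_const (c x))
    simpa [Function.comp_def, mul_comm] using h2.fun_const_smul (w x)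

/-- The power `(1 - u) ^ (-q)`, in exponential form. -/
noncomputable def powKernel (q : ℝ) (u : ℂ) : ℂ := Complex.exp (-(q : ℂ) * Complex.log (1 - u))

lemma one_sub_mem_slitPlane_s4 {u : ℂ} (hu : u ∈ ball (0 : ℂ) 1) : 1 - u ∈ Complex.slitPlane := by
  rw [sub_eq_add_neg]
  exact Complex.mem_slitPlane_of_norm_lt_one (by simpa using hu)

lemma powKernel_zero_right (q : ℝ) : powKernel q 0 = 1 := by simp [powKernel]

lemma powKernel_mul (q₁ q₂ : ℝ) (u : ℂ) :
    powKernel q₁ u * powKernel q₂ u = powKernel (q₁ + q₂) u := by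
  rw [powKernel, powKernel, powKernel, ← Complex.exp_add]
  congr 1
  push_cast
  ring

lemma powKernel_add_one_mul (q : ℝ) {u : ℂ} (hu : u ≠ 1) :
    powKernel (q + 1) u * (1 - u) = powKernel q u := by
  have h : 1 - u = powKernel (-1) u := by
    simp [powKernel, Complex.exp_log (sub_ne_zero.2 hu.symm)]
  rw [h]
  rw [powKernel_mul]
  congr 1
  ring

lemma hasDerivAt_powKernel (q : ℝ) {u : ℂ} (hu : 1 - u ∈ Complex.slitPlane) :
    HasDerivAt (powKernel q) (q * powKernel (q + 1) u) u := by
  have hne : u ≠ 1 := fun h ↦ by simp [h] at hu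
  have h := ((((hasDerivAt_id u).const_sub 1).clog hu).const_mul (-(q : ℂ))).cexp
  refine h.congr_deriv ?_
  have h1 : (1 - u) ≠ 0 := sub_ne_zero.2 hne.symm
  have := powKernel_add_one_mul q hne
  rw [powKernel] at this ⊢
  simp only [id]
  rw [← powKernel, ← powKernel] at *
  rw [← this]
  field_simp

lemma continuousOn_powKernel (q : ℝ) : ContinuousOn (powKernel q) (ball 0 1) := fun _ hu ↦
  (hasDerivAt_powKernel q (one_sub_mem_slitPlane_s4 hu)).continuousAt.continuousWithinAt

/-- The unnormalised density of the beta distribution. -/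
noncomputable def betaWeight (q₁ q₂ s : ℝ) : ℝ := s ^ (q₁ - 1) * (1 - s) ^ (q₂ - 1)

lemma measurable_betaWeight (q₁ q₂ : ℝ) : Measurable (betaWeight q₁ q₂) := by
  unfold betaWeight
  fun_prop

lemma integrable_betaWeight {q₁ q₂ : ℝ} (h₁ : 0 < q₁) (h₂ : 0 < q₂) :
    Integrable (betaWeight q₁ q₂) (volume.restrict (Ioc 0 1)) := by
  have h := (Complex.betaIntegral_convergent (u := q₁) (v := q₂) (by simpa) (by simpa)).1.re
  refine h.congr ?_
  filter_upwards [ae_restrict_mem measurableSet_Ioc] with s hs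
  have e : ((s : ℂ) ^ ((q₁ : ℂ) - 1) * (1 - (s : ℂ)) ^ ((q₂ : ℂ) - 1)) =
      ((betaWeight q₁ q₂ s : ℝ) : ℂ) := by
    rw [betaWeight, Complex.ofReal_mul, Complex.ofReal_cpow hs.1.le,
      Complex.ofReal_cpow (sub_nonneg.2 hs.2)]
    push_cast
    rfl
  simp [e]

lemma betaWeight_pos (q₁ q₂ : ℝ) {s : ℝ} (hs : s ∈ Ioo (0 : ℝ) 1) : 0 < betaWeight q₁ q₂ s :=
  mul_pos (Real.rpow_pos_of_pos hs.1 _) (Real.rpow_pos_of_pos (sub_pos.2 hs.2) _)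

lemma betaWeight_nonneg (q₁ q₂ : ℝ) {s : ℝ} (hs : s ∈ Ioc (0 : ℝ) 1) : 0 ≤ betaWeight q₁ q₂ s :=
  mul_nonneg (Real.rpow_nonneg hs.1.le _) (Real.rpow_nonneg (sub_nonneg.2 hs.2) _)

lemma integral_betaWeight_pos {q₁ q₂ : ℝ} (h₁ : 0 < q₁) (h₂ : 0 < q₂) :
    0 < ∫ s in Ioc 0 1, betaWeight q₁ q₂ s := by
  rw [← intervalIntegral.integral_of_le zero_le_one]
  exact intervalIntegral.intervalIntegral_pos_of_pos_on
    ((intervalIntegrable_iff_integrableOn_Ioc_of_le zero_le_one).2 (integrable_betaWeight h₁ h₂))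
    (fun s hs ↦ betaWeight_pos q₁ q₂ hs) zero_lt_one

lemma norm_convexComb_le_one {a b : ℂ} (ha : ‖a‖ ≤ 1) (hb : ‖b‖ ≤ 1) {s : ℝ} (hs0 : 0 ≤ s)
    (hs1 : s ≤ 1) : ‖(s : ℂ) * a + (1 - s) * b‖ ≤ 1 := by
  have h := (convex_closedBall (0 : ℂ) 1) (mem_closedBall_zero_iff.2 ha)
    (mem_closedBall_zero_iff.2 hb) hs0 (sub_nonneg.2 hs1) (by ring)
  simpa [Complex.real_smul] using h

/-- The derivative in `s` of `s^q₁ (1-s)^q₂ (1 - z c(s))^(-q₁-q₂)`, `c(s) = s a + (1-s) b`. -/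
lemma hasDerivAt_beta_powKernel (q₁ q₂ : ℝ) {a b z : ℂ} (ha : ‖a‖ ≤ 1) (hb : ‖b‖ ≤ 1)
    (hz : ‖z‖ < 1) {s : ℝ} (hs : s ∈ Ioo (0 : ℝ) 1) :
    HasDerivAt (fun s : ℝ ↦ ((s ^ q₁ * (1 - s) ^ q₂ : ℝ) : ℂ) *
        powKernel (q₁ + q₂) (z * (s * a + (1 - s) * b)))
      (q₁ * (1 - z * b) * ((1 - s) * betaWeight q₁ q₂ s) • powKernel (q₁ + q₂ + 1)
          (z * (s * a + (1 - s) * b)) -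
        q₂ * (1 - z * a) * (s * betaWeight q₁ q₂ s) • powKernel (q₁ + q₂ + 1)
          (z * (s * a + (1 - s) * b))) s := by
  have hs1 : 0 < 1 - s := sub_pos.2 hs.2
  have hu : z * (s * a + (1 - s) * b) ∈ ball (0 : ℂ) 1 := by
    rw [mem_ball_zero_iff, norm_mul]
    exact (mul_le_of_le_one_right (norm_nonneg z)
      (norm_convexComb_le_one ha hb hs.1.le hs.2.le)).trans_lt hz
  have hd1 : HasDerivAt (fun s : ℝ ↦ s ^ q₁ * (1 - s) ^ q₂)
      (q₁ * s ^ (q₁ - 1) * (1 - s) ^ q₂ + s ^ q₁ * (-1 * q₂ * (1 - s) ^ (q₂ - 1))) s :=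
    (Real.hasDerivAt_rpow_const (Or.inl hs.1.ne')).mul
      (((hasDerivAt_id s).const_sub 1).rpow_const (Or.inl hs1.ne'))
  have hc : HasDerivAt (fun s : ℝ ↦ z * ((s : ℂ) * a + (1 - s) * b)) (z * (1 * a + (-1) * b)) s :=
    ((((hasDerivAt_id (s : ℂ)).comp_ofReal).mul_const a).add
      ((((hasDerivAt_id (s : ℂ)).comp_ofReal).const_sub 1).mul_const b)).const_mul z
  have hd2 := (hasDerivAt_powKernel (q₁ + q₂) (one_sub_mem_slitPlane_s4 hu)).comp s hc
  refine (hd1.ofReal_comp.mul hd2).congr_deriv ?_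
  have e1 : s ^ q₁ = s ^ (q₁ - 1) * s := by
    rw [← Real.rpow_add_one hs.1.ne', sub_add_cancel]
  have e2 : (1 - s) ^ q₂ = (1 - s) ^ (q₂ - 1) * (1 - s) := by
    rw [← Real.rpow_add_one hs1.ne', sub_add_cancel]
  have hne : z * ((s : ℂ) * a + (1 - s) * b) ≠ 1 := fun h ↦ by simp [h] at hu
  simp only [Function.comp_apply]
  rw [← powKernel_add_one_mul (q₁ + q₂) hne, e1, e2, betaWeight]
  simp only [Complex.real_smul]
  push_cast
  ring

/-- Feynman's formula: `(1 - za)^(-q₁) (1 - zb)^(-q₂)` is a beta average of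
`(1 - z(sa + (1-s)b))^(-q₁-q₂)`. -/
lemma integral_betaWeight_smul_powKernel {q₁ q₂ : ℝ} (h₁ : 0 < q₁) (h₂ : 0 < q₂) {a b z : ℂ}
    (ha : ‖a‖ ≤ 1) (hb : ‖b‖ ≤ 1) (hz : ‖z‖ < 1) :
    ∫ s in Ioc 0 1, betaWeight q₁ q₂ s • powKernel (q₁ + q₂) (z * (s * a + (1 - s) * b)) =
      (∫ s in Ioc 0 1, betaWeight q₁ q₂ s) • (powKernel q₁ (z * a) * powKernel q₂ (z * b)) := by
  set p := q₁ + q₂ with hp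
  set μ : Measure ℝ := volume.restrict (Ioc 0 1)
  set W := betaWeight q₁ q₂
  set c : ℝ → ℂ := fun s ↦ s * a + (1 - s) * b with hcdef
  have hcm : Measurable c := by fun_prop
  have hc1 : ∀ᵐ s ∂μ, ‖c s‖ ≤ 1 := by
    filter_upwards [ae_restrict_mem measurableSet_Ioc] with s hs
    exact norm_convexComb_le_one ha hb hs.1.le hs.2
  have hW : Integrable W μ := integrable_betaWeight h₁ h₂
  have hIoc : ∀ᵐ s ∂μ, ‖s‖ ≤ 1 ∧ ‖1 - s‖ ≤ 1 := by
    filter_upwards [ae_restrict_mem measurableSet_Ioc] with s hs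
    simp only [Real.norm_eq_abs, abs_le]
    constructor <;> constructor <;> linarith [hs.1, hs.2]
  have hW1 : Integrable (fun s ↦ s * W s) μ :=
    hW.bdd_mul measurable_id.aestronglyMeasurable (hIoc.mono fun _ h ↦ h.1)
  have hW2 : Integrable (fun s ↦ (1 - s) * W s) μ :=
    hW.bdd_mul (by fun_prop) (hIoc.mono fun _ h ↦ h.2)
  have hmemball : ∀ {ζ e : ℂ}, ‖ζ‖ < 1 → ‖e‖ ≤ 1 → ζ * e ∈ ball (0 : ℂ) 1 := fun {ζ e} h h' ↦ by
    rw [mem_ball_zero_iff, norm_mul]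
    exact (mul_le_of_le_one_right (norm_nonneg ζ) h').trans_lt h
  have hne : ∀ {u : ℂ}, u ∈ ball (0 : ℂ) 1 → u ≠ 1 := fun {u} hu h ↦ by simp [h] at hu
  set I : ℂ → ℂ := fun z ↦ ∫ s, W s • powKernel p (z * c s) ∂μ
  set J₁ : ℂ → ℂ := fun z ↦ ∫ s, (s * W s) • powKernel (p + 1) (z * c s) ∂μ
  set J₂ : ℂ → ℂ := fun z ↦ ∫ s, ((1 - s) * W s) • powKernel (p + 1) (z * c s) ∂μ
  have i₁ : ∀ ζ : ℂ, ‖ζ‖ < 1 →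
      Integrable (fun s ↦ (s * W s) • powKernel (p + 1) (ζ * c s)) μ := fun ζ hζ ↦
    integrable_weight_smul_comp hW1 hcm hc1 (continuousOn_powKernel _) hζ
  have i₂ : ∀ ζ : ℂ, ‖ζ‖ < 1 →
      Integrable (fun s ↦ ((1 - s) * W s) • powKernel (p + 1) (ζ * c s)) μ := fun ζ hζ ↦
    integrable_weight_smul_comp hW2 hcm hc1 (continuousOn_powKernel _) hζ
  have hI : ∀ ζ : ℂ, ‖ζ‖ < 1 → I ζ = (1 - ζ * a) * J₁ ζ + (1 - ζ * b) * J₂ ζ := fun ζ hζ ↦ by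
    simp only [I, J₁, J₂]
    rw [← integral_const_mul, ← integral_const_mul,
      ← integral_add ((i₁ ζ hζ).const_mul _) ((i₂ ζ hζ).const_mul _)]
    refine integral_congr_ae ?_
    filter_upwards [hc1] with s hs
    rw [← powKernel_add_one_mul p (hne (hmemball hζ hs))]
    simp only [hcdef, Complex.real_smul]
    push_cast
    ring
  have hI' : ∀ ζ : ℂ, ‖ζ‖ < 1 → HasDerivAt I (p * (a * J₁ ζ + b * J₂ ζ)) ζ := fun ζ hζ ↦ by
    have h := hasDerivAt_integral_weight_smul_comp hW hcm hc1
      (fun u hu ↦ hasDerivAt_powKernel p (one_sub_mem_slitPlane_s4 hu))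
      ((continuousOn_powKernel (p + 1)).const_mul _) hζ
    refine h.congr_deriv ?_
    simp only [J₁, J₂]
    rw [← integral_const_mul, ← integral_const_mul,
      ← integral_add ((i₁ ζ hζ).const_mul _) ((i₂ ζ hζ).const_mul _), ← integral_const_mul]
    congr 1 with s
    simp only [hcdef, Complex.real_smul]
    push_cast
    ring
  have hJ : ∀ ζ : ℂ, ‖ζ‖ < 1 → q₁ * (1 - ζ * b) * J₂ ζ = q₂ * (1 - ζ * a) * J₁ ζ := fun ζ hζ ↦ by
    have hint := ((i₂ ζ hζ).const_mul (q₁ * (1 - ζ * b))).sub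
      ((i₁ ζ hζ).const_mul (q₂ * (1 - ζ * a)))
    have h := intervalIntegral.integral_eq_sub_of_hasDerivAt_of_le zero_le_one
      (f := fun s : ℝ ↦ ((s ^ q₁ * (1 - s) ^ q₂ : ℝ) : ℂ) *
        powKernel (q₁ + q₂) (ζ * (s * a + (1 - s) * b))) ?_
      (fun s hs ↦ hasDerivAt_beta_powKernel q₁ q₂ ha hb hζ hs)
      ((intervalIntegrable_iff_integrableOn_Ioc_of_le zero_le_one).2 hint)
    · rw [intervalIntegral.integral_of_le zero_le_one, integral_sub
        ((i₂ ζ hζ).const_mul (q₁ * (1 - ζ * b))) ((i₁ ζ hζ).const_mul (q₂ * (1 - ζ * a))),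
        integral_const_mul, integral_const_mul] at h
      refine sub_eq_zero.1 (h.trans ?_)
      simp [h₁.ne', h₂.ne']
    · refine ContinuousOn.mul (Continuous.continuousOn ?_) ?_
      · exact Complex.continuous_ofReal.comp ((Real.continuous_rpow_const h₁.le).mul
          ((Real.continuous_rpow_const h₂.le).comp (continuous_const.sub continuous_id)))
      · exact (continuousOn_powKernel _).comp (by fun_prop) fun s hs ↦
          hmemball hζ (norm_convexComb_le_one ha hb hs.1 hs.2)
  set y : ℂ → ℂ := fun ζ ↦ I ζ * (powKernel (-q₁) (ζ * a) * powKernel (-q₂) (ζ * b))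
  have hy : ∀ ζ ∈ ball (0 : ℂ) 1, HasDerivAt y 0 ζ := fun ζ hζ ↦ by
    have hζ1 := mem_ball_zero_iff.1 hζ
    have hA := hmemball hζ1 ha
    have hB := hmemball hζ1 hb
    have dA := (hasDerivAt_powKernel (-q₁) (one_sub_mem_slitPlane_s4 hA)).comp ζ
      ((hasDerivAt_id ζ).mul_const a)
    have dB := (hasDerivAt_powKernel (-q₂) (one_sub_mem_slitPlane_s4 hB)).comp ζ
      ((hasDerivAt_id ζ).mul_const b)
    refine ((hI' ζ hζ1).mul (dA.mul dB)).congr_deriv ?_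
    simp only [Function.comp_apply, Pi.mul_apply, id]
    rw [hI ζ hζ1, ← powKernel_add_one_mul (-q₁) (hne hA), ← powKernel_add_one_mul (-q₂) (hne hB),
      hp]
    push_cast
    linear_combination (powKernel (-q₁ + 1) (ζ * a) * powKernel (-q₂ + 1) (ζ * b)) *
      (a * (1 - ζ * b) - b * (1 - ζ * a)) * (-1) * hJ ζ hζ1
  have hconst := isOpen_ball.is_const_of_deriv_eq_zero (convex_ball (0 : ℂ) 1).isPreconnected
    (fun ζ hζ ↦ (hy ζ hζ).differentiableAt.differentiableWithinAt) (fun ζ hζ ↦ (hy ζ hζ).deriv)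
    (mem_ball_zero_iff.2 hz) (mem_ball_self zero_lt_one)
  have hy0 : y 0 = ((∫ s, W s ∂μ : ℝ) : ℂ) := by
    simp only [y, I, zero_mul, powKernel_zero_right, mul_one, Complex.real_smul]
    exact integral_ofReal
  have hinv : ∀ (q : ℝ) (u : ℂ), powKernel (-q) u * powKernel q u = 1 := fun q u ↦ by
    rw [powKernel_mul]
    simp [powKernel]
  rw [Complex.real_smul, ← hy0, ← hconst]
  change I z = I z * (powKernel (-q₁) (z * a) * powKernel (-q₂) (z * b)) *
    (powKernel q₁ (z * a) * powKernel q₂ (z * b))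
  linear_combination -I z * hinv q₁ (z * a) * (powKernel (-q₂) (z * b) * powKernel q₂ (z * b)) -
    I z * hinv q₂ (z * b)

lemma norm_mul_unitInterval_lt_one {z : ℂ} (hz : ‖z‖ < 1) (t : unitInterval) :
    ‖((t : ℝ) : ℂ) * z‖ < 1 := by
  rw [norm_mul, Complex.norm_real, Real.norm_of_nonneg t.2.1]
  exact (mul_le_of_le_one_left (norm_nonneg z) t.2.2).trans_lt hz

lemma mul_mem_unitBall {z w : ℂ} (hz : ‖z‖ < 1) (hw : ‖w‖ ≤ 1) : z * w ∈ ball (0 : ℂ) 1 := by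
  rw [mem_ball_zero_iff, norm_mul]
  exact (mul_le_of_le_one_right (norm_nonneg z) hw).trans_lt hz

/-- The curves `t ↦ -log (1 - t z w)`, `0 ≤ t ≤ 1`, depending continuously on `‖w‖ ≤ 1`. -/
noncomputable def logCurve {z : ℂ} (hz : ‖z‖ < 1) :
    C(closedBall (0 : ℂ) 1, C(unitInterval, ℂ)) :=
  ContinuousMap.curry
    ⟨fun x : closedBall (0 : ℂ) 1 × unitInterval ↦
        -Complex.log (1 - ((x.2 : ℝ) : ℂ) * z * (x.1 : ℂ)), by
      refine (Continuous.clog (by fun_prop) fun x ↦ ?_).neg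
      exact one_sub_mem_slitPlane_s4 (mul_mem_unitBall (norm_mul_unitInterval_lt_one hz x.2)
        (mem_closedBall_zero_iff.1 x.1.2))⟩

/-- Pointwise exponential of a continuous complex function on the unit interval. -/
noncomputable def expCurve (v : C(unitInterval, ℂ)) : C(unitInterval, ℂ) :=
  (⟨Complex.exp, Complex.continuous_exp⟩ : C(ℂ, ℂ)).comp v

lemma continuous_expCurve : Continuous expCurve := ContinuousMap.continuous_postcomp _

lemma expCurve_add (u v : C(unitInterval, ℂ)) :
    expCurve (u + v) = expCurve u * expCurve v := by
  ext t
  simp [expCurve, Complex.exp_add]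

lemma expCurve_smul_logCurve_apply {z : ℂ} (hz : ‖z‖ < 1) (q : ℝ) (w : closedBall (0 : ℂ) 1)
    (t : unitInterval) :
    expCurve (q • logCurve hz w) t = powKernel q (((t : ℝ) : ℂ) * z * w) := by
  simp [expCurve, logCurve, powKernel]

/-- The closed convex hull of the curves `t ↦ (1 - t z w)^(-q)`, `‖w‖ ≤ 1`. -/
noncomputable def powHull {z : ℂ} (hz : ‖z‖ < 1) (q : ℝ) : Set C(unitInterval, ℂ) :=
  closedConvexHull ℝ (range fun w ↦ expCurve (q • logCurve hz w))

lemma expCurve_smul_logCurve_mem_powHull {z : ℂ} (hz : ‖z‖ < 1) (q : ℝ)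
    (w : closedBall (0 : ℂ) 1) : expCurve (q • logCurve hz w) ∈ powHull hz q :=
  subset_closedConvexHull (mem_range_self w)

lemma convex_powHull {z : ℂ} (hz : ‖z‖ < 1) (q : ℝ) : Convex ℝ (powHull hz q) :=
  convex_closedConvexHull

lemma isClosed_powHull {z : ℂ} (hz : ‖z‖ < 1) (q : ℝ) : IsClosed (powHull hz q) :=
  isClosed_closedConvexHull

/-- The point `s a + (1 - s) b` of the closed unit disk, with `s` clamped to `[0, 1]`. -/
noncomputable def segmentPoint (a b : closedBall (0 : ℂ) 1) (s : ℝ) : closedBall (0 : ℂ) 1 :=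
  ⟨((projIcc 0 1 zero_le_one s : ℝ) : ℂ) * a + (1 - ((projIcc 0 1 zero_le_one s : ℝ) : ℂ)) * b,
    mem_closedBall_zero_iff.2 (norm_convexComb_le_one (mem_closedBall_zero_iff.1 a.2)
      (mem_closedBall_zero_iff.1 b.2) (projIcc 0 1 zero_le_one s).2.1
      (projIcc 0 1 zero_le_one s).2.2)⟩

lemma continuous_segmentPoint (a b : closedBall (0 : ℂ) 1) : Continuous (segmentPoint a b) := by
  have h : Continuous fun s : ℝ ↦ (projIcc (0 : ℝ) 1 zero_le_one s : ℝ) :=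
    continuous_subtype_val.comp continuous_projIcc
  unfold segmentPoint
  fun_prop

lemma integrable_smul_comp_of_compactSpace {X Y E : Type*} [MeasurableSpace X]
    [TopologicalSpace X] [OpensMeasurableSpace X] [SecondCountableTopology X]
    [TopologicalSpace Y] [CompactSpace Y]
    [NormedAddCommGroup E] [NormedSpace ℝ E] {μ : Measure X} {w : X → ℝ} (hw : Integrable w μ)
    {Φ : Y → E} (hΦ : Continuous Φ) {c : X → Y} (hc : Continuous c) :
    Integrable (fun x ↦ w x • Φ (c x)) μ := by
  obtain ⟨K, hK⟩ := (isCompact_univ (X := Y)).exists_bound_of_continuousOn hΦ.continuousOn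
  exact hw.smul_bdd K (hΦ.comp hc).aestronglyMeasurable
    (ae_of_all _ fun x ↦ hK (c x) (mem_univ _))

lemma expCurve_logCurve_mul_mem_powHull {z : ℂ} (hz : ‖z‖ < 1) {q₁ q₂ : ℝ} (h₁ : 0 < q₁)
    (h₂ : 0 < q₂) (a b : closedBall (0 : ℂ) 1) :
    expCurve (q₁ • logCurve hz a) * expCurve (q₂ • logCurve hz b) ∈ powHull hz (q₁ + q₂) := by
  set B := ∫ s in Ioc 0 1, betaWeight q₁ q₂ s with hB
  have hB0 : 0 < B := integral_betaWeight_pos h₁ h₂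
  set Φ : closedBall (0 : ℂ) 1 → C(unitInterval, ℂ) :=
    fun w ↦ expCurve ((q₁ + q₂) • logCurve hz w)
  have hΦ : Continuous Φ := continuous_expCurve.comp ((logCurve hz).continuous.fun_const_smul _)
  have hwi : Integrable (fun s ↦ B⁻¹ * betaWeight q₁ q₂ s) (volume.restrict (Ioc 0 1)) :=
    (integrable_betaWeight h₁ h₂).const_mul _
  have hgi := integrable_smul_comp_of_compactSpace hwi hΦ (continuous_segmentPoint a b)
  have hmem := (convex_powHull hz (q₁ + q₂)).integral_density_smul_mem (isClosed_powHull hz _)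
    ((measurable_betaWeight q₁ q₂).const_mul B⁻¹)
    (by
      filter_upwards [ae_restrict_mem measurableSet_Ioc] with s hs
      exact mul_nonneg (inv_nonneg.2 hB0.le) (betaWeight_nonneg q₁ q₂ hs))
    hwi (by rw [integral_const_mul, inv_mul_cancel₀ hB0.ne'])
    (ae_of_all _ fun s ↦ expCurve_smul_logCurve_mem_powHull hz (q₁ + q₂) (segmentPoint a b s)) hgi
  convert hmem using 1
  ext t
  rw [ContinuousMap.integral_apply hgi]
  have hF := integral_betaWeight_smul_powKernel h₁ h₂ (mem_closedBall_zero_iff.1 a.2)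
    (mem_closedBall_zero_iff.1 b.2) (norm_mul_unitInterval_lt_one hz t)
  rw [ContinuousMap.mul_apply, expCurve_smul_logCurve_apply, expCurve_smul_logCurve_apply]
  calc powKernel q₁ (((t : ℝ) : ℂ) * z * a) * powKernel q₂ (((t : ℝ) : ℂ) * z * b)
      = B⁻¹ • ∫ s in Ioc 0 1, betaWeight q₁ q₂ s •
          powKernel (q₁ + q₂) (((t : ℝ) : ℂ) * z * (s * a + (1 - s) * b)) := by
        rw [hF, smul_smul, inv_mul_cancel₀ hB0.ne', one_smul]
    _ = _ := by
        rw [← integral_smul]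
        refine setIntegral_congr_fun measurableSet_Ioc fun s hs ↦ ?_
        simp only [Φ, ContinuousMap.smul_apply, expCurve_smul_logCurve_apply, segmentPoint,
          projIcc_of_mem zero_le_one (Ioc_subset_Icc_self hs), smul_smul]

lemma mul_mem_powHull {z : ℂ} (hz : ‖z‖ < 1) {q₁ q₂ : ℝ} (h₁ : 0 < q₁) (h₂ : 0 < q₂)
    {F G : C(unitInterval, ℂ)} (hF : F ∈ powHull hz q₁) (hG : G ∈ powHull hz q₂) :
    F * G ∈ powHull hz (q₁ + q₂) := by
  have key : ∀ (a : closedBall (0 : ℂ) 1),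
      expCurve (q₁ • logCurve hz a) * G ∈ powHull hz (q₁ + q₂) := fun a ↦ by
    have hsub : powHull hz q₂ ⊆
        (LinearMap.mulLeft ℝ (expCurve (q₁ • logCurve hz a))) ⁻¹' powHull hz (q₁ + q₂) := by
      refine closedConvexHull_min ?_ ((convex_powHull hz _).linear_preimage _)
        ((isClosed_powHull hz _).preimage (continuous_const_mul _))
      rintro _ ⟨b, rfl⟩
      exact expCurve_logCurve_mul_mem_powHull hz h₁ h₂ a b
    exact hsub hG
  have hsub : powHull hz q₁ ⊆ (LinearMap.mulRight ℝ G) ⁻¹' powHull hz (q₁ + q₂) := by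
    refine closedConvexHull_min ?_ ((convex_powHull hz _).linear_preimage _)
      ((isClosed_powHull hz _).preimage (continuous_mul_const _))
    rintro _ ⟨a, rfl⟩
    exact key a
  exact hsub hF

/-- Exponentials of averages of the curves `t ↦ -log (1 - t z w)` belong to the hulls of powers. -/
lemma expCurve_smul_integral_mem_powHull {z : ℂ} (hz : ‖z‖ < 1) {p : ℝ} (hp : 0 < p)
    {μ : Measure ℝ} {w : ℝ → ℝ} (hwm : Measurable w) (hw0 : ∀ᵐ x ∂μ, 0 ≤ w x)
    (hwi : Integrable w μ) (hw1 : ∫ x, w x ∂μ = 1) {c : ℝ → closedBall (0 : ℂ) 1}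
    (hc : Continuous c) :
    expCurve (p • ∫ x, w x • logCurve hz (c x) ∂μ) ∈ powHull hz p := by
  set V : Set C(unitInterval, ℂ) := {v | ∀ q : ℝ, 0 < q → expCurve (q • v) ∈ powHull hz q}
  have hVclosed : IsClosed V := by
    simp only [V, ofPred_forall]
    exact isClosed_iInter fun q ↦ isClosed_iInter fun _ ↦ (isClosed_powHull hz q).preimage
      (continuous_expCurve.comp (continuous_const_smul q))
  have hVconvex : Convex ℝ V := by
    rw [convex_iff_forall_pos]
    intro u hu v hv a b ha hb hab q hq
    have h := mul_mem_powHull hz (mul_pos hq ha) (mul_pos hq hb) (hu _ (mul_pos hq ha))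
      (hv _ (mul_pos hq hb))
    rw [← expCurve_add, ← mul_add, hab, mul_one] at h
    have e : q • (a • u + b • v) = (q * a) • u + (q * b) • v := by
      ext t
      simp [mul_assoc]
    rwa [e]
  exact hVconvex.integral_density_smul_mem hVclosed hwm hw0 hwi hw1
    (ae_of_all _ fun x q _ ↦ expCurve_smul_logCurve_mem_powHull hz q (c x))
    (integrable_smul_comp_of_compactSpace hwi (logCurve hz).continuous hc) p hp

lemma circleAverage_herglotz_cauchy {g : ℂ → ℂ} (hg : DifferentiableOn ℂ g (closedBall 0 1))
    {z : ℂ} (hz : ‖z‖ < 1) :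
    Real.circleAverage (fun x ↦ (((1 + 2 * (x * g x).re : ℝ)) : ℂ) / (x - z)) 0 1 = g z := by
  have hsph : sphere (0 : ℂ) 1 ⊆ closedBall 0 1 := sphere_subset_closedBall
  have hne : ∀ x ∈ closedBall (0 : ℂ) 1, 1 - (starRingEnd ℂ) z * x ≠ 0 := fun x hx h ↦ by
    have h1 : ‖(starRingEnd ℂ) z * x‖ = 1 := by rw [← sub_eq_zero.1 h, norm_one]
    rw [norm_mul, Complex.norm_conj] at h1
    have := mul_le_of_le_one_right (norm_nonneg z) (mem_closedBall_zero_iff.1 hx)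
    linarith
  have hxz : ∀ x ∈ sphere (0 : ℂ) 1, x - z ≠ 0 := fun x hx h ↦ by
    rw [← sub_eq_zero.1 h, mem_sphere_zero_iff_norm.1 hx] at hz
    exact lt_irrefl _ hz
  have h1 : Real.circleAverage (fun x ↦ ((x - 0) / (x - z)) • g x) 0 1 = g z :=
    DiffContOnCl.circleAverage_smul_div (by simpa using hg.diffContOnCl_ball Subset.rfl)
      (by simpa using hz)
  set k : ℂ → ℂ := fun x ↦ (1 + x * g x) * x / (1 - (starRingEnd ℂ) z * x)
  have hk : DifferentiableOn ℂ k (closedBall 0 1) := by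
    refine DifferentiableOn.div (by fun_prop) (by fun_prop) hne
  have h2 : Real.circleAverage k 0 1 = 0 := by
    rw [DiffContOnCl.circleAverage (by simpa using hk.diffContOnCl_ball Subset.rfl)]
    simp [k]
  have hki : CircleIntegrable k 0 1 := (hk.continuousOn.mono hsph).circleIntegrable zero_le_one
  have h3 : Real.circleAverage (fun x ↦ (starRingEnd ℂ) (k x)) 0 1 = 0 := by
    have := Complex.conjCLE.toContinuousLinearMap.circleAverage_comp_comm hki
    rw [h2, map_zero] at this
    exact this
  have hi1 : CircleIntegrable (fun x ↦ ((x - 0) / (x - z)) • g x) 0 1 := by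
    refine ContinuousOn.circleIntegrable zero_le_one ?_
    exact ContinuousOn.smul (ContinuousOn.div (by fun_prop) (by fun_prop) hxz)
      (hg.continuousOn.mono hsph)
  have hi2 : CircleIntegrable (fun x ↦ (starRingEnd ℂ) (k x)) 0 1 :=
    ContinuousOn.circleIntegrable zero_le_one
      (Complex.continuous_conj.comp_continuousOn (hk.continuousOn.mono hsph))
  have h4 := Real.circleAverage_fun_add hi1 hi2
  rw [h1, h3, add_zero] at h4
  rw [← h4]
  refine Real.circleAverage_congr_sphere fun x hx ↦ ?_
  rw [abs_one] at hx
  have hx0 : x ≠ 0 := ne_zero_of_mem_unit_sphere ⟨x, hx⟩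
  have hxc : (starRingEnd ℂ) x = x⁻¹ := by
    rw [Complex.inv_def, Complex.normSq_eq_norm_sq, mem_sphere_zero_iff_norm.1 hx]
    simp
  have e : (((1 + 2 * (x * g x).re : ℝ)) : ℂ) = x * g x + (1 + (starRingEnd ℂ) (x * g x)) := by
    have := Complex.add_conj (x * g x)
    push_cast at this ⊢
    linear_combination -this
  have hxz' := hxz x hx
  simp only [k, smul_eq_mul, map_div₀, map_mul, map_add, map_sub, map_one, Complex.conj_conj, hxc]
  rw [e, map_mul, hxc]
  have h5 : 1 - z * x⁻¹ = (x - z) * x⁻¹ := by field_simp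
  rw [h5]
  field_simp
  ring

lemma continuous_re_mul_circleMap {g : ℂ → ℂ} (hg : ContinuousOn g (sphere 0 1)) :
    Continuous fun θ : ℝ ↦ (circleMap 0 1 θ * g (circleMap 0 1 θ)).re := by
  have h : Continuous fun θ : ℝ ↦ g (circleMap 0 1 θ) :=
    hg.comp_continuous (continuous_circleMap 0 1) fun θ ↦ circleMap_mem_sphere 0 zero_le_one θ
  exact Complex.continuous_re.comp ((continuous_circleMap 0 1).mul h)

/-- Herglotz representation of `f'`: if `F' = p g F` and `1 + 2 x g x` has nonnegative real part on
the unit circle, the curve `t ↦ F (t z)` is a limit of convex combinations of power kernels. -/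
lemma exists_mem_powHull_of_deriv_eq {g F : ℂ → ℂ} (hg : DifferentiableOn ℂ g (closedBall 0 1))
    (hg0 : ∀ x ∈ sphere (0 : ℂ) 1, 0 ≤ 1 + 2 * (x * g x).re) {p : ℝ} (hp : 0 < p)
    (hF : ∀ x ∈ ball (0 : ℂ) 1, HasDerivAt F (p * g x * F x) x) (hF0 : F 0 = 1)
    {z : ℂ} (hz : ‖z‖ < 1) :
    ∃ G ∈ powHull hz p, ∀ t : unitInterval, G t = F (((t : ℝ) : ℂ) * z) := by
  have hsph : sphere (0 : ℂ) 1 ⊆ closedBall 0 1 := sphere_subset_closedBall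
  set μ : Measure ℝ := volume.restrict (Ioc 0 (2 * Real.pi))
  set ρ : ℝ → ℝ := fun θ ↦
    (2 * Real.pi)⁻¹ * (1 + 2 * (circleMap 0 1 θ * g (circleMap 0 1 θ)).re)
  have hρc : Continuous ρ := by
    have := continuous_re_mul_circleMap (hg.continuousOn.mono hsph)
    fun_prop
  have hcn : ∀ θ, ‖(circleMap 0 1 θ)⁻¹‖ = 1 := fun θ ↦ by simp
  set c : ℝ → closedBall (0 : ℂ) 1 := fun θ ↦
    ⟨(circleMap 0 1 θ)⁻¹, mem_closedBall_zero_iff.2 (hcn θ).le⟩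
  have hc : Continuous c := Continuous.subtype_mk
    ((continuous_circleMap 0 1).inv₀ fun θ ↦ circleMap_ne_center one_ne_zero) _
  have hρ0 : ∀ θ, 0 ≤ ρ θ := fun θ ↦
    mul_nonneg (by positivity) (hg0 _ (circleMap_mem_sphere 0 zero_le_one θ))
  have hρi : Integrable ρ μ :=
    (intervalIntegrable_iff_integrableOn_Ioc_of_le Real.two_pi_pos.le).1
      (hρc.intervalIntegrable _ _)
  have key : ∀ x : ℂ, ‖x‖ < 1 → ∫ θ, ρ θ • ((c θ : ℂ) * (1 - x * c θ)⁻¹) ∂μ = g x := by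
    intro x hx
    rw [← circleAverage_herglotz_cauchy hg hx, Real.circleAverage_def,
      intervalIntegral.integral_of_le Real.two_pi_pos.le, ← integral_smul]
    refine integral_congr_ae (ae_of_all _ fun θ ↦ ?_)
    have h0 : circleMap 0 1 θ ≠ 0 := circleMap_ne_center one_ne_zero
    have h1 : 1 - x * (circleMap 0 1 θ)⁻¹ = (circleMap 0 1 θ - x) * (circleMap 0 1 θ)⁻¹ := by
      field_simp
    simp only [c, ρ, Complex.real_smul]
    rw [h1, mul_inv (_ - _), inv_inv]
    push_cast
    field_simp
  have hρ1 : ∫ θ, ρ θ ∂μ = 1 := by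
    have hd : DifferentiableOn ℂ (fun x ↦ x * g x) (closedBall 0 1) := by fun_prop
    have h : Real.circleAverage (fun x ↦ x * g x) 0 1 = 0 * g 0 :=
      DiffContOnCl.circleAverage (by simpa using hd.diffContOnCl_ball Subset.rfl)
    have hi : CircleIntegrable (fun x ↦ x * g x) 0 1 :=
      ContinuousOn.circleIntegrable zero_le_one
        (continuousOn_id.mul (hg.continuousOn.mono hsph))
    have h' := Complex.reCLM.circleAverage_comp_comm hi
    rw [h] at h'
    have h2 : ∫ θ in (0 : ℝ)..2 * Real.pi, (circleMap 0 1 θ * g (circleMap 0 1 θ)).re = 0 := by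
      rw [Real.circleAverage_def] at h'
      simpa [Real.pi_ne_zero] using h'
    have h3 := (continuous_re_mul_circleMap (hg.continuousOn.mono hsph)).intervalIntegrable
      (μ := volume) 0 (2 * Real.pi)
    change ∫ θ in Ioc 0 (2 * Real.pi), ρ θ = 1
    rw [← intervalIntegral.integral_of_le Real.two_pi_pos.le,
      intervalIntegral.integral_const_mul, intervalIntegral.integral_add (by simp)
        (h3.const_mul 2), intervalIntegral.integral_const_mul, h2,
      intervalIntegral.integral_const, mul_zero, add_zero, sub_zero, smul_eq_mul, mul_one,
      inv_mul_cancel₀ Real.two_pi_pos.ne']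
  set V : ℂ → ℂ := fun x ↦ ∫ θ, ρ θ • (-Complex.log (1 - x * c θ)) ∂μ
  have hV : ∀ x ∈ ball (0 : ℂ) 1, HasDerivAt V (g x) x := fun x hx ↦ by
    have hx' := mem_ball_zero_iff.1 hx
    have h := hasDerivAt_integral_weight_smul_comp (h := fun u ↦ -Complex.log (1 - u))
      (h' := fun u ↦ (1 - u)⁻¹) hρi (continuous_subtype_val.comp hc).measurable
      (ae_of_all _ fun θ ↦ (hcn θ).le) (fun u hu ↦ by
        have := (((hasDerivAt_id u).const_sub 1).clog (one_sub_mem_slitPlane_s4 hu)).neg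
        refine this.congr_deriv ?_
        simp [neg_div])
      (by
        refine ContinuousOn.inv₀ (by fun_prop) fun u hu ↦ ?_
        exact Complex.slitPlane_ne_zero (one_sub_mem_slitPlane_s4 hu)) hx'
    exact h.congr_deriv (key x hx')
  have hFV : ∀ x ∈ ball (0 : ℂ) 1, F x = Complex.exp (p * V x) := by
    intro x hx
    have hd : ∀ y ∈ ball (0 : ℂ) 1, HasDerivAt (fun y ↦ F y * Complex.exp (-(p * V y))) 0 y :=
      fun y hy ↦ by
        refine ((hF y hy).mul ((hV y hy).const_mul (p : ℂ)).neg.cexp).congr_deriv ?_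
        ring
    have h := isOpen_ball.is_const_of_deriv_eq_zero (convex_ball (0 : ℂ) 1).isPreconnected
      (fun y hy ↦ (hd y hy).differentiableAt.differentiableWithinAt) (fun y hy ↦ (hd y hy).deriv)
      hx (mem_ball_self zero_lt_one)
    have hV0 : V 0 = 0 := by simp [V]
    simp only [hF0, hV0, mul_zero, neg_zero, Complex.exp_zero, mul_one, Complex.exp_neg] at h
    field_simp at h
    exact h
  have hLi := integrable_smul_comp_of_compactSpace hρi (logCurve hz).continuous hc
  refine ⟨_, expCurve_smul_integral_mem_powHull hz hp hρc.measurable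
    (ae_of_all _ hρ0) hρi hρ1 hc, fun t ↦ ?_⟩
  rw [hFV _ (mem_ball_zero_iff.2 (norm_mul_unitInterval_lt_one hz t))]
  simp only [expCurve, ContinuousMap.comp_apply, ContinuousMap.coe_mk, ContinuousMap.smul_apply,
    ContinuousMap.integral_apply hLi, V, Complex.real_smul]
  rfl

lemma log_one_sub_exp_mul_I {θ : ℝ} (h0 : 0 < θ) (hπ : θ < Real.pi) :
    Complex.log (1 - Complex.exp (θ * Complex.I)) =
      (Real.log (2 * Real.sin (θ / 2)) : ℂ) - (((Real.pi - θ) / 2 : ℝ) : ℂ) * Complex.I := by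
  have hs : 0 < Real.sin (θ / 2) := Real.sin_pos_of_pos_of_lt_pi (by linarith) (by linarith)
  have hc : Real.cos ((Real.pi - θ) / 2) = Real.sin (θ / 2) := by
    rw [← Real.cos_pi_div_two_sub]
    ring_nf
  have hs' : Real.sin ((Real.pi - θ) / 2) = Real.cos (θ / 2) := by
    rw [← Real.sin_pi_div_two_sub]
    ring_nf
  have h1 : Real.cos θ = 1 - 2 * Real.sin (θ / 2) ^ 2 := by
    have := Real.cos_sq_add_sin_sq (θ / 2)
    rw [show θ = 2 * (θ / 2) by ring, Real.cos_two_mul]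
    ring_nf at this ⊢
    linarith
  have h2 : Real.sin θ = 2 * Real.sin (θ / 2) * Real.cos (θ / 2) := by
    rw [← Real.sin_two_mul]
    ring_nf
  have he : Complex.exp ((Real.log (2 * Real.sin (θ / 2)) : ℂ) -
      (((Real.pi - θ) / 2 : ℝ) : ℂ) * Complex.I) = 1 - Complex.exp (θ * Complex.I) := by
    apply Complex.ext
    · simp [Complex.exp_re, Real.exp_log (mul_pos two_pos hs), hc, h1]
      ring
    · simp [Complex.exp_im, Real.exp_log (mul_pos two_pos hs), hs', h2]
  rw [← he, Complex.log_exp]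
  · simp
    linarith
  · simp
    linarith

lemma im_exp_mul_kfun_half {θ : ℝ} (h0 : 0 < θ) (hπ : θ < Real.pi) :
    (Complex.exp (-(θ : ℂ) * Complex.I) * kfun (1 / 2) (Complex.exp (θ * Complex.I))).im =
      (Real.pi - θ) / 2 * Real.cos θ + Real.sin θ * Real.log (2 * Real.sin (θ / 2)) := by
  rw [kfun, if_pos rfl, log_one_sub_exp_mul_I h0 hπ]
  have h := Complex.exp_ofReal_mul_I_re (-θ)
  have h' := Complex.exp_ofReal_mul_I_im (-θ)
  push_cast at h h'
  rw [Complex.mul_im, h, h']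
  simp
  ring

lemma im_exp_mul_kfun {α θ : ℝ} (hα : 1 / 2 < α) (h0 : 0 < θ) (hπ : θ < Real.pi) :
    (Complex.exp (-(θ : ℂ) * Complex.I) * kfun α (Complex.exp (θ * Complex.I))).im =
      ((2 * Real.sin (θ / 2)) ^ (2 * α - 1) *
        Real.sin (θ + (2 * α - 1) * ((Real.pi - θ) / 2)) - Real.sin θ) / (2 * α - 1) := by
  have hs : 0 < Real.sin (θ / 2) := Real.sin_pos_of_pos_of_lt_pi (by linarith) (by linarith)
  have hne : 1 - Complex.exp (θ * Complex.I) ≠ 0 := fun h ↦ by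
    have := congrArg Complex.im h
    rw [Complex.sub_im, Complex.exp_ofReal_mul_I_im] at this
    have h1 := Real.sin_pos_of_pos_of_lt_pi h0 hπ
    simp at this
    linarith
  have hk : kfun α (Complex.exp (θ * Complex.I)) =
      (((2 * α - 1)⁻¹ : ℝ) : ℂ) * (1 - Complex.exp
        (((Real.log (2 * Real.sin (θ / 2)) * (2 * α - 1) : ℝ) : ℂ) -
          (((2 * α - 1) * ((Real.pi - θ) / 2) : ℝ) : ℂ) * Complex.I)) := by
    have hβ : (2 * (α : ℂ) - 1) ≠ 0 := by
      have : (2 * α - 1) ≠ 0 := by linarith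
      exact_mod_cast this
    have hβ' : (1 - 2 * (α : ℂ)) ≠ 0 := by
      rw [← neg_ne_zero]
      simpa using hβ
    rw [kfun, if_neg hα.ne', Complex.cpow_def_of_ne_zero hne, log_one_sub_exp_mul_I h0 hπ]
    have e : ((Real.log (2 * Real.sin (θ / 2)) : ℂ) - (((Real.pi - θ) / 2 : ℝ) : ℂ) * Complex.I) *
        ((2 * α - 1 : ℝ) : ℂ) = ((Real.log (2 * Real.sin (θ / 2)) * (2 * α - 1) : ℝ) : ℂ) -
          (((2 * α - 1) * ((Real.pi - θ) / 2) : ℝ) : ℂ) * Complex.I := by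
      push_cast
      ring
    rw [e]
    generalize Complex.exp _ = E
    push_cast
    field_simp
    ring
  rw [hk, mul_left_comm, Complex.im_ofReal_mul, mul_sub, ← Complex.exp_add, mul_one,
    Complex.sub_im, Complex.exp_im, Complex.exp_im, Real.rpow_def_of_pos (mul_pos two_pos hs)]
  have e1 : -θ - (2 * α - 1) * ((Real.pi - θ) / 2) = -(θ + (2 * α - 1) * ((Real.pi - θ) / 2)) := by
    ring
  simp [-Complex.ofReal_mul, -Complex.ofReal_sub]
  rw [← sub_eq_add_neg, e1, Real.sin_neg]
  field_simp
  ring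

lemma sin_add_le_add_half {θ δ : ℝ} (h0 : 0 ≤ θ) (hδ : 0 ≤ δ) (hπ : θ + δ ≤ Real.pi)
    (hc : Real.cos θ ≤ 1 / 2) : Real.sin (θ + δ) ≤ Real.sin θ + δ / 2 := by
  have h := Real.sin_sub_sin (θ + δ) θ
  rw [show (θ + δ - θ) / 2 = δ / 2 by ring, show (θ + δ + θ) / 2 = θ + δ / 2 by ring] at h
  have h1 := Real.sin_le (x := δ / 2) (by linarith)
  have h2 : Real.cos (θ + δ / 2) ≤ Real.cos θ :=
    Real.cos_le_cos_of_nonneg_of_le_pi h0 (by linarith) (by linarith)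
  have h3 : 0 ≤ Real.sin (δ / 2) :=
    Real.sin_nonneg_of_nonneg_of_le_pi (by linarith) (by linarith)
  nlinarith [mul_le_mul_of_nonneg_left (h2.trans hc) h3]

lemma im_exp_mul_kfun_le {α θ : ℝ} (hα : 1 / 2 ≤ α) (hα1 : α < 1) (h0 : 0 < θ)
    (hπ : θ < Real.pi) :
    (Complex.exp (-(θ : ℂ) * Complex.I) * kfun α (Complex.exp (θ * Complex.I))).im ≤
      Real.pi / 2 := by
  have hs : 0 < Real.sin (θ / 2) := Real.sin_pos_of_pos_of_lt_pi (by linarith) (by linarith)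
  have hsθ := Real.sin_nonneg_of_nonneg_of_le_pi h0.le hπ.le
  have hsθ1 := Real.sin_le_one θ
  have hcθ1 := Real.cos_le_one θ
  have h1 : Real.cos θ = 1 - 2 * Real.sin (θ / 2) ^ 2 := by
    have := Real.cos_sq_add_sin_sq (θ / 2)
    rw [show θ = 2 * (θ / 2) by ring, Real.cos_two_mul]
    ring_nf at this ⊢
    linarith
  have hR2 : 2 * Real.sin (θ / 2) ≤ 2 := by linarith [Real.sin_le_one (θ / 2)]
  have hcos : 1 < 2 * Real.sin (θ / 2) → Real.cos θ ≤ 1 / 2 := fun h ↦ by nlinarith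
  have hφ3 : 1 < 2 * Real.sin (θ / 2) → (Real.pi - θ) / 2 ≤ Real.pi / 3 := fun h ↦ by
    by_contra! hlt
    have := Real.sin_le_sin_of_le_of_le_pi_div_two (x := θ / 2) (y := Real.pi / 6)
      (by linarith) (by linarith) (by linarith)
    rw [Real.sin_pi_div_six] at this
    linarith
  have hR0 : 0 < 2 * Real.sin (θ / 2) := mul_pos two_pos hs
  have hφ : 0 < (Real.pi - θ) / 2 := by linarith
  have hφ2 : (Real.pi - θ) / 2 ≤ Real.pi / 2 := by linarith
  have hφθ : θ + (Real.pi - θ) / 2 ≤ Real.pi := by linarith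
  have hpi := Real.pi_gt_three
  rcases hα.eq_or_lt with rfl | hα
  · rw [im_exp_mul_kfun_half h0 hπ]
    generalize 2 * Real.sin (θ / 2) = R at *
    generalize (Real.pi - θ) / 2 = φ at *
    rcases le_or_gt R 1 with hR | hR
    · have := Real.log_nonpos hR0.le hR
      nlinarith
    · have h2 := Real.log_le_sub_one_of_pos hR0
      have h3 := Real.log_nonneg hR.le
      have := hφ3 hR
      have := hcos hR
      nlinarith
  · rw [im_exp_mul_kfun hα h0 hπ]
    generalize 2 * Real.sin (θ / 2) = R at *
    generalize (Real.pi - θ) / 2 = φ at *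
    obtain ⟨β, hβ⟩ : ∃ β, β = 2 * α - 1 := ⟨_, rfl⟩
    rw [← hβ]
    have hβ0 : 0 < β := by linarith
    have hβ1 : β ≤ 1 := by linarith
    have hβφ : 0 < β * φ := mul_pos hβ0 hφ
    have hβφ' : β * φ ≤ φ := mul_le_of_le_one_left hφ.le hβ1
    have hsn : 0 ≤ Real.sin (θ + β * φ) :=
      Real.sin_nonneg_of_nonneg_of_le_pi (by linarith) (by linarith)
    have hsn1 := Real.sin_le_one (θ + β * φ)
    rw [div_le_iff₀ hβ0]
    rcases le_or_gt R 1 with hR | hR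
    · have h2 : R ^ β ≤ 1 := Real.rpow_le_one hR0.le hR hβ0.le
      have h3 : Real.sin (θ + β * φ) ≤ Real.sin θ + β * φ := by
        rw [Real.sin_add]
        have h4 := Real.sin_le hβφ.le
        have h5 := Real.cos_le_one (β * φ)
        have h6 : 0 ≤ Real.sin (β * φ) :=
          Real.sin_nonneg_of_nonneg_of_le_pi hβφ.le (by linarith)
        nlinarith
      nlinarith
    · have h2 : R ^ β ≤ 1 + β * (R - 1) := by
        have := rpow_one_add_le_one_add_mul_self (s := R - 1) (by linarith) hβ0.le hβ1
        rwa [add_sub_cancel] at this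
      have h3 := sin_add_le_add_half h0.le hβφ.le (by linarith) (hcos hR)
      have h4 := hφ3 hR
      have h5 : R ^ β * Real.sin (θ + β * φ) ≤ Real.sin (θ + β * φ) + β := by
        have : R ^ β ≤ 1 + β := by nlinarith
        nlinarith
      nlinarith

lemma bddAbove_im_exp_mul_kfun {α : ℝ} (hα : 1 / 2 ≤ α) (hα1 : α < 1) :
    BddAbove {y : ℝ | ∃ θ ∈ Set.Ioo (0 : ℝ) Real.pi, y = (Complex.exp (-(θ : ℂ) * Complex.I) *
      kfun α (Complex.exp ((θ : ℂ) * Complex.I))).im} := by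
  refine ⟨Real.pi / 2, ?_⟩
  rintro _ ⟨θ, hθ, rfl⟩
  exact im_exp_mul_kfun_le hα hα1 hθ.1 hθ.2

lemma Mconst_le {α : ℝ} (hα : 1 / 2 ≤ α) (hα1 : α < 1) : Mconst α ≤ Real.pi / 2 := by
  refine csSup_le ⟨_, Real.pi / 2, ⟨by positivity, by linarith [Real.pi_pos]⟩, rfl⟩ ?_
  rintro _ ⟨θ, hθ, rfl⟩
  exact im_exp_mul_kfun_le hα hα1 hθ.1 hθ.2

lemma tendsto_im_exp_mul_kfun_half :
    Filter.Tendsto (fun θ : ℝ ↦ (Real.pi - θ) / 2 * Real.cos θ +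
      Real.sin θ * Real.log (2 * Real.sin (θ / 2))) (nhdsWithin 0 (Set.Ioi 0))
      (nhds (Real.pi / 2)) := by
  have h : Continuous fun θ : ℝ ↦ (Real.pi - θ) / 2 * Real.cos θ +
      Real.cos (θ / 2) * (2 * Real.sin (θ / 2) * Real.log (2 * Real.sin (θ / 2))) := by
    have h1 : Continuous fun θ : ℝ ↦ 2 * Real.sin (θ / 2) := by fun_prop
    have h2 := Real.continuous_mul_log.comp h1
    simp only [Function.comp_def] at h2
    fun_prop
  have h0 := (h.tendsto 0).mono_left (nhdsWithin_le_nhds (s := Set.Ioi 0))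
  simp only [sub_zero, Real.cos_zero, mul_one, zero_div, Real.sin_zero, mul_zero, Real.log_zero,
    add_zero] at h0
  refine h0.congr fun θ ↦ ?_
  rw [show Real.sin θ = 2 * Real.sin (θ / 2) * Real.cos (θ / 2) by
    rw [← Real.sin_two_mul]; ring_nf]
  ring

lemma Mconst_half : Mconst (1 / 2) = Real.pi / 2 := by
  refine le_antisymm (Mconst_le le_rfl (by norm_num)) ?_
  refine le_of_tendsto tendsto_im_exp_mul_kfun_half ?_
  filter_upwards [Ioo_mem_nhdsGT Real.pi_pos] with θ hθ
  rw [← im_exp_mul_kfun_half hθ.1 hθ.2]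
  exact le_csSup (bddAbove_im_exp_mul_kfun le_rfl (by norm_num)) ⟨θ, hθ, rfl⟩

lemma sub_eq_mul_integral_of_hasDerivAt {F F' : ℂ → ℂ} {u : ℂ}
    (hd : ∀ t ∈ Icc (0 : ℝ) 1, HasDerivAt F (F' (t * u)) (t * u))
    (hc : ContinuousOn (fun t : ℝ ↦ F' (t * u)) (Icc 0 1)) :
    F u - F 0 = u * ∫ t in (0 : ℝ)..1, F' (t * u) := by
  have h := intervalIntegral.integral_eq_sub_of_hasDerivAt (a := 0) (b := 1)
    (f := fun t : ℝ ↦ F (t * u)) (f' := fun t : ℝ ↦ u * F' (t * u)) (fun t ht ↦ by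
      rw [uIcc_of_le zero_le_one] at ht
      have h1 : HasDerivAt (fun s : ℝ ↦ (s : ℂ) * u) u t := by
        simpa using (Complex.ofRealCLM.hasDerivAt (x := t)).mul_const u
      exact ((hd t ht).comp t h1).congr_deriv (mul_comm _ _))
    (ContinuousOn.intervalIntegrable (by
      rw [uIcc_of_le zero_le_one]
      exact continuousOn_const.mul hc))
  rw [intervalIntegral.integral_const_mul] at h
  simpa using h.symm

lemma hasDerivAt_kfun_s4 {α : ℝ} {u : ℂ} (hu : 1 - u ∈ Complex.slitPlane) :
    HasDerivAt (kfun α) (powKernel (2 - 2 * α) u) u := by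
  have hne : 1 - u ≠ 0 := Complex.slitPlane_ne_zero hu
  have hd := (hasDerivAt_id u).const_sub 1
  rcases eq_or_ne α (1 / 2) with rfl | hα
  · have h := (hd.clog hu).neg
    have e : kfun (1 / 2) = fun u ↦ -Complex.log (1 - u) := by
      ext u
      rw [kfun, if_pos rfl]
    rw [e]
    refine h.congr_deriv ?_
    norm_num [powKernel, Complex.exp_neg, Complex.exp_log hne, neg_div]
  · have h := ((hd.cpow_const (c := ((2 * α - 1 : ℝ) : ℂ)) hu).sub_const 1).div_const
      ((1 - 2 * α : ℝ) : ℂ)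
    have e : kfun α = fun u ↦ ((1 - u) ^ ((2 * α - 1 : ℝ) : ℂ) - 1) / ((1 - 2 * α : ℝ) : ℂ) := by
      ext u
      rw [kfun, if_neg hα]
    rw [e]
    refine h.congr_deriv ?_
    have h1 : ((1 - 2 * α : ℝ) : ℂ) ≠ 0 := by
      rw [Complex.ofReal_ne_zero]
      intro h
      exact hα (by linarith)
    have h2 : (1 - u) ^ (((2 * α - 1 : ℝ) : ℂ) - 1) = powKernel (2 - 2 * α) u := by
      rw [Complex.cpow_def_of_ne_zero hne, powKernel]
      congr 1
      push_cast
      ring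
    simp only [id]
    rw [h2, div_eq_iff h1]
    push_cast
    ring

lemma kfun_zero (α : ℝ) : kfun α 0 = 0 := by
  unfold kfun
  split_ifs <;> simp

lemma hfun_eq_dslope (α : ℝ) : hfun α = dslope (kfun α) 0 := by
  ext u
  rcases eq_or_ne u 0 with rfl | hu
  · rw [dslope_same, (hasDerivAt_kfun_s4 (by simp)).deriv, powKernel_zero_right, hfun, if_pos rfl]
  · rw [dslope_of_ne _ hu, hfun, if_neg hu, slope_def_field, kfun_zero, sub_zero, sub_zero]

lemma differentiableOn_kfun (α : ℝ) : DifferentiableOn ℂ (kfun α) (ball 0 1) := fun _ hu ↦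
  (hasDerivAt_kfun_s4 (one_sub_mem_slitPlane_s4 hu)).differentiableAt.differentiableWithinAt

lemma differentiableOn_hfun (α : ℝ) : DifferentiableOn ℂ (hfun α) (ball 0 1) := by
  rw [hfun_eq_dslope, Complex.differentiableOn_dslope (ball_mem_nhds 0 zero_lt_one)]
  exact differentiableOn_kfun α

lemma hfun_eq_integral {α : ℝ} {u : ℂ}
    (hu : ∀ t ∈ Icc (0 : ℝ) 1, 1 - (t : ℂ) * u ∈ Complex.slitPlane) :
    hfun α u = ∫ t in (0 : ℝ)..1, powKernel (2 - 2 * α) (t * u) := by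
  rcases eq_or_ne u 0 with rfl | hu0
  · simp [hfun, powKernel_zero_right]
  · have h := sub_eq_mul_integral_of_hasDerivAt (F := kfun α) (fun t ht ↦ hasDerivAt_kfun_s4 (hu t ht))
      (fun t ht ↦ ContinuousAt.continuousWithinAt <|
        (hasDerivAt_powKernel _ (hu t ht)).continuousAt.comp'
          (f := fun t : ℝ ↦ (t : ℂ) * u) (by fun_prop))
    rw [kfun_zero, sub_zero] at h
    rw [hfun, if_neg hu0, h, mul_div_cancel_left₀ _ hu0]

lemma re_lt_one_of_norm_le_one {w : ℂ} (hw : ‖w‖ ≤ 1) (hw1 : w ≠ 1) : w.re < 1 := by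
  refine lt_of_le_of_ne ((Complex.re_le_norm w).trans hw) fun h ↦ hw1 ?_
  have h1 := Complex.sq_norm w
  rw [Complex.normSq_apply, h] at h1
  have h2 : w.im = 0 := by nlinarith [norm_nonneg w, mul_self_nonneg w.im]
  exact Complex.ext (by simpa) (by simpa)

lemma one_sub_mul_mem_slitPlane {w : ℂ} (hw : ‖w‖ ≤ 1) (hw1 : w ≠ 1) {t : ℝ}
    (ht : t ∈ Icc (0 : ℝ) 1) : 1 - (t : ℂ) * w ∈ Complex.slitPlane := by
  refine Or.inl ?_
  have := re_lt_one_of_norm_le_one hw hw1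
  simp only [Complex.sub_re, Complex.one_re, Complex.re_ofReal_mul]
  rcases ht.1.eq_or_lt with rfl | h
  · simp
  · nlinarith [ht.2]

lemma hfun_conj {α : ℝ} {w : ℂ} (hw : 1 - w ∈ Complex.slitPlane) :
    hfun α ((starRingEnd ℂ) w) = (starRingEnd ℂ) (hfun α w) := by
  have hk : kfun α ((starRingEnd ℂ) w) = (starRingEnd ℂ) (kfun α w) := by
    have h1 : 1 - (starRingEnd ℂ) w = (starRingEnd ℂ) (1 - w) := by simp
    have harg := Complex.slitPlane_arg_ne_pi hw
    unfold kfun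
    split_ifs
    · rw [h1, Complex.log_conj _ harg, map_neg]
    · rw [h1, Complex.conj_cpow _ _ harg, Complex.conj_ofReal]
      simp only [map_div₀, map_sub, map_one, Complex.conj_ofReal]
  unfold hfun
  simp only [map_eq_zero, hk]
  split_ifs <;> simp

lemma im_powKernel_nonneg {p : ℝ} (hp0 : 0 ≤ p) (hp1 : p ≤ 1) {u : ℂ}
    (hu : 1 - u ∈ Complex.slitPlane) (him : 0 ≤ u.im) : 0 ≤ (powKernel p u).im := by
  have harg : Complex.arg (1 - u) ≤ 0 := by
    rcases him.eq_or_lt with h | h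
    · have h1 : (1 - u).im = 0 := by simp [← h]
      have h2 : 0 < (1 - u).re := hu.resolve_right fun h' ↦ h' h1
      exact (Complex.arg_eq_zero_iff.2 ⟨h2.le, h1⟩).le
    · exact (Complex.arg_neg_iff.2 (by simpa using h)).le
  have h := Complex.neg_pi_lt_arg (1 - u)
  rw [powKernel, Complex.exp_im]
  refine mul_nonneg (Real.exp_pos _).le (Real.sin_nonneg_of_nonneg_of_le_pi ?_ ?_)
  · simp only [neg_mul, Complex.neg_im, Complex.im_ofReal_mul, Complex.log_im]
    nlinarith
  · simp only [neg_mul, Complex.neg_im, Complex.im_ofReal_mul, Complex.log_im]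
    nlinarith

lemma im_hfun_nonneg {α : ℝ} (hα0 : 1 / 2 ≤ α) (hα1 : α < 1) {w : ℂ} (hw : ‖w‖ ≤ 1)
    (hw1 : w ≠ 1) (him : 0 ≤ w.im) : 0 ≤ (hfun α w).im := by
  have hs : ∀ t ∈ Icc (0 : ℝ) 1, 1 - (t : ℂ) * w ∈ Complex.slitPlane := fun t ht ↦
    one_sub_mul_mem_slitPlane hw hw1 ht
  rw [hfun_eq_integral hs]
  have hi : IntervalIntegrable (fun t : ℝ ↦ powKernel (2 - 2 * α) (t * w)) volume 0 1 := by
    refine ContinuousOn.intervalIntegrable fun t ht ↦ ContinuousAt.continuousWithinAt ?_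
    rw [uIcc_of_le zero_le_one] at ht
    exact (hasDerivAt_powKernel _ (hs t ht)).continuousAt.comp'
      (f := fun t : ℝ ↦ (t : ℂ) * w) (by fun_prop)
  have h := Complex.imCLM.intervalIntegral_comp_comm hi
  rw [← Complex.imCLM_apply, ← h]
  refine intervalIntegral.integral_nonneg zero_le_one fun t ht ↦ ?_
  refine im_powKernel_nonneg (by linarith) (by linarith) (hs t ht) ?_
  rw [Complex.im_ofReal_mul]
  exact mul_nonneg ht.1 him

lemma im_hfun_exp_le_Mconst {α : ℝ} (hα0 : 1 / 2 ≤ α) (hα1 : α < 1) {θ : ℝ}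
    (hθ : θ ∈ Ioo 0 Real.pi) : (hfun α (Complex.exp (θ * Complex.I))).im ≤ Mconst α := by
  refine le_csSup (bddAbove_im_exp_mul_kfun hα0 hα1) ⟨θ, hθ, ?_⟩
  rw [hfun, if_neg (Complex.exp_ne_zero _), neg_mul, Complex.exp_neg, div_eq_inv_mul]

lemma Mconst_nonneg {α : ℝ} (hα0 : 1 / 2 ≤ α) (hα1 : α < 1) : 0 ≤ Mconst α := by
  have hθ : Real.pi / 2 ∈ Ioo 0 Real.pi := ⟨by positivity, by linarith [Real.pi_pos]⟩
  have hI : Complex.exp ((Real.pi / 2 : ℝ) * Complex.I) = Complex.I := by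
    push_cast
    exact Complex.exp_pi_div_two_mul_I
  have h := im_hfun_exp_le_Mconst hα0 hα1 hθ
  rw [hI] at h
  refine (im_hfun_nonneg hα0 hα1 (by simp) (fun h ↦ ?_) (by simp)).trans h
  simpa using congrArg Complex.re h

lemma im_hfun_le_Mconst_of_mem_sphere {α : ℝ} (hα0 : 1 / 2 < α) (hα1 : α < 1) {w : ℂ}
    (hw : ‖w‖ = 1) : (hfun α w).im ≤ Mconst α := by
  have hM := Mconst_nonneg hα0.le hα1
  rcases eq_or_ne w 1 with rfl | hw1
  · have hβ : ((2 * α - 1 : ℝ) : ℂ) ≠ 0 := by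
      rw [Complex.ofReal_ne_zero]
      linarith
    rw [hfun, if_neg one_ne_zero, kfun, if_neg hα0.ne', sub_self, Complex.zero_cpow hβ, div_one,
      zero_sub, ← Complex.ofReal_one, ← Complex.ofReal_neg, ← Complex.ofReal_div,
      Complex.ofReal_im]
    exact hM
  · rcases lt_or_ge 0 w.im with him | him
    · have e : Complex.exp (w.arg * Complex.I) = w := by
        have := Complex.norm_mul_exp_arg_mul_I w
        rwa [hw, Complex.ofReal_one, one_mul] at this
      rw [← e]
      refine im_hfun_exp_le_Mconst hα0.le hα1 ⟨?_, ?_⟩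
      · refine lt_of_le_of_ne (Complex.arg_nonneg_iff.2 him.le) fun h ↦ ?_
        exact him.ne' (Complex.arg_eq_zero_iff.1 h.symm).2
      · exact Complex.arg_lt_pi_iff.2 (Or.inr him.ne')
    · have hs : 1 - (starRingEnd ℂ) w ∈ Complex.slitPlane := Or.inl (by
        simpa using re_lt_one_of_norm_le_one hw.le hw1)
      have h := hfun_conj (α := α) hs
      rw [Complex.conj_conj] at h
      have h1 := im_hfun_nonneg hα0.le hα1 (w := (starRingEnd ℂ) w) (by simp [hw])
        (fun h ↦ hw1 (by simpa using congrArg (starRingEnd ℂ) h)) (by simpa using him)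
      rw [h, Complex.conj_im]
      linarith

lemma continuousOn_hfun {α : ℝ} (hα0 : 1 / 2 < α) : ContinuousOn (hfun α) (closedBall 0 1) := by
  rw [hfun_eq_dslope, continuousOn_dslope (closedBall_mem_nhds 0 zero_lt_one)]
  refine ⟨?_, (hasDerivAt_kfun_s4 (by simp)).differentiableAt⟩
  have e : kfun α = fun u ↦ ((1 - u) ^ ((2 * α - 1 : ℝ) : ℂ) - 1) / ((1 - 2 * α : ℝ) : ℂ) := by
    ext u
    rw [kfun, if_neg hα0.ne']
  rw [e]
  refine ContinuousOn.div_const (ContinuousOn.sub (fun u hu ↦ ?_) continuousOn_const) _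
  refine ContinuousAt.continuousWithinAt (ContinuousAt.comp' (f := fun u : ℂ ↦ 1 - u)
    (Complex.continuousAt_cpow_const_of_re_pos (Or.inl ?_) ?_) (by fun_prop))
  · simpa using (Complex.re_le_norm u).trans (mem_closedBall_zero_iff.1 hu)
  · rw [Complex.ofReal_re]
    linarith

lemma im_hfun_le_Mconst_of_half_lt {α : ℝ} (hα0 : 1 / 2 < α) (hα1 : α < 1) {u : ℂ}
    (hu : ‖u‖ < 1) : (hfun α u).im ≤ Mconst α := by
  have hn : ∀ x : ℂ, ‖Complex.exp (-Complex.I * x)‖ = Real.exp x.im := fun x ↦ by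
    simp [Complex.norm_exp]
  have hd : DiffContOnCl ℂ (hfun α) (ball 0 1) :=
    .mk_ball (differentiableOn_hfun α) (continuousOn_hfun hα0)
  have hd' : DiffContOnCl ℂ (fun x ↦ Complex.exp (-Complex.I * hfun α x)) (ball 0 1) :=
    Differentiable.comp_diffContOnCl (f := fun x ↦ Complex.exp (-Complex.I * x)) (by fun_prop) hd
  have h := Complex.norm_le_of_forall_mem_frontier_norm_le isBounded_ball hd'
    (C := Real.exp (Mconst α)) (fun x hx ↦ by
      rw [frontier_ball 0 one_ne_zero] at hx
      rw [hn, Real.exp_le_exp]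
      exact im_hfun_le_Mconst_of_mem_sphere hα0 hα1 (mem_sphere_zero_iff_norm.1 hx))
    (subset_closure (mem_ball_zero_iff.2 hu))
  rwa [hn, Real.exp_le_exp] at h

lemma tendsto_hfun_half {u : ℂ} (hu : ‖u‖ < 1) :
    Filter.Tendsto (fun β : ℝ ↦ hfun ((1 + β) / 2) u) (nhdsWithin 0 (Ioi 0))
      (nhds (hfun (1 / 2) u)) := by
  rcases eq_or_ne u 0 with rfl | hu0
  · simp [hfun]
  have hne : 1 - u ≠ 0 := Complex.slitPlane_ne_zero
    (one_sub_mem_slitPlane_s4 (mem_ball_zero_iff.2 hu))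
  have hd : HasDerivAt (fun s : ℝ ↦ Complex.exp (s * Complex.log (1 - u)))
      (Complex.log (1 - u)) 0 := by
    have := ((Complex.ofRealCLM.hasDerivAt (x := 0)).mul_const (Complex.log (1 - u))).cexp
    simpa using this
  have ht := (hasDerivAt_iff_tendsto_slope_zero.1 hd).mono_left
    (nhdsWithin_mono 0 fun x (hx : 0 < x) ↦ hx.ne')
  have ht' := ht.neg.div_const u
  have e : hfun (1 / 2) u = -Complex.log (1 - u) / u := by
    rw [hfun, if_neg hu0, kfun, if_pos rfl]
  rw [e]
  refine ht'.congr' ?_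
  filter_upwards [self_mem_nhdsWithin] with β (hβ : 0 < β)
  have hβ' : (β : ℂ) ≠ 0 := by simpa using hβ.ne'
  rw [hfun, if_neg hu0, kfun, if_neg (by linarith), Complex.cpow_def_of_ne_zero hne]
  have e1 : 2 * ((1 + β) / 2) - 1 = β := by ring
  have e2 : 1 - 2 * ((1 + β) / 2) = -β := by ring
  rw [e1, e2, mul_comm (Complex.log _)]
  simp
  field_simp

lemma im_hfun_le_Mconst {α : ℝ} (hα0 : 1 / 2 ≤ α) (hα1 : α < 1) {u : ℂ} (hu : ‖u‖ < 1) :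
    (hfun α u).im ≤ Mconst α := by
  rcases hα0.eq_or_lt with rfl | hα0
  · rw [Mconst_half]
    refine le_of_tendsto ((Complex.continuous_im.tendsto _).comp (tendsto_hfun_half hu)) ?_
    filter_upwards [Ioo_mem_nhdsGT zero_lt_one] with β hβ
    exact (im_hfun_le_Mconst_of_half_lt (by linarith [hβ.1]) (by linarith [hβ.2]) hu).trans
      (Mconst_le (by linarith [hβ.1]) (by linarith [hβ.2]))
  · exact im_hfun_le_Mconst_of_half_lt hα0 hα1 hu

lemma hfun_not_constant {α : ℝ} (hα1 : α < 1) : ¬∃ c, ∀ u ∈ ball (0 : ℂ) 1, hfun α u = c := by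
  rintro ⟨c, hc⟩
  have h1 : ∀ u ∈ ball (0 : ℂ) 1, kfun α u = u := fun u hu ↦ by
    rcases eq_or_ne u 0 with rfl | hu0
    · exact kfun_zero α
    · have h := (hc u hu).trans (hc 0 (mem_ball_self zero_lt_one)).symm
      rw [hfun, hfun, if_neg hu0, if_pos rfl, div_eq_one_iff_eq hu0] at h
      exact h
  have hm : (1 / 2 : ℂ) ∈ ball (0 : ℂ) 1 := by norm_num
  have hd := (hasDerivAt_kfun_s4 (α := α) (one_sub_mem_slitPlane_s4 hm)).unique
    ((hasDerivAt_id _).congr_of_eventuallyEq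
      (Filter.eventually_of_mem (isOpen_ball.mem_nhds hm) h1))
  have hn := congrArg norm hd
  rw [powKernel, Complex.norm_exp, norm_one, Real.exp_eq_one_iff, ← Complex.ofReal_neg,
    Complex.re_ofReal_mul, Complex.log_re] at hn
  norm_num at hn
  linarith

lemma im_hfun_lt_Mconst {α : ℝ} (hα0 : 1 / 2 ≤ α) (hα1 : α < 1) {u : ℂ} (hu : ‖u‖ < 1) :
    (hfun α u).im < Mconst α := by
  have hopen := (((differentiableOn_hfun α).analyticOnNhd isOpen_ball).is_constant_or_isOpen
    (convex_ball (0 : ℂ) 1).isPreconnected).resolve_left (hfun_not_constant hα1) _ Subset.rfl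
    isOpen_ball
  obtain ⟨ε, hε, hsub⟩ := Metric.isOpen_iff.1 hopen _
    (mem_image_of_mem _ (mem_ball_zero_iff.2 hu))
  obtain ⟨v, hv, hvu⟩ := hsub (show hfun α u + (ε / 2 : ℝ) * Complex.I ∈ ball (hfun α u) ε by
    simp [abs_of_pos hε, hε])
  have h := im_hfun_le_Mconst hα0 hα1 (mem_ball_zero_iff.1 hv)
  rw [hvu] at h
  simp at h
  linarith

lemma abs_im_hfun_lt_Mconst {α : ℝ} (hα0 : 1 / 2 ≤ α) (hα1 : α < 1) {u : ℂ} (hu : ‖u‖ < 1) :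
    |(hfun α u).im| < Mconst α := by
  refine abs_lt.2 ⟨?_, im_hfun_lt_Mconst hα0 hα1 hu⟩
  have h := im_hfun_lt_Mconst hα0 hα1 (u := (starRingEnd ℂ) u) (by simpa)
  rw [hfun_conj (one_sub_mem_slitPlane_s4 (mem_ball_zero_iff.2 hu)), Complex.conj_im] at h
  linarith

/-- The mean value functional on continuous functions on the unit interval. -/
noncomputable def meanCLM : C(unitInterval, ℂ) →L[ℝ] ℂ :=
  LinearMap.mkContinuous
    { toFun := fun F ↦ ∫ t, F t
      map_add' := fun F G ↦ integral_add (F.continuous.integrable_of_hasCompactSupport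
        (HasCompactSupport.of_compactSpace _)) (G.continuous.integrable_of_hasCompactSupport
        (HasCompactSupport.of_compactSpace _))
      map_smul' := fun c F ↦ integral_smul c _ } 1 fun F ↦ by
    have h := norm_integral_le_of_norm_le_const (μ := (volume : Measure unitInterval))
      (ae_of_all _ fun t ↦ F.norm_coe_le_norm t)
    simpa using h

lemma meanCLM_eq_integral {G : C(unitInterval, ℂ)} {φ : ℝ → ℂ}
    (h : ∀ t : unitInterval, G t = φ t) : meanCLM G = ∫ t in (0 : ℝ)..1, φ t := by
  rw [intervalIntegral.integral_of_le zero_le_one, ← integral_Icc_eq_integral_Ioc,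
    ← integral_subtype measurableSet_Icc]
  exact integral_congr_ae (ae_of_all _ h)

lemma abs_im_meanCLM_le_of_mem_powHull {α m : ℝ} {z : ℂ} (hz : ‖z‖ < 1)
    (hm : ∀ u ∈ closedBall (0 : ℂ) ‖z‖, |(hfun α u).im| ≤ m) {G : C(unitInterval, ℂ)}
    (hG : G ∈ powHull hz (2 - 2 * α)) : |(meanCLM G).im| ≤ m := by
  set L : C(unitInterval, ℂ) →L[ℝ] ℝ := Complex.imCLM.comp meanCLM
  suffices h : powHull hz (2 - 2 * α) ⊆ L ⁻¹' Icc (-m) m from abs_le.2 (h hG)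
  refine closedConvexHull_min ?_ ((convex_Icc (-m) m).linear_preimage L.toLinearMap)
    (isClosed_Icc.preimage L.continuous)
  rintro _ ⟨w, rfl⟩
  have hw : ‖z * w‖ ≤ ‖z‖ := by
    rw [norm_mul]
    exact mul_le_of_le_one_right (norm_nonneg z) (mem_closedBall_zero_iff.1 w.2)
  have hzw : ‖z * w‖ < 1 := hw.trans_lt hz
  have h1 := meanCLM_eq_integral (φ := fun t ↦ powKernel (2 - 2 * α) (t * (z * w)))
    fun t ↦ (expCurve_smul_logCurve_apply hz (2 - 2 * α) w t).trans (by rw [mul_assoc])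
  rw [← hfun_eq_integral fun t ht ↦ one_sub_mul_mem_slitPlane hzw.le (fun h ↦ by simp [h] at hzw) ht]
    at h1
  refine abs_le.1 (?_ : |(meanCLM _).im| ≤ m)
  rw [h1]
  exact hm _ (mem_closedBall_zero_iff.2 hw)

lemma IsConvexOfOrder.exists_mem_powHull {α : ℝ} (hα1 : α < 1) {f : ℂ → ℂ}
    (hf : IsConvexOfOrder α f) {r : ℝ} (hr0 : 0 < r) (hr1 : r < 1) {z : ℂ} (hz : ‖z‖ < 1) :
    ∃ G ∈ powHull hz (2 - 2 * α), ∀ t : unitInterval,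
      G t = deriv f (((t : ℝ) : ℂ) * (r * z)) := by
  obtain ⟨hfd, -, hf1, hf2⟩ := hf
  rw [unitDisk] at hfd hf2
  have hp : 0 < 2 - 2 * α := by linarith
  have hpC : ((2 - 2 * α : ℝ) : ℂ) ≠ 0 := Complex.ofReal_ne_zero.2 hp.ne'
  have hd1 : DifferentiableOn ℂ (deriv f) (ball 0 1) := hfd.deriv isOpen_ball
  have hd2 : DifferentiableOn ℂ (deriv (deriv f)) (ball 0 1) := hd1.deriv isOpen_ball
  have hmaps : MapsTo (fun x : ℂ ↦ (r : ℂ) * x) (closedBall 0 1) (ball 0 1) := fun x hx ↦ by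
    rw [mem_ball_zero_iff, norm_mul, Complex.norm_real, Real.norm_of_nonneg hr0.le]
    exact (mul_le_of_le_one_right hr0.le (mem_closedBall_zero_iff.1 hx)).trans_lt hr1
  have hlin : DifferentiableOn ℂ (fun x : ℂ ↦ (r : ℂ) * x) (closedBall 0 1) := by fun_prop
  set g : ℂ → ℂ := fun x ↦
    r * deriv (deriv f) (r * x) / (((2 - 2 * α : ℝ) : ℂ) * deriv f (r * x))
  have hg : DifferentiableOn ℂ g (closedBall 0 1) :=
    ((hd2.comp hlin hmaps).const_mul _).div ((hd1.comp hlin hmaps).const_mul _) fun x hx ↦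
      mul_ne_zero hpC (hf2 _ (hmaps hx)).1
  have hg0 : ∀ x ∈ sphere (0 : ℂ) 1, 0 ≤ 1 + 2 * (x * g x).re := fun x hx ↦ by
    have h := (hf2 _ (hmaps (sphere_subset_closedBall hx))).2
    have e : x * g x = (((2 - 2 * α)⁻¹ : ℝ) : ℂ) *
        (r * x * deriv (deriv f) (r * x) / deriv f (r * x)) := by
      have := (hf2 _ (hmaps (sphere_subset_closedBall hx))).1
      simp only [g]
      push_cast at hpC ⊢
      field_simp
    rw [Complex.add_re, Complex.one_re] at h
    rw [e, Complex.re_ofReal_mul]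
    generalize (r * x * deriv (deriv f) (r * x) / deriv f (r * x)).re = s at h
    have h3 : (2 - 2 * α)⁻¹ * (α - 1) ≤ (2 - 2 * α)⁻¹ * s :=
      mul_le_mul_of_nonneg_left (by linarith) (inv_nonneg.2 hp.le)
    have h4 : (2 - 2 * α)⁻¹ * (α - 1) = -1 / 2 := by
      rw [inv_mul_eq_iff_eq_mul₀ hp.ne']
      ring
    linarith
  have hF : ∀ x ∈ ball (0 : ℂ) 1, HasDerivAt (fun x ↦ deriv f (r * x))
      (((2 - 2 * α : ℝ) : ℂ) * g x * deriv f (r * x)) x := fun x hx ↦ by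
    have hx' := hmaps (ball_subset_closedBall hx)
    have h1 := (hd1.differentiableAt (isOpen_ball.mem_nhds hx')).hasDerivAt
    have h2 : HasDerivAt (fun x : ℂ ↦ (r : ℂ) * x) r x := by
      simpa using (hasDerivAt_id x).const_mul (r : ℂ)
    refine (h1.comp x h2).congr_deriv ?_
    have := (hf2 _ hx').1
    simp only [g]
    generalize ((2 - 2 * α : ℝ) : ℂ) = q at hpC
    field_simp
  obtain ⟨G, hG, hGt⟩ := exists_mem_powHull_of_deriv_eq hg hg0 hp hF (by simpa using hf1) hz
  exact ⟨G, hG, fun t ↦ by rw [hGt t, mul_left_comm]⟩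

lemma IsConvexOfOrder.abs_im_div_lt {α : ℝ} (hα0 : 1 / 2 ≤ α) (hα1 : α < 1) {f : ℂ → ℂ}
    (hf : IsConvexOfOrder α f) {z : ℂ} (hz : z ∈ unitDisk) (hz0 : z ≠ 0) :
    |(f z / z).im| < Mconst α := by
  have hz1 : ‖z‖ < 1 := mem_ball_zero_iff.1 hz
  obtain ⟨r, hzr, hr1⟩ := exists_between hz1
  have hr0 : 0 < r := (norm_nonneg z).trans_lt hzr
  have hrC : (r : ℂ) ≠ 0 := Complex.ofReal_ne_zero.2 hr0.ne'
  have hζ : ‖z / r‖ < 1 := by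
    rwa [norm_div, Complex.norm_real, Real.norm_of_nonneg hr0.le, div_lt_one hr0]
  obtain ⟨G, hG, hGt⟩ := hf.exists_mem_powHull hα1 hr0 hr1 hζ
  rw [mul_div_cancel₀ _ hrC] at hGt
  obtain ⟨hfd, hf0, -, -⟩ := hf
  rw [unitDisk] at hfd
  have hmem : ∀ t ∈ Icc (0 : ℝ) 1, (t : ℂ) * z ∈ ball (0 : ℂ) 1 := fun t ht ↦
    mem_ball_zero_iff.2 (norm_mul_unitInterval_lt_one hz1 ⟨t, ht⟩)
  have hmean : f z / z = meanCLM G := by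
    have h := sub_eq_mul_integral_of_hasDerivAt (F := f) (F' := deriv f) (u := z)
      (fun t ht ↦ (hfd.differentiableAt (isOpen_ball.mem_nhds (hmem t ht))).hasDerivAt)
      ((hfd.deriv isOpen_ball).continuousOn.comp (by fun_prop) hmem)
    rw [hf0, sub_zero] at h
    rw [h, mul_div_cancel_left₀ _ hz0, meanCLM_eq_integral (φ := fun t ↦ deriv f (t * z)) hGt]
  have hcont : ContinuousOn (fun u ↦ |(hfun α u).im|) (closedBall 0 ‖z / r‖) :=
    (Complex.continuous_im.comp_continuousOn ((differentiableOn_hfun α).continuousOn.mono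
      (closedBall_subset_ball hζ))).abs
  obtain ⟨u, hu, hmax⟩ := (isCompact_closedBall (0 : ℂ) ‖z / r‖).exists_isMaxOn
    ⟨0, mem_closedBall_self (norm_nonneg _)⟩ hcont
  rw [hmean]
  exact (abs_im_meanCLM_le_of_mem_powHull hζ (fun v hv ↦ hmax hv) hG).trans_lt
    (abs_im_hfun_lt_Mconst hα0 hα1 ((mem_closedBall_zero_iff.1 hu).trans_lt hζ))

end

/-- for `1/2 ≤ α < 1` and `f ∈ K(α)`, `|Im(f(z)/z)| < M(α)` on `𝔻 \ {0}`,
and `M(α) ≤ M(1/2) = π/2`. -/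
theorem im_bound_of_convexOfOrder (α : ℝ) (hα0 : 1 / 2 ≤ α) (hα1 : α < 1)
    (f : ℂ → ℂ) (hf : IsConvexOfOrder α f) :
    (∀ z ∈ unitDisk, z ≠ 0 → |(f z / z).im| < Mconst α) ∧
    Mconst α ≤ Mconst (1 / 2) ∧ Mconst (1 / 2) = Real.pi / 2 := by
  exact ⟨fun z hz hz0 ↦ hf.abs_im_div_lt hα0 hα1 hz hz0,
    (Mconst_le hα0 hα1).trans_eq Mconst_half.symm, Mconst_half⟩
end
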